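/- arXiv:1905.11491 — 2 statements merged into one kernel-verified Lean document; each statement's English description precedes it below -/
import Mathlib

section
/- Let q > 3/2 and let 0 < κ₁ < κ₂ be real numbers. Then there exists a solution u to Δ²u + u^{−q} = 0 in ℝ³ with u > 0, such that u is not radially symmetric about any point, liminf_{|x|→∞} u(x)/|x|² = κ₁, limsup_{|x|→∞} u(x)/|x|² = κ₂, and moreover ∫_{ℝ³} u(x)^{−q} dx < +∞. -/
open MeasureTheory Filter Topology Real

/-- The Laplacian of a function on ℝ³. -/
noncomputable def laplacian (u : EuclideanSpace ℝ (Fin 3) → ℝ) (x : EuclideanSpace ℝ (Fin 3)) : ℝ :=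
  ∑ i : Fin 3, iteratedFDeriv ℝ 2 u x ![EuclideanSpace.single i 1, EuclideanSpace.single i 1]

namespace BiH

abbrev E3 := EuclideanSpace ℝ (Fin 3)

/-- symbol class -/
def Sm {F : Type} [NormedAddCommGroup F] [NormedSpace ℝ F] (k : ℕ) (m : ℝ) (g : E3 → F) : Prop :=
  ContDiff ℝ k g ∧ ∀ j ≤ k, ∃ C : ℝ, ∀ x, ‖iteratedFDeriv ℝ j g x‖ ≤ C * (1 + ‖x‖) ^ m

section
variable {F : Type} [NormedAddCommGroup F] [NormedSpace ℝ F]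
variable {G : Type} [NormedAddCommGroup G] [NormedSpace ℝ G]

lemma onep (x : E3) : 0 < 1 + ‖x‖ := by positivity

lemma Sm_zero {m : ℝ} {g : E3 → F} :
    Sm 0 m g ↔ Continuous g ∧ ∃ C : ℝ, ∀ x, ‖g x‖ ≤ C * (1 + ‖x‖) ^ m := by
  unfold Sm
  constructor
  · rintro ⟨h, h2⟩
    refine ⟨h.continuous, ?_⟩
    simpa [norm_iteratedFDeriv_zero] using h2 0 le_rfl
  · rintro ⟨h, h2⟩
    refine ⟨by exact_mod_cast (contDiff_zero (𝕜 := ℝ)).2 h, ?_⟩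
    intro j hj
    obtain rfl : j = 0 := by omega
    simpa [norm_iteratedFDeriv_zero] using h2

lemma Sm_succ {k : ℕ} {m : ℝ} {g : E3 → F} :
    Sm (k + 1) m g ↔ Sm 0 m g ∧ Differentiable ℝ g ∧ Sm k m (fderiv ℝ g) := by
  constructor
  · rintro ⟨h, h2⟩
    have h' : ContDiff ℝ ((k : WithTop ℕ∞) + 1) g := by exact_mod_cast h
    rw [contDiff_succ_iff_fderiv] at h'
    refine ⟨Sm_zero.2 ⟨h.continuous, by simpa [norm_iteratedFDeriv_zero] using h2 0 (by omega)⟩,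
      h'.1, h'.2.2, ?_⟩
    intro j hj
    simpa [norm_iteratedFDeriv_fderiv] using h2 (j + 1) (by omega)
  · rintro ⟨h0, h1, h2, h3⟩
    refine ⟨?_, ?_⟩
    · have : ContDiff ℝ ((k : WithTop ℕ∞) + 1) g := by
        rw [contDiff_succ_iff_fderiv]
        refine ⟨h1, by simp, h2⟩
      exact_mod_cast this
    · intro j hj
      rcases j with _ | j
      · exact h0.2 0 le_rfl
      · simpa [norm_iteratedFDeriv_fderiv] using h3 j (by omega)

lemma Sm.mono {k l : ℕ} {m m' : ℝ} {g : E3 → F} (h : Sm k m g) (hl : l ≤ k) (hm : m ≤ m') :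
    Sm l m' g := by
  refine ⟨h.1.of_le (by exact_mod_cast hl), fun j hj => ?_⟩
  obtain ⟨C, hC⟩ := h.2 j (hj.trans hl)
  refine ⟨|C|, fun x => (hC x).trans ?_⟩
  have h1 : (1 + ‖x‖) ^ m ≤ (1 + ‖x‖) ^ m' :=
    Real.rpow_le_rpow_of_exponent_le (by simp) hm
  have h2 : 0 ≤ (1 + ‖x‖) ^ m := by positivity
  calc C * (1 + ‖x‖) ^ m ≤ |C| * (1 + ‖x‖) ^ m := by gcongr; exact le_abs_self C
    _ ≤ _ := by gcongr

lemma Sm.add {k : ℕ} {m : ℝ} {g h : E3 → F} (hg : Sm k m g) (hh : Sm k m h) :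
    Sm k m (fun x => g x + h x) := by
  refine ⟨hg.1.add hh.1, fun j hj => ?_⟩
  obtain ⟨C, hC⟩ := hg.2 j hj
  obtain ⟨D, hD⟩ := hh.2 j hj
  refine ⟨C + D, fun x => ?_⟩
  have := iteratedFDeriv_add_apply (𝕜 := ℝ) (i := j) (f := g) (g := h) (x := x)
    (hg.1.contDiffAt.of_le (by exact_mod_cast hj)) (hh.1.contDiffAt.of_le (by exact_mod_cast hj))
  have e : (fun x => g x + h x) = g + h := rfl
  rw [e, this, add_mul]
  exact (norm_add_le _ _).trans (add_le_add (hC x) (hD x))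

lemma Sm.clm {k : ℕ} {m : ℝ} {g : E3 → F} (hg : Sm k m g) (L : F →L[ℝ] G) :
    Sm k m (fun x => L (g x)) := by
  refine ⟨L.contDiff.comp hg.1, fun j hj => ?_⟩
  obtain ⟨C, hC⟩ := hg.2 j hj
  refine ⟨‖L‖ * C, fun x => ?_⟩
  have := L.norm_iteratedFDeriv_comp_left (n := j) (f := g) (x := x) hg.1.contDiffAt
    (by exact_mod_cast hj)
  refine this.trans ?_
  rw [mul_assoc]
  gcongr
  exact hC x

lemma Sm.smul {k : ℕ} {m m' : ℝ} {g : E3 → ℝ} {h : E3 → F} (hg : Sm k m g) (hh : Sm k m' h) :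
    Sm k (m + m') (fun x => g x • h x) := by
  refine ⟨hg.1.smul hh.1, fun j hj => ?_⟩
  choose! C hC using hg.2
  choose! D hD using hh.2
  refine ⟨∑ i ∈ Finset.range (j + 1), (j.choose i : ℝ) * C i * D (j - i), fun x => ?_⟩
  refine (norm_iteratedFDeriv_smul_le hg.1 hh.1 x (n := j) (by exact_mod_cast hj)).trans ?_
  rw [Finset.sum_mul]
  refine Finset.sum_le_sum fun i hi => ?_
  have hi' : i ≤ j := by simpa [Nat.lt_succ_iff] using hi
  have h1 := hC i (hi'.trans hj) x
  have h2 := hD (j - i) (by omega) x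
  rw [Real.rpow_add (onep x)]
  calc (j.choose i : ℝ) * ‖iteratedFDeriv ℝ i g x‖ * ‖iteratedFDeriv ℝ (j - i) h x‖
      ≤ (j.choose i : ℝ) * (C i * (1 + ‖x‖) ^ m) * (D (j - i) * (1 + ‖x‖) ^ m') := by
        gcongr
        exact mul_nonneg (by positivity) ((norm_nonneg _).trans h1)
    _ = _ := by ring

lemma Sm.integrable {m : ℝ} {g : E3 → F} {k : ℕ} (hg : Sm k m g) (hm : m < -3) : Integrable g := by
  have h0 := Sm_zero.1 (hg.mono (Nat.zero_le k) le_rfl)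
  obtain ⟨hc, C, hC⟩ := h0
  have hI : Integrable (fun x : E3 => C * (1 + ‖x‖) ^ (-(-m))) :=
    (integrable_one_add_norm (by simp; linarith)).const_mul C
  refine hI.mono' hc.aestronglyMeasurable (ae_of_all _ fun x => ?_)
  simpa using hC x

lemma Sm.pd {k : ℕ} {m : ℝ} {g : E3 → ℝ} (hg : Sm (k + 1) m g) (v : E3) :
    Sm k m (fun x => fderiv ℝ g x v) :=
  (Sm_succ.1 hg).2.2.clm (ContinuousLinearMap.apply ℝ ℝ v)

/-- convolution with a bounded kernel -/
noncomputable def cv (κ : E3 → ℝ) (g : E3 → F) (x : E3) : F := ∫ z, κ z • g (x - z)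

lemma shift_bound {m : ℝ} (hm : m ≤ 0) {x x0 z : E3} (h : x ∈ Metric.ball x0 1) :
    (1 + ‖x - z‖) ^ m ≤ 2 ^ (-m) * (1 + ‖x0 - z‖) ^ m := by
  have h1 : ‖x0 - z‖ ≤ 1 + ‖x - z‖ := by
    have : ‖x0 - z‖ ≤ ‖x0 - x‖ + ‖x - z‖ := norm_sub_le_norm_sub_add_norm_sub _ _ _
    have h2 : ‖x0 - x‖ < 1 := by rw [norm_sub_rev]; simpa [dist_eq_norm] using h
    linarith
  have h2 : (1 + ‖x0 - z‖) / 2 ≤ 1 + ‖x - z‖ := by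
    have := norm_nonneg (x - z); linarith
  have h3 := Real.rpow_le_rpow_of_nonpos (by positivity) h2 hm
  refine h3.trans (le_of_eq ?_)
  rw [Real.div_rpow (by positivity) (by norm_num), Real.rpow_neg (by norm_num)]
  field_simp

lemma int_shift {m : ℝ} (hm : m < -3) (C : ℝ) (x0 : E3) :
    Integrable (fun z : E3 => C * (2 ^ (-m) * (1 + ‖x0 - z‖) ^ m)) := by
  have : Integrable (fun x : E3 => (1 + ‖x‖) ^ (-(-m))) :=
    integrable_one_add_norm (by simp; linarith)
  simp only [neg_neg] at this
  exact ((this.comp_sub_left x0).const_mul _).const_mul _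

variable {κ : E3 → ℝ}

lemma cv_Sm_zero (hκ : Measurable κ) (hκ1 : ∀ z, |κ z| ≤ 1) {m : ℝ} (hm : m < -3) {g : E3 → F}
    (hg : Sm 0 m g) : Sm 0 0 (cv κ g) := by
  obtain ⟨hc, C, hC⟩ := Sm_zero.1 hg
  have hmeas : ∀ x, AEStronglyMeasurable (fun z => κ z • g (x - z)) := fun x =>
    hκ.aestronglyMeasurable.smul (hc.comp (by fun_prop)).aestronglyMeasurable
  have hC0 : 0 ≤ C := by
    have := (norm_nonneg _).trans (hC 0)
    simpa using this
  have hb : ∀ x z, ‖κ z • g (x - z)‖ ≤ ‖g (x - z)‖ := fun x z => by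
    rw [norm_smul]
    exact mul_le_of_le_one_left (norm_nonneg _) (hκ1 z)
  refine Sm_zero.2 ⟨?_, ∫ z, ‖g z‖, fun x => ?_⟩
  · rw [continuous_iff_continuousAt]
    intro x0
    refine continuousAt_of_dominated (bound := fun z => C * (2 ^ (-m) * (1 + ‖x0 - z‖) ^ m))
      (Eventually.of_forall hmeas) ?_ (int_shift hm C x0) ?_
    · filter_upwards [Metric.ball_mem_nhds x0 one_pos] with x hx
      refine ae_of_all _ fun z => (hb x z).trans ((hC _).trans ?_)
      gcongr
      exact shift_bound (by linarith) hx
    · refine ae_of_all _ fun z => ?_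
      have : Continuous (fun x => κ z • g (x - z)) := by fun_prop
      exact this.continuousAt
  · simp only [Real.rpow_zero, mul_one]
    have hI := (hg.integrable hm).norm
    calc ‖cv κ g x‖ ≤ ∫ z, ‖g (x - z)‖ :=
          norm_integral_le_of_norm_le (hI.comp_sub_left x) (ae_of_all _ (hb x))
      _ = _ := integral_sub_left_eq_self (fun z => ‖g z‖) volume x

lemma cv_hasFDerivAt (hκ : Measurable κ) (hκ1 : ∀ z, |κ z| ≤ 1) {m : ℝ} (hm : m < -3) {g : E3 → F}
    (hg : Sm 1 m g) (x0 : E3) : HasFDerivAt (cv κ g) (cv κ (fderiv ℝ g) x0) x0 := by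
  obtain ⟨h0, hd, h1⟩ := Sm_succ.1 hg
  obtain ⟨hc, -⟩ := Sm_zero.1 h0
  obtain ⟨hc', C, hC⟩ := Sm_zero.1 h1
  have hC0 : 0 ≤ C := by
    have := (norm_nonneg _).trans (hC 0)
    simpa using this
  have hmeas : ∀ x, AEStronglyMeasurable (fun z => κ z • g (x - z)) := fun x =>
    hκ.aestronglyMeasurable.smul (hc.comp (by fun_prop)).aestronglyMeasurable
  unfold cv
  refine hasFDerivAt_integral_of_dominated_of_fderiv_le
    (bound := fun z => C * (2 ^ (-m) * (1 + ‖x0 - z‖) ^ m)) (s := Metric.ball x0 1)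
    (F' := fun x z => κ z • fderiv ℝ g (x - z))
    (Metric.ball_mem_nhds x0 one_pos) (Eventually.of_forall hmeas) ?_ ?_ ?_ (int_shift hm C x0) ?_
  · refine ((hg.integrable hm).norm.comp_sub_left x0).mono' (hmeas x0) (ae_of_all _ fun z => ?_)
    rw [norm_smul]
    exact mul_le_of_le_one_left (norm_nonneg _) (hκ1 z)
  · exact hκ.aestronglyMeasurable.smul (hc'.comp (by fun_prop)).aestronglyMeasurable
  · refine ae_of_all _ fun z x hx => ?_
    rw [norm_smul]
    refine (mul_le_of_le_one_left (norm_nonneg _) (hκ1 z)).trans ((hC _).trans ?_)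
    gcongr
    exact shift_bound (by linarith) hx
  · refine ae_of_all _ fun z x hx => ?_
    have := (hasFDerivAt_comp_sub (f := g) (f' := fderiv ℝ g (x - z)) z (x := x)).2
      (hd (x - z)).hasFDerivAt
    exact this.const_smul (κ z)

end

lemma cv_Sm {κ : E3 → ℝ} (hκ : Measurable κ) (hκ1 : ∀ z, |κ z| ≤ 1) {m : ℝ} (hm : m < -3) (k : ℕ) :
    ∀ {F : Type} [NormedAddCommGroup F] [NormedSpace ℝ F] {g : E3 → F},
    Sm k m g → Sm k 0 (cv κ g) := by
  induction k with
  | zero => intro F _ _ g hg; exact cv_Sm_zero hκ hκ1 hm hg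
  | succ k ih =>
    intro F _ _ g hg
    have hd := fun x => cv_hasFDerivAt hκ hκ1 hm (hg.mono (by omega : 1 ≤ k + 1) le_rfl) x
    refine Sm_succ.2 ⟨cv_Sm_zero hκ hκ1 hm (Sm_succ.1 hg).1, fun x => (hd x).differentiableAt, ?_⟩
    have : fderiv ℝ (cv κ g) = cv κ (fderiv ℝ g) := funext fun x => (hd x).fderiv
    rw [this]
    exact ih (Sm_succ.1 hg).2.2

/-- partial derivative -/
noncomputable def pd (i : Fin 3) (g : E3 → ℝ) : E3 → ℝ :=
  fun x => fderiv ℝ g x (EuclideanSpace.single i 1)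

lemma Sm.pd' {k : ℕ} {m : ℝ} {g : E3 → ℝ} (hg : Sm (k + 1) m g) (i : Fin 3) :
    Sm k m (BiH.pd i g) := hg.pd _

lemma cv_pd {κ : E3 → ℝ} (hκ : Measurable κ) (hκ1 : ∀ z, |κ z| ≤ 1) {m : ℝ} (hm : m < -3)
    {g : E3 → ℝ} (hg : Sm 1 m g) (i : Fin 3) : pd i (cv κ g) = cv κ (pd i g) := by
  funext x
  unfold pd
  rw [(cv_hasFDerivAt hκ hκ1 hm hg x).fderiv]
  unfold cv
  have hint : Integrable (fun z => κ z • fderiv ℝ g (x - z)) := by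
    have h1 := (Sm_succ.1 hg).2.2
    refine ((h1.integrable hm).norm.comp_sub_left x).mono'
      (hκ.aestronglyMeasurable.smul
        ((Sm_zero.1 h1).1.comp (by fun_prop)).aestronglyMeasurable) (ae_of_all _ fun z => ?_)
    rw [norm_smul]
    exact mul_le_of_le_one_left (norm_nonneg _) (hκ1 z)
  rw [ContinuousLinearMap.integral_apply hint]
  rfl

/-- Powers -/
lemma Sm_rpow {u : E3 → ℝ} {b : ℝ} (hb : 0 < b) (hub : ∀ x, b * (1 + ‖x‖) ^ (2:ℝ) ≤ u x)
    (huc : Continuous u) (k : ℕ) :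
    (k ≠ 0 → Differentiable ℝ u ∧ Sm (k - 1) 1 (fderiv ℝ u)) →
    ∀ q : ℝ, 0 < q → Sm k (-2 * q) (fun x => u x ^ (-q)) := by
  have hpos : ∀ x, 0 < u x := fun x => lt_of_lt_of_le (by positivity) (hub x)
  have h0 : ∀ q : ℝ, 0 < q → Sm 0 (-2 * q) (fun x => u x ^ (-q)) := by
    intro q hq
    refine Sm_zero.2 ⟨huc.rpow_const fun x => Or.inl (hpos x).ne', b ^ (-q), fun x => ?_⟩
    rw [Real.norm_of_nonneg (Real.rpow_nonneg (hpos x).le _)]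
    have := Real.rpow_le_rpow_of_nonpos (by positivity) (hub x) (by linarith : -q ≤ 0)
    refine this.trans (le_of_eq ?_)
    rw [Real.mul_rpow hb.le (by positivity), ← Real.rpow_mul (by positivity)]
    ring_nf
  induction k with
  | zero => intro _ q hq; exact h0 q hq
  | succ k ih =>
    intro h q hq
    obtain ⟨hd, hS⟩ := h (by omega)
    simp only [Nat.add_sub_cancel] at hS
    have hder : ∀ x, HasFDerivAt (fun x => u x ^ (-q))
        ((-q * u x ^ (-q - 1)) • fderiv ℝ u x) x := fun x =>
      (hd x).hasFDerivAt.rpow_const (Or.inl (hpos x).ne')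
    refine Sm_succ.2 ⟨h0 q hq, fun x => (hder x).differentiableAt, ?_⟩
    have e : fderiv ℝ (fun x => u x ^ (-q)) =
        fun x => (-q • ContinuousLinearMap.id ℝ (E3 →L[ℝ] ℝ)) (u x ^ (-(q+1)) • fderiv ℝ u x) := by
      funext x
      rw [(hder x).fderiv]
      have e2 : -(q + 1) = -q - 1 := by ring
      ext v
      simp [e2]
      ring
    rw [e]
    have ih' := ih (fun hk => ⟨hd, hS.mono (by omega) le_rfl⟩) (q + 1) (by linarith)
    exact ((ih'.smul hS).mono le_rfl (by linarith)).clm _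

end BiH

open MeasureTheory Filter Topology Real
namespace BiH

lemma laplacian_eq {g : E3 → ℝ} (hg : ContDiff ℝ 2 g) (x : E3) :
    laplacian g x = ∑ i, pd i (pd i g) x := by
  unfold laplacian pd
  refine Finset.sum_congr rfl fun i _ => ?_
  rw [iteratedFDeriv_two_apply]
  have hd : DifferentiableAt ℝ (fderiv ℝ g) x :=
    ((hg.fderiv_right (m := 1) (by norm_num)).differentiable (by norm_num)) x
  rw [fderiv_clm_apply hd (differentiableAt_const _)]
  simp

lemma pd_comm {g : E3 → ℝ} (hg : ContDiff ℝ 2 g) (i j : Fin 3) :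
    pd i (pd j g) = pd j (pd i g) := by
  funext x
  unfold pd
  have hd : DifferentiableAt ℝ (fderiv ℝ g) x :=
    ((hg.fderiv_right (m := 1) (by norm_num)).differentiable (by norm_num)) x
  rw [fderiv_clm_apply hd (differentiableAt_const _), fderiv_clm_apply hd (differentiableAt_const _)]
  have := hg.contDiffAt.isSymmSndFDerivAt (x := x) (by simp)
  simpa using this _ _

lemma pd_add {g h : E3 → ℝ} (hg : Differentiable ℝ g) (hh : Differentiable ℝ h) (i : Fin 3) :
    pd i (fun x => g x + h x) = fun x => pd i g x + pd i h x := by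
  funext x
  unfold pd
  rw [fderiv_fun_add (hg x) (hh x)]
  simp

lemma pd_const_mul {g : E3 → ℝ} (hg : Differentiable ℝ g) (c : ℝ) (i : Fin 3) :
    pd i (fun x => c * g x) = fun x => c * pd i g x := by
  funext x
  unfold pd
  rw [fderiv_const_mul (hg x)]
  simp

lemma pd_sum {g : Fin 3 → E3 → ℝ} (hg : ∀ j, Differentiable ℝ (g j)) (i : Fin 3) :
    pd i (fun x => ∑ j, g j x) = fun x => ∑ j, pd i (g j) x := by
  funext x
  unfold pd
  rw [fderiv_fun_sum (fun j _ => hg j x)]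
  simp

/-- bounded continuous -/
def Bd (a : E3 → ℝ) : Prop := Continuous a ∧ ∃ C, ∀ z, |a z| ≤ C

lemma Bd.add {a b : E3 → ℝ} (ha : Bd a) (hb : Bd b) : Bd (fun z => a z + b z) := by
  obtain ⟨h1, C, hC⟩ := ha
  obtain ⟨h2, D, hD⟩ := hb
  exact ⟨h1.add h2, C + D, fun z => (abs_add_le _ _).trans (add_le_add (hC z) (hD z))⟩

lemma Bd.const_mul {a : E3 → ℝ} (ha : Bd a) (c : ℝ) : Bd (fun z => c * a z) := by
  obtain ⟨h1, C, hC⟩ := ha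
  exact ⟨continuous_const.mul h1, |c| * C, fun z => by rw [abs_mul]; gcongr; exact hC z⟩

lemma Bd.int {a : E3 → ℝ} (ha : Bd a) {g : E3 → ℝ} (hg : Integrable g) (x : E3) :
    Integrable (fun z => a z * g (x - z)) := by
  obtain ⟨h1, C, hC⟩ := ha
  exact (hg.comp_sub_left x).bdd_mul h1.aestronglyMeasurable (ae_of_all _ hC)

lemma ips {a : E3 → ℝ} (ha : Bd a) (i : Fin 3) (had : Differentiable ℝ a) (hda : Bd (pd i a))
    {m : ℝ} (hm : m < -3) {g : E3 → ℝ} (hg : Sm 1 m g) (x : E3) :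
    cv a (pd i g) x = cv (pd i a) g x := by
  have hd := (Sm_succ.1 hg).2.1
  have hder : ∀ z, HasFDerivAt (fun z => g (x - z)) (-(fderiv ℝ g (x - z))) z := by
    intro z
    have h1 : HasFDerivAt (fun z : E3 => x - z) (-(ContinuousLinearMap.id ℝ E3)) z := by
      simpa using (hasFDerivAt_id (𝕜 := ℝ) z).const_sub x
    have := (hd (x - z)).hasFDerivAt.comp z h1
    have e : -(fderiv ℝ g (x - z)) = (fderiv ℝ g (x - z)).comp (-(ContinuousLinearMap.id ℝ E3)) := by
      ext v; simp
    rw [e]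
    exact this
  have I1 : Integrable (fun z => a z * pd i g (x - z)) := ha.int ((hg.pd' i).integrable hm) x
  have I2 : Integrable (fun z => pd i a z * g (x - z)) := hda.int (hg.integrable hm) x
  have I3 : Integrable (fun z => a z * g (x - z)) := ha.int (hg.integrable hm) x
  have key := integral_mul_fderiv_eq_neg_fderiv_mul_of_integrable (μ := volume) (f := a)
    (g := fun z => g (x - z)) (v := EuclideanSpace.single i 1) I2
    (by
      refine I1.neg.congr (ae_of_all _ fun z => ?_)
      simp [(hder z).fderiv, pd]) I3 (fun z _ => had z) (fun z _ => (hder z).differentiableAt)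
  have e : (fun z => a z * (fderiv ℝ (fun z => g (x - z)) z) (EuclideanSpace.single i 1)) =
      fun z => -(a z * pd i g (x - z)) := by
    funext z
    simp [(hder z).fderiv, pd]
  rw [e, integral_neg, neg_inj] at key
  exact key

lemma cv_sum_left {a : Fin 3 → E3 → ℝ} (ha : ∀ j, Bd (a j)) {g : E3 → ℝ} (hg : Integrable g)
    (x : E3) : ∑ j, cv (a j) g x = cv (fun z => ∑ j, a j z) g x := by
  unfold cv
  simp only [smul_eq_mul]
  rw [← integral_finsetSum _ (fun j _ => (ha j).int hg x)]
  refine integral_congr_ae (ae_of_all _ fun z => ?_)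
  simp [Finset.sum_mul]

/-! ### the regularized kernel -/

/-- `|z|² + ε²` -/
noncomputable def rr (ε : ℝ) (z : E3) : ℝ := ‖z‖ ^ 2 + ε ^ 2

section
variable {ε : ℝ}

lemma rr_ge (z : E3) : ε ^ 2 ≤ rr ε z := by unfold rr; nlinarith [sq_nonneg ‖z‖]
lemma rr_pos (hε : 0 < ε) (z : E3) : 0 < rr ε z := by unfold rr; positivity

lemma coord_le (z : E3) (i : Fin 3) : |z i| ≤ ‖z‖ := by
  simpa using PiLp.norm_apply_le z i

lemma coord_sq_le (z : E3) (i : Fin 3) : (z i) ^ 2 ≤ rr ε z := by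
  have := coord_le z i
  have h2 : (z i)^2 ≤ ‖z‖^2 := by rw [← sq_abs]; gcongr
  unfold rr; nlinarith [sq_nonneg ε]

lemma rr_hasFDerivAt (hε : 0 < ε) (s : ℝ) (z : E3) :
    HasFDerivAt (fun z => rr ε z ^ s) ((s * rr ε z ^ (s - 1)) • (2 • innerSL ℝ z)) z := by
  have h1 : HasFDerivAt (fun z => rr ε z) (2 • innerSL ℝ z) z := by
    unfold rr
    exact (hasStrictFDerivAt_norm_sq z).hasFDerivAt.add_const _
  exact h1.rpow_const (Or.inl (rr_pos hε z).ne')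

lemma rr_diff (hε : 0 < ε) (s : ℝ) : Differentiable ℝ (fun z => rr ε z ^ s) :=
  fun z => (rr_hasFDerivAt hε s z).differentiableAt

lemma pd_rr (hε : 0 < ε) (s : ℝ) (i : Fin 3) :
    pd i (fun z => rr ε z ^ s) = fun z => 2 * s * (z i * rr ε z ^ (s - 1)) := by
  funext z
  unfold pd
  rw [(rr_hasFDerivAt hε s z).fderiv]
  simp [EuclideanSpace.inner_single_right]
  ring

lemma coord_diff (i : Fin 3) : Differentiable ℝ (fun z : E3 => z i) := by
  fun_prop

lemma zrr_diff (hε : 0 < ε) (s : ℝ) (i : Fin 3) : Differentiable ℝ (fun z => z i * rr ε z ^ s) :=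
  (coord_diff i).mul (rr_diff hε s)

lemma pd_zrr (hε : 0 < ε) (s : ℝ) (i : Fin 3) :
    pd i (fun z => z i * rr ε z ^ s) =
      fun z => rr ε z ^ s + 2 * s * ((z i) ^ 2 * rr ε z ^ (s - 1)) := by
  funext z
  have h := congrFun (pd_rr hε s i) z
  unfold pd at h ⊢
  rw [fderiv_fun_mul (coord_diff i z) (rr_diff hε s z)]
  have h2 : HasFDerivAt (fun z : E3 => z i) (EuclideanSpace.proj (𝕜 := ℝ) i) z :=
    (EuclideanSpace.proj (𝕜 := ℝ) i : E3 →L[ℝ] ℝ).hasFDerivAt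
  simp only [add_apply, smul_apply, h, h2.fderiv]
  simp
  ring

lemma Bd_rr (hε : 0 < ε) {s : ℝ} (hs : s ≤ 0) : Bd (fun z => rr ε z ^ s) := by
  refine ⟨(rr_diff hε s).continuous, (ε ^ 2) ^ s, fun z => ?_⟩
  rw [abs_of_nonneg (Real.rpow_nonneg (rr_pos hε z).le _)]
  exact Real.rpow_le_rpow_of_nonpos (by positivity) (rr_ge z) hs

lemma Bd_zzrr (hε : 0 < ε) {s : ℝ} (hs : s ≤ -1) (i : Fin 3) :
    Bd (fun z => (z i) ^ 2 * rr ε z ^ s) := by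
  obtain ⟨hc, C, hC⟩ := Bd_rr hε (s := s + 1) (by linarith)
  refine ⟨((coord_diff i).continuous.pow 2).mul (rr_diff hε s).continuous, C, fun z => ?_⟩
  refine le_trans ?_ (hC z)
  show |(z i) ^ 2 * rr ε z ^ s| ≤ |rr ε z ^ (s + 1)|
  have h0 := Real.rpow_nonneg (rr_pos hε z).le s
  rw [Real.rpow_add (rr_pos hε z), Real.rpow_one, abs_mul, abs_mul, mul_comm]
  gcongr
  exact coord_sq_le z i

lemma zrr_le (hε : 0 < ε) (s : ℝ) (i : Fin 3) (z : E3) :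
    |z i * rr ε z ^ s| ≤ rr ε z ^ (s + 1/2) := by
  have h0 := Real.rpow_nonneg (rr_pos hε z).le s
  rw [Real.rpow_add (rr_pos hε z), abs_mul, abs_of_nonneg h0, mul_comm]
  gcongr
  rw [← Real.sqrt_eq_rpow]
  exact Real.abs_le_sqrt (coord_sq_le z i)

lemma Bd_zrr (hε : 0 < ε) {s : ℝ} (hs : s ≤ -1/2) (i : Fin 3) :
    Bd (fun z => z i * rr ε z ^ s) := by
  obtain ⟨hc, C, hC⟩ := Bd_rr hε (s := s + 1/2) (by linarith)
  refine ⟨(coord_diff i).continuous.mul (rr_diff hε s).continuous, C, fun z => ?_⟩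
  exact (zrr_le hε s i z).trans ((le_abs_self _).trans (hC z))

lemma sum_sq (z : E3) : ∑ i, (z i) ^ 2 = ‖z‖ ^ 2 := by
  rw [EuclideanSpace.norm_eq, Real.sq_sqrt (by positivity)]; simp

lemma rr_pows (hε : 0 < ε) (z : E3) :
    rr ε z ^ (-5/2:ℝ) = rr ε z ^ (-7/2:ℝ) * rr ε z ∧
    rr ε z ^ (-3/2:ℝ) = rr ε z ^ (-7/2:ℝ) * rr ε z ^ 2 ∧
    rr ε z ^ (-1/2:ℝ) = rr ε z ^ (-7/2:ℝ) * rr ε z ^ 3 := by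
  have h := rr_pos hε z
  refine ⟨?_, ?_, ?_⟩
  · rw [← Real.rpow_add_one h.ne']; norm_num
  · rw [← Real.rpow_natCast, ← Real.rpow_add h]; norm_num
  · rw [← Real.rpow_natCast, ← Real.rpow_add h]; norm_num

lemma bilap_eps (hε : 0 < ε) {m : ℝ} (hm : m < -3) {f : E3 → ℝ} (hf : Sm 3 m f) (x : E3) :
    ∑ i, ∑ j, cv (fun z => z j * rr ε z ^ (-1/2:ℝ)) (pd j (pd i (pd i f))) x =
      cv (fun z => -15 * ε ^ 4 * rr ε z ^ (-7/2:ℝ)) f x := by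
  have hf1 : ∀ i, Sm 2 m (pd i f) := fun i => hf.pd' i
  have hf2 : ∀ i, Sm 1 m (pd i (pd i f)) := fun i => (hf1 i).pd' i
  -- first step
  have s1 : ∀ i, ∑ j, cv (fun z => z j * rr ε z ^ (-1/2:ℝ)) (pd j (pd i (pd i f))) x =
      cv (fun z => 2 * rr ε z ^ (-1/2:ℝ) + ε ^ 2 * rr ε z ^ (-3/2:ℝ)) (pd i (pd i f)) x := by
    intro i
    have hB : ∀ j, Bd (pd j (fun z => z j * rr ε z ^ (-1/2:ℝ))) := by
      intro j
      rw [pd_zrr hε]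
      exact (Bd_rr hε (by norm_num)).add ((Bd_zzrr hε (by norm_num) j).const_mul _)
    rw [Finset.sum_congr rfl fun j _ => ips (Bd_zrr hε (s := -1/2) (by norm_num) j) j
      (zrr_diff hε _ j) (hB j) hm (hf2 i) x, cv_sum_left hB ((hf2 i).integrable hm)]
    congr 1
    funext z
    have e : ∀ j, pd j (fun z => z j * rr ε z ^ (-1/2:ℝ)) z =
      rr ε z ^ (-1/2:ℝ) - (z j) ^ 2 * rr ε z ^ (-3/2:ℝ) := by
      intro j
      rw [pd_zrr hε]
      norm_num
      ring
    simp only [e]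
    rw [Finset.sum_sub_distrib, ← Finset.sum_mul, sum_sq]
    have h3 : ‖z‖ ^ 2 = rr ε z - ε ^ 2 := by unfold rr; ring
    obtain ⟨-, h1, h2⟩ := rr_pows hε z
    rw [h3, h1, h2]
    simp
    ring
  have hφd : Differentiable ℝ
      (fun z => 2 * rr ε z ^ (-1/2:ℝ) + ε ^ 2 * rr ε z ^ (-3/2:ℝ)) :=
    ((rr_diff hε _).const_mul _).add ((rr_diff hε _).const_mul _)
  have hφ : ∀ i, pd i (fun z => 2 * rr ε z ^ (-1/2:ℝ) + ε ^ 2 * rr ε z ^ (-3/2:ℝ)) =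
      fun z => -2 * (z i * rr ε z ^ (-3/2:ℝ)) + (-3 * ε ^ 2) * (z i * rr ε z ^ (-5/2:ℝ)) := by
    intro i
    rw [pd_add ((rr_diff hε _).const_mul _) ((rr_diff hε _).const_mul _),
      pd_const_mul (rr_diff hε _), pd_const_mul (rr_diff hε _), pd_rr hε, pd_rr hε]
    funext z
    norm_num
    ring
  have hBd : ∀ i, Differentiable ℝ (fun z : E3 => -2 * (z i * rr ε z ^ (-3/2:ℝ)) +
      (-3 * ε ^ 2) * (z i * rr ε z ^ (-5/2:ℝ))) := fun i =>
    ((zrr_diff hε _ i).const_mul _).add ((zrr_diff hε _ i).const_mul _)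
  have hB : ∀ i, pd i (fun z => -2 * (z i * rr ε z ^ (-3/2:ℝ)) +
      (-3 * ε ^ 2) * (z i * rr ε z ^ (-5/2:ℝ))) =
      fun z => (-2 * rr ε z ^ (-3/2:ℝ) + (-3 * ε ^ 2) * rr ε z ^ (-5/2:ℝ)) +
        (6 * ((z i) ^ 2 * rr ε z ^ (-5/2:ℝ)) + 15 * ε ^ 2 * ((z i) ^ 2 * rr ε z ^ (-7/2:ℝ))) := by
    intro i
    rw [pd_add ((zrr_diff hε _ i).const_mul _) ((zrr_diff hε _ i).const_mul _),
      pd_const_mul (zrr_diff hε _ i), pd_const_mul (zrr_diff hε _ i), pd_zrr hε, pd_zrr hε]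
    funext z
    norm_num
    ring
  have bφ : Bd (fun z => 2 * rr ε z ^ (-1/2:ℝ) + ε ^ 2 * rr ε z ^ (-3/2:ℝ)) :=
    ((Bd_rr hε (by norm_num)).const_mul _).add ((Bd_rr hε (by norm_num)).const_mul _)
  have bB : ∀ i, Bd (fun z => -2 * (z i * rr ε z ^ (-3/2:ℝ)) +
      (-3 * ε ^ 2) * (z i * rr ε z ^ (-5/2:ℝ))) := fun i =>
    ((Bd_zrr hε (by norm_num) i).const_mul _).add ((Bd_zrr hε (by norm_num) i).const_mul _)
  have bC : ∀ i : Fin 3, Bd (fun z => (-2 * rr ε z ^ (-3/2:ℝ) + (-3 * ε ^ 2) * rr ε z ^ (-5/2:ℝ)) +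
        (6 * ((z i) ^ 2 * rr ε z ^ (-5/2:ℝ)) + 15 * ε ^ 2 * ((z i) ^ 2 * rr ε z ^ (-7/2:ℝ)))) :=
    fun i => (((Bd_rr hε (by norm_num)).const_mul _).add ((Bd_rr hε (by norm_num)).const_mul _)).add
      (((Bd_zzrr hε (by norm_num) i).const_mul _).add ((Bd_zzrr hε (by norm_num) i).const_mul _))
  have s2 : ∀ i, cv (fun z => 2 * rr ε z ^ (-1/2:ℝ) + ε ^ 2 * rr ε z ^ (-3/2:ℝ))
      (pd i (pd i f)) x = cv (fun z => (-2 * rr ε z ^ (-3/2:ℝ) + (-3 * ε ^ 2) * rr ε z ^ (-5/2:ℝ)) +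
        (6 * ((z i) ^ 2 * rr ε z ^ (-5/2:ℝ)) + 15 * ε ^ 2 * ((z i) ^ 2 * rr ε z ^ (-7/2:ℝ)))) f x := by
    intro i
    rw [ips bφ i hφd (by rw [hφ]; exact bB i) hm ((hf1 i).mono (by norm_num) le_rfl), hφ,
      ips (bB i) i (hBd i) (by rw [hB]; exact bC i) hm (hf.mono (by norm_num) le_rfl), hB]
  rw [Finset.sum_congr rfl fun i _ => (s1 i).trans (s2 i), cv_sum_left bC (hf.integrable hm)]
  congr 1
  funext z
  have h3 : ∑ i, (z i) ^ 2 = rr ε z - ε ^ 2 := by rw [sum_sq]; unfold rr; ring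
  obtain ⟨h0, h1, h2⟩ := rr_pows hε z
  rw [Fin.sum_univ_three] at h3 ⊢
  rw [h0, h1]
  linear_combination (6 * rr ε z + 15 * ε ^ 2) * rr ε z ^ (-7/2:ℝ) * h3

end

/-- the constant `8π` -/
noncomputable def c0 : ℝ := ∫ w : E3, 15 * (1 + ‖w‖ ^ 2) ^ (-7/2:ℝ)

lemma c0_int : Integrable (fun w : E3 => 15 * (1 + ‖w‖ ^ 2) ^ (-7/2:ℝ)) := by
  have : Integrable (fun w : E3 => (1 + ‖w‖ ^ 2) ^ (-7/2:ℝ)) :=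
    integrable_rpow_neg_one_add_norm_sq (by simp; norm_num)
  exact this.const_mul _

lemma c0_pos : 0 < c0 := by
  unfold c0
  rw [integral_pos_iff_support_of_nonneg (fun w => by positivity) c0_int]
  have : Function.support (fun w : E3 => 15 * (1 + ‖w‖ ^ 2) ^ (-7/2:ℝ)) = Set.univ := by
    ext w
    simp only [Function.mem_support, Set.mem_univ, iff_true]
    positivity
  rw [this]
  simp

/-- the kernel `z_j/|z|` -/
noncomputable def kj (j : Fin 3) (z : E3) : ℝ := z j / ‖z‖

lemma kj_meas (j : Fin 3) : Measurable (kj j) := by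
  unfold kj
  exact (coord_diff j).continuous.measurable.div measurable_norm

lemma kj_le (j : Fin 3) (z : E3) : |kj j z| ≤ 1 := by
  unfold kj
  rw [abs_div, abs_norm]
  exact div_le_one_of_le₀ (coord_le z j) (norm_nonneg _)

noncomputable def ee (n : ℕ) : ℝ := 1 / ((n:ℝ) + 1)
lemma ee_pos (n : ℕ) : 0 < ee n := by unfold ee; positivity
lemma ee_tendsto : Tendsto ee atTop (𝓝 0) := tendsto_one_div_add_atTop_nhds_zero_nat

lemma lim_kj (j : Fin 3) {h : E3 → ℝ} (hh : Integrable h) (x : E3) :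
    Tendsto (fun n => cv (fun z => z j * rr (ee n) z ^ (-1/2:ℝ)) h x) atTop (𝓝 (cv (kj j) h x)) := by
  unfold cv
  refine tendsto_integral_of_dominated_convergence (fun z => ‖h (x - z)‖) ?_
    (hh.norm.comp_sub_left x) ?_ ?_
  · intro n
    exact ((Bd_zrr (ee_pos n) (s := -1/2) (by norm_num) j).int hh x).aestronglyMeasurable
  · intro n
    refine ae_of_all _ fun z => ?_
    rw [norm_smul]
    refine mul_le_of_le_one_left (norm_nonneg _) ?_
    have := zrr_le (ee_pos n) (-1/2) j z
    norm_num at this ⊢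
    exact this
  · refine ae_of_all _ fun z => ?_
    refine Tendsto.smul_const ?_ _
    by_cases hz : z = 0
    · subst hz; simp [kj]
    · have hp : 0 < ‖z‖ := norm_pos_iff.2 hz
      have e : kj j z = z j * (‖z‖ ^ 2 + 0 ^ 2) ^ (-1/2:ℝ) := by
        unfold kj
        rw [div_eq_mul_inv]
        congr 1
        rw [zero_pow two_ne_zero, add_zero, ← Real.rpow_neg_one, ← Real.rpow_natCast, ← Real.rpow_mul hp.le]; norm_num
      rw [e]
      refine Tendsto.const_mul _ ?_
      refine Tendsto.rpow_const ?_ (Or.inl (by positivity))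
      exact tendsto_const_nhds.add (ee_tendsto.pow 2)

lemma lim_c0 {m : ℝ} (hm : m < -3) {f : E3 → ℝ} (hf : Sm 0 m f) (x : E3) :
    Tendsto (fun n => cv (fun z => -15 * ee n ^ 4 * rr (ee n) z ^ (-7/2:ℝ)) f x) atTop
      (𝓝 (-c0 * f x)) := by
  obtain ⟨hc, C, hC⟩ := Sm_zero.1 hf
  have hC0 : 0 ≤ C := by
    have := (norm_nonneg _).trans (hC 0)
    simpa using this
  have hCb : ∀ y, ‖f y‖ ≤ C := fun y => (hC y).trans (by
    refine mul_le_of_le_one_right hC0 ?_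
    exact Real.rpow_le_one_of_one_le_of_nonpos (by simp) (by linarith))
  have e : ∀ n, cv (fun z => -15 * ee n ^ 4 * rr (ee n) z ^ (-7/2:ℝ)) f x =
      ∫ w : E3, -(15 * (1 + ‖w‖ ^ 2) ^ (-7/2:ℝ)) * f (x - ee n • w) := by
    intro n
    have hε := ee_pos n
    set ε := ee n
    have h1 := Measure.integral_comp_smul (volume : Measure E3)
      (fun z => (-15 * ε ^ 4 * rr ε z ^ (-7/2:ℝ)) • f (x - z)) ε
    have h2 : ∫ z : E3, (-15 * ε ^ 4 * rr ε z ^ (-7/2:ℝ)) • f (x - z) = ε ^ 3 * 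
       ∫ z : E3, (-15 * ε ^ 4 * rr ε (ε • z) ^ (-7/2:ℝ)) • f (x - ε • z) := by
      rw [h1, abs_of_pos (by positivity)]
      simp
      field_simp
    unfold cv
    rw [h2, ← integral_const_mul]
    refine integral_congr_ae (ae_of_all _ fun w => ?_)
    have h3 : rr ε (ε • w) = ε ^ 2 * (1 + ‖w‖ ^ 2) := by
      unfold rr
      rw [norm_smul, Real.norm_of_nonneg hε.le]; ring
    have h4 : (ε ^ 2) ^ (-7/2:ℝ) = (ε ^ 7)⁻¹ := by
      rw [← Real.rpow_natCast, ← Real.rpow_mul hε.le, ← Real.rpow_natCast, ← Real.rpow_neg hε.le]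
      norm_num
    simp only [h3, smul_eq_mul]
    rw [Real.mul_rpow (by positivity) (by positivity), h4]
    field_simp
  simp only [e]
  have hl : -c0 * f x = ∫ w : E3, -(15 * (1 + ‖w‖ ^ 2) ^ (-7/2:ℝ)) * f x := by
    rw [integral_mul_const, integral_neg]; rfl
  rw [hl]
  have hcont : Continuous (fun w : E3 => -(15 * (1 + ‖w‖ ^ 2) ^ (-7/2:ℝ))) := by
    refine (continuous_const.mul (Continuous.rpow_const (by fun_prop) fun w => Or.inl ?_)).neg
    positivity
  refine tendsto_integral_of_dominated_convergence
    (fun w : E3 => 15 * (1 + ‖w‖ ^ 2) ^ (-7/2:ℝ) * C) ?_ (c0_int.mul_const C) ?_ ?_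
  · intro n
    exact (hcont.mul (hc.comp (by fun_prop))).aestronglyMeasurable
  · intro n
    refine ae_of_all _ fun w => ?_
    rw [norm_mul, norm_neg, Real.norm_of_nonneg (by positivity : (0:ℝ) ≤ 15 * (1 + ‖w‖ ^ 2) ^ (-7/2:ℝ))]
    gcongr
    exact hCb _
  · refine ae_of_all _ fun w => ?_
    refine Tendsto.const_mul _ ?_
    have : Tendsto (fun n => x - ee n • w) atTop (𝓝 (x - (0:ℝ) • w)) :=
      tendsto_const_nhds.sub (ee_tendsto.smul_const w)
    simp only [zero_smul, sub_zero] at this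
    exact (hc.tendsto x).comp this

lemma bilap {m : ℝ} (hm : m < -3) {f : E3 → ℝ} (hf : Sm 3 m f) (x : E3) :
    ∑ i, ∑ j, cv (kj j) (pd j (pd i (pd i f))) x = -c0 * f x := by
  refine tendsto_nhds_unique (f := fun n => ∑ i, ∑ j,
    cv (fun z => z j * rr (ee n) z ^ (-1/2:ℝ)) (pd j (pd i (pd i f))) x) (l := atTop) ?_ ?_
  · refine tendsto_finsetSum _ fun i _ => tendsto_finsetSum _ fun j _ => ?_
    exact lim_kj j ((((hf.pd' i).pd' i).pd' j).integrable hm) x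
  · simp only [bilap_eps (ee_pos _) hm hf x]
    exact lim_c0 hm (hf.mono (by norm_num) le_rfl) x

end BiH

open MeasureTheory Filter Topology Real
namespace BiH

/-- The potential -/
noncomputable def VV (f : E3 → ℝ) (x : E3) : ℝ := ∫ y, (‖x - y‖ - ‖y‖) * f y

lemma ker_le (x y : E3) : |‖x - y‖ - ‖y‖| ≤ ‖x‖ := by
  have := abs_norm_sub_norm_le (x - y) (-y)
  simpa using this

lemma ker_int {f : E3 → ℝ} (hf : Integrable f) (x : E3) :
    Integrable (fun y => (‖x - y‖ - ‖y‖) * f y) :=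
  hf.bdd_mul (c := ‖x‖) (by fun_prop) (ae_of_all _ (ker_le x))

lemma VV_le {f : E3 → ℝ} (hf : Integrable f) (x : E3) : |VV f x| ≤ ‖x‖ * ∫ y, |f y| := by
  unfold VV
  rw [← integral_const_mul, ← Real.norm_eq_abs]
  refine norm_integral_le_of_norm_le (hf.abs.const_mul _) (ae_of_all _ fun y => ?_)
  rw [norm_mul]
  exact mul_le_mul_of_nonneg_right (ker_le x y) (norm_nonneg _)

lemma VV_sub {f g : E3 → ℝ} (hf : Integrable f) (hg : Integrable g) (x : E3) :
    VV f x - VV g x = VV (fun y => f y - g y) x := by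
  unfold VV
  rw [← integral_sub (ker_int hf x) (ker_int hg x)]
  refine integral_congr_ae (ae_of_all _ fun y => ?_)
  simp only
  ring

lemma norm_hasFDerivAt {w : E3} (hw : w ≠ 0) :
    HasFDerivAt (fun x : E3 => ‖x‖) (∑ j, kj j w • (EuclideanSpace.proj (𝕜 := ℝ) j : E3 →L[ℝ] ℝ)) w := by
  have h1 := (hasStrictFDerivAt_norm_sq w).hasFDerivAt
  have hp : 0 < ‖w‖ := norm_pos_iff.2 hw
  have h2 := h1.sqrt (by positivity)
  simp only [Real.sqrt_sq (norm_nonneg _)] at h2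
  refine h2.congr_fderiv ?_
  ext v
  simp [kj, PiLp.inner_apply, Fin.sum_univ_three]
  field_simp

lemma VV_hasFDerivAt {f : E3 → ℝ} (hf : Integrable f) (x : E3) :
    HasFDerivAt (VV f) (∑ j, cv (kj j) f x • (EuclideanSpace.proj (𝕜 := ℝ) j : E3 →L[ℝ] ℝ)) x := by
  have hkm : ∀ j, AEStronglyMeasurable (fun y => kj j (x - y)) (volume : Measure E3) := fun j =>
    ((kj_meas j).comp (by fun_prop : Measurable fun y => x - y)).aestronglyMeasurable
  have hki : ∀ j, Integrable (fun y => kj j (x - y) * f y) := fun j =>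
    hf.bdd_mul (c := 1) (hkm j) (ae_of_all _ fun y => kj_le j _)
  have key := hasFDerivAt_integral_of_dominated_loc_of_lip (𝕜 := ℝ) (μ := volume) (x₀ := x)
    (F := fun x y => (‖x - y‖ - ‖y‖) * f y) (bound := fun y => |f y|) (s := Set.univ)
    (F' := fun y => ∑ j, (kj j (x - y) * f y) • (EuclideanSpace.proj (𝕜 := ℝ) j : E3 →L[ℝ] ℝ))
    univ_mem (Eventually.of_forall fun x => (ker_int hf x).aestronglyMeasurable) (ker_int hf x)
    (by
      refine Finset.aestronglyMeasurable_fun_sum _ fun j _ => ?_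
      exact (hki j).aestronglyMeasurable.smul_const _)
    (by
      refine ae_of_all _ fun y => ?_
      refine (LipschitzWith.of_dist_le_mul fun a b => ?_).lipschitzOnWith
      rw [Real.dist_eq, dist_eq_norm]
      have : (‖a - y‖ - ‖y‖) * f y - (‖b - y‖ - ‖y‖) * f y = f y * (‖a - y‖ - ‖b - y‖) := by ring
      rw [this, abs_mul]
      simp only [Real.coe_nnabs, abs_abs]
      gcongr
      have := abs_norm_sub_norm_le (a - y) (b - y)
      simpa using this)
    hf.abs
    (by
      have hne : ∀ᵐ y : E3, y ≠ x := by
        simp [ae_iff]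
      filter_upwards [hne] with y hy
      have h0 := norm_hasFDerivAt (w := x - y) (sub_ne_zero.2 hy.symm)
      have h1 := (hasFDerivAt_comp_sub (f := fun x : E3 => ‖x‖) y (x := x)).2 h0
      have h2 := (h1.sub_const ‖y‖).mul_const (f y)
      refine h2.congr_fderiv ?_
      ext v
      simp [Fin.sum_univ_three]
      ring)
  refine key.2.congr_fderiv ?_
  rw [integral_finsetSum _ fun j _ => (hki j).smul_const _]
  refine Finset.sum_congr rfl fun j _ => ?_
  rw [integral_smul_const]
  congr 1
  unfold cv
  rw [← integral_sub_left_eq_self (fun z => kj j z • f (x - z)) volume x]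
  simp

lemma Sm_const (k : ℕ) : ∀ {F : Type} [NormedAddCommGroup F] [NormedSpace ℝ F] (c : F),
    Sm k 0 (fun _ : E3 => c) := by
  induction k with
  | zero => intro F _ _ c; exact Sm_zero.2 ⟨continuous_const, ‖c‖, fun x => by simp⟩
  | succ k ih =>
    intro F _ _ c
    refine Sm_succ.2 ⟨Sm_zero.2 ⟨continuous_const, ‖c‖, fun x => by simp⟩,
      differentiable_const c, ?_⟩
    have : fderiv ℝ (fun _ : E3 => c) = fun _ => 0 := by funext x; simp
    rw [this]
    exact ih 0

lemma Sm_clm (k : ℕ) {F : Type} [NormedAddCommGroup F] [NormedSpace ℝ F] (L : E3 →L[ℝ] F) :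
    Sm k 1 (fun x => L x) := by
  have h0 : Sm 0 1 (fun x => L x) := by
    refine Sm_zero.2 ⟨L.continuous, ‖L‖, fun x => ?_⟩
    rw [Real.rpow_one]
    refine (L.le_opNorm x).trans ?_
    gcongr; linarith
  rcases k with _ | k
  · exact h0
  · refine Sm_succ.2 ⟨h0, L.differentiable, ?_⟩
    have : fderiv ℝ (fun x => L x) = fun _ => L := by funext x; exact L.fderiv
    rw [this]
    exact (Sm_const k L).mono le_rfl (by norm_num)

/-- quadratic polynomial -/
noncomputable def PP (N : ℝ) (d : Fin 3 → ℝ) (x : E3) : ℝ := N + ∑ i, d i * (x i) ^ 2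

noncomputable def LL (d : Fin 3 → ℝ) : E3 →L[ℝ] (E3 →L[ℝ] ℝ) :=
  ∑ i, (2 * d i) • (EuclideanSpace.proj (𝕜 := ℝ) i : E3 →L[ℝ] ℝ).smulRight
    (EuclideanSpace.proj (𝕜 := ℝ) i : E3 →L[ℝ] ℝ)

lemma PP_hasFDerivAt (N : ℝ) (d : Fin 3 → ℝ) (x : E3) : HasFDerivAt (PP N d) (LL d x) x := by
  unfold PP
  have h2 : ∀ i, HasFDerivAt (fun z : E3 => z i) (EuclideanSpace.proj (𝕜 := ℝ) i : E3 →L[ℝ] ℝ) x :=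
    fun i => (EuclideanSpace.proj (𝕜 := ℝ) i : E3 →L[ℝ] ℝ).hasFDerivAt
  have h3 := (HasFDerivAt.fun_sum (u := Finset.univ)
    fun i _ => ((h2 i).pow 2).const_mul (d i)).const_add N
  refine h3.congr_fderiv ?_
  ext v
  simp [LL, Fin.sum_univ_three]
  ring

section
variable {N a b q : ℝ} {d : Fin 3 → ℝ} {u : E3 → ℝ}

lemma reg (hq : 3/2 < q) (hb : 0 < b) (hub : ∀ x, b * (1 + ‖x‖) ^ (2:ℝ) ≤ u x)
    (huc : Continuous u) (hu : ∀ x, u x = PP N d x + a * VV (fun y => u y ^ (-q)) x) (k : ℕ) :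
    Sm k (-2 * q) (fun y => u y ^ (-q)) := by
  induction k with
  | zero => exact Sm_rpow hb hub huc 0 (by simp) q (by linarith)
  | succ k ih =>
    refine Sm_rpow hb hub huc (k+1) (fun _ => ?_) q (by linarith)
    have hI := ih.integrable (by linarith)
    have hd : ∀ x, HasFDerivAt u (LL d x +
        a • ∑ j, cv (kj j) (fun y => u y ^ (-q)) x • (EuclideanSpace.proj (𝕜 := ℝ) j : E3 →L[ℝ] ℝ)) x := by
      intro x
      have := (PP_hasFDerivAt N d x).add ((VV_hasFDerivAt hI x).const_mul a)
      have e : u = fun x => PP N d x + a * VV (fun y => u y ^ (-q)) x := funext hu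
      refine HasFDerivAt.congr_of_eventuallyEq this (Eventually.of_forall hu)
    refine ⟨fun x => (hd x).differentiableAt, ?_⟩
    have e : fderiv ℝ u = fun x => LL d x + (cv (kj 0) (fun y => u y ^ (-q)) x •
        (a • (EuclideanSpace.proj (𝕜 := ℝ) (0:Fin 3) : E3 →L[ℝ] ℝ)) +
        cv (kj 1) (fun y => u y ^ (-q)) x •
        (a • (EuclideanSpace.proj (𝕜 := ℝ) (1:Fin 3) : E3 →L[ℝ] ℝ)) +
        cv (kj 2) (fun y => u y ^ (-q)) x •
        (a • (EuclideanSpace.proj (𝕜 := ℝ) (2:Fin 3) : E3 →L[ℝ] ℝ))) := by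
      funext x
      rw [(hd x).fderiv, Fin.sum_univ_three]
      ext v
      simp
      ring
    rw [e]
    have hS : ∀ j, ∀ p : E3 →L[ℝ] ℝ, Sm k 1 (fun x => cv (kj j) (fun y => u y ^ (-q)) x • p) := by
      intro j p
      have h1 := cv_Sm (kj_meas j) (kj_le j) (by linarith : -2 * q < -3) k ih
      exact (h1.smul (Sm_const k p)).mono le_rfl (by norm_num)
    exact (Sm_clm k (LL d)).add (((hS 0 _).add (hS 1 _)).add (hS 2 _))

lemma pde (hq : 3/2 < q) (hb : 0 < b) (hub : ∀ x, b * (1 + ‖x‖) ^ (2:ℝ) ≤ u x)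
    (huc : Continuous u) (hu : ∀ x, u x = PP N d x + a * VV (fun y => u y ^ (-q)) x)
    (ha : a * c0 = 1) :
    ContDiff ℝ 4 u ∧ ∀ x, laplacian (laplacian u) x + u x ^ (-q) = 0 := by
  set f : E3 → ℝ := fun y => u y ^ (-q) with hfdef
  have hf : ∀ k, Sm k (-2 * q) f := reg hq hb hub huc hu
  have hm : -2 * q < -3 := by linarith
  have hI := (hf 0).integrable hm
  have hd : ∀ x, HasFDerivAt u (LL d x +
      a • ∑ j, cv (kj j) f x • (EuclideanSpace.proj (𝕜 := ℝ) j : E3 →L[ℝ] ℝ)) x := by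
    intro x
    have := (PP_hasFDerivAt N d x).add ((VV_hasFDerivAt hI x).const_mul a)
    refine HasFDerivAt.congr_of_eventuallyEq this (Eventually.of_forall hu)
  have hcv : ∀ k j {g : E3 → ℝ}, Sm k (-2 * q) g → Sm k 0 (cv (kj j) g) := fun k j g hg =>
    cv_Sm (kj_meas j) (kj_le j) hm k hg
  have hC4 : ContDiff ℝ 4 u := by
    have h4 : (4 : WithTop ℕ∞) = 3 + 1 := by norm_num
    rw [h4, contDiff_succ_iff_fderiv]
    refine ⟨fun x => (hd x).differentiableAt, by simp, ?_⟩
    have e : fderiv ℝ u = fun x => LL d x +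
      a • ∑ j, cv (kj j) f x • (EuclideanSpace.proj (𝕜 := ℝ) j : E3 →L[ℝ] ℝ) :=
      funext fun x => (hd x).fderiv
    rw [e]
    have hc3 : ∀ j, ContDiff ℝ 3 (cv (kj j) f) := fun j => (hcv 3 j (hf 3)).1
    refine (LL d).contDiff.add (ContDiff.const_smul a (ContDiff.sum fun j _ => ?_))
    exact (hc3 j).smul contDiff_const
  refine ⟨hC4, ?_⟩
  have hpdcv : ∀ j i {g : E3 → ℝ}, Sm 1 (-2 * q) g → pd i (cv (kj j) g) = cv (kj j) (pd i g) :=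
    fun j i g hg => cv_pd (kj_meas j) (kj_le j) hm hg i
  have hdiff : ∀ j {g : E3 → ℝ}, Sm 1 (-2 * q) g → Differentiable ℝ (cv (kj j) g) :=
    fun j g hg => (Sm_succ.1 (hcv 1 j hg)).2.1
  have h1 : ∀ j, pd j u = fun x => 2 * d j * x j + a * cv (kj j) f x := by
    intro j
    funext x
    unfold pd
    rw [(hd x).fderiv]
    fin_cases j <;> simp [LL, Fin.sum_univ_three]
  have hlin : ∀ j, pd j (fun x : E3 => x j) = fun _ => 1 := by
    intro j
    funext x
    unfold pd
    have h2 : HasFDerivAt (fun z : E3 => z j) (EuclideanSpace.proj (𝕜 := ℝ) j : E3 →L[ℝ] ℝ) x :=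
      (EuclideanSpace.proj (𝕜 := ℝ) j : E3 →L[ℝ] ℝ).hasFDerivAt
    rw [h2.fderiv]
    simp
  have h2 : ∀ j, pd j (pd j u) = fun x => 2 * d j + a * cv (kj j) (pd j f) x := by
    intro j
    rw [h1, pd_add ((coord_diff j).const_mul _) ((hdiff j (hf 1)).const_mul _),
      pd_const_mul (coord_diff j), pd_const_mul (hdiff j (hf 1)), hpdcv j j (hf 1), hlin]
    simp
  have hL : laplacian u = fun x => ∑ j, (2 * d j + a * cv (kj j) (pd j f) x) := by
    funext x
    rw [laplacian_eq (hC4.of_le (by norm_num))]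
    simp only [h2]
  have hg1 : ∀ k j, Sm k (-2 * q) (pd j f) := fun k j => (hf (k+1)).pd' j
  have hcd : ∀ j, ContDiff ℝ 2 (fun x => 2 * d j + a * cv (kj j) (pd j f) x) := fun j =>
    contDiff_const.add (contDiff_const.mul (hcv 2 j (hg1 2 j)).1)
  have hpc : ∀ (i : Fin 3) (c : ℝ), pd i (fun _ => c) = fun _ => 0 := by
    intro i c; funext x; simp [pd]
  have h3 : ∀ i j, pd i (fun x => 2 * d j + a * cv (kj j) (pd j f) x) =
      fun x => a * cv (kj j) (pd i (pd j f)) x := by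
    intro i j
    rw [pd_add (differentiable_const _) ((hdiff j (hg1 1 j)).const_mul _), hpc,
      pd_const_mul (hdiff j (hg1 1 j)), hpdcv j i (hg1 1 j)]
    simp
  have h4 : ∀ i j, pd i (fun x => a * cv (kj j) (pd i (pd j f)) x) =
      fun x => a * cv (kj j) (pd j (pd i (pd i f))) x := by
    intro i j
    have hs : Sm 1 (-2 * q) (pd i (pd j f)) := (hg1 2 j).pd' i
    rw [pd_const_mul (hdiff j hs), hpdcv j i hs, pd_comm (hf 2).1 i j, pd_comm (hg1 2 i).1 i j]
  intro x
  rw [hL, laplacian_eq (ContDiff.sum fun j _ => hcd j)]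
  have h5 : ∀ i, pd i (pd i (fun x => ∑ j, (2 * d j + a * cv (kj j) (pd j f) x))) x =
      ∑ j, a * cv (kj j) (pd j (pd i (pd i f))) x := by
    intro i
    rw [pd_sum (fun j => (hcd j).differentiable (by norm_num))]
    simp only [h3]
    rw [pd_sum (fun j => (hdiff j ((hg1 2 j).pd' i)).const_mul a)]
    simp only [h4]
  simp only [h5]
  simp only [← Finset.mul_sum]
  rw [bilap hm (hf 3) x]
  change a * (-c0 * f x) + f x = 0
  linear_combination (-f x) * ha

end
end BiH

open MeasureTheory Filter Topology Real
namespace BiH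

lemma rpow_lip {q l s t : ℝ} (hq : 0 < q) (hl : 0 < l) (hs : l ≤ s) (ht : l ≤ t) :
    |s ^ (-q) - t ^ (-q)| ≤ q * l ^ (-q - 1) * |s - t| := by
  have := Convex.norm_image_sub_le_of_norm_hasDerivWithin_le (f := fun x : ℝ => x ^ (-q))
    (f' := fun x => -q * x ^ (-q - 1)) (s := Set.Ici l) (x := t) (y := s)
    (C := q * l ^ (-q - 1)) (fun x hx => ?_) (fun x hx => ?_) (convex_Ici l) ht hs
  · simpa [Real.norm_eq_abs] using this
  · have hx' : 0 < x := lt_of_lt_of_le hl hx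
    exact (Real.hasDerivAt_rpow_const (Or.inl hx'.ne')).hasDerivWithinAt
  · have hx' : 0 < x := lt_of_lt_of_le hl hx
    rw [norm_mul, norm_neg, Real.norm_of_nonneg hq.le,
      Real.norm_of_nonneg (Real.rpow_nonneg hx'.le _)]
    exact mul_le_mul_of_nonneg_left (Real.rpow_le_rpow_of_nonpos hl hx (by linarith)) hq.le

lemma PP_cont (N : ℝ) (d : Fin 3 → ℝ) : Continuous (PP N d) :=
  continuous_iff_continuousAt.2 fun x => (PP_hasFDerivAt N d x).continuousAt

lemma PP_ge {N κ : ℝ} {d : Fin 3 → ℝ} (hd : ∀ i, κ ≤ d i) (x : E3) :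
    N + κ * ‖x‖ ^ 2 ≤ PP N d x := by
  unfold PP
  rw [← sum_sq, Finset.mul_sum]
  gcongr with i
  exact hd i

lemma exists_N {κ q a : ℝ} {d : Fin 3 → ℝ} (hκ : 0 < κ) (hd : ∀ i, κ ≤ d i) (hq : 3/2 < q)
    (ha : 0 < a) : ∃ N : ℝ, (∀ x, 1 + ‖x‖ ≤ PP N d x / 2) ∧
      (∀ x, κ / 4 * (1 + ‖x‖) ^ (2:ℝ) ≤ PP N d x / 2) ∧
      Integrable (fun x => (PP N d x / 2) ^ (-q)) ∧
      a * ∫ x, (PP N d x / 2) ^ (-q) ≤ 1 ∧ a * (q * ∫ x, (PP N d x / 2) ^ (-q)) ≤ 1 / 2 := by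
  set N0 := κ + 2 + 1 / κ with hN0
  have hk1 : 0 < 1 / κ := by positivity
  have A : ∀ N, N0 ≤ N → ∀ x, 1 + ‖x‖ ≤ PP N d x / 2 := by
    intro N hN x
    have h := PP_ge (N := N) hd x
    have h2 : 2 * ‖x‖ ≤ 1 / κ + κ * ‖x‖ ^ 2 := by
      have : 1 / κ + κ * ‖x‖ ^ 2 - 2 * ‖x‖ = (1 - κ * ‖x‖) ^ 2 / κ := by field_simp; ring
      have h3 : 0 ≤ (1 - κ * ‖x‖) ^ 2 / κ := by positivity
      linarith
    linarith
  have B : ∀ N, N0 ≤ N → ∀ x, κ / 4 * (1 + ‖x‖) ^ (2:ℝ) ≤ PP N d x / 2 := by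
    intro N hN x
    have h := PP_ge (N := N) hd x
    rw [Real.rpow_two]
    have h3 : 0 ≤ κ * (1 - ‖x‖) ^ 2 := by positivity
    nlinarith
  have hpos : ∀ N, N0 ≤ N → ∀ x, 0 < PP N d x / 2 := fun N hN x =>
    lt_of_lt_of_le (by positivity) (A N hN x)
  have hS : ∀ N, N0 ≤ N → Sm 0 (-2 * q) (fun x => (PP N d x / 2) ^ (-q)) := fun N hN =>
    Sm_rpow (b := κ / 4) (by positivity) (B N hN) ((PP_cont N d).div_const 2) 0 (by simp) q
      (by linarith)
  have hI : ∀ N, N0 ≤ N → Integrable (fun x => (PP N d x / 2) ^ (-q)) := fun N hN =>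
    (hS N hN).integrable (by linarith)
  have hlim : Tendsto (fun n : ℕ => ∫ x, (PP (N0 + n) d x / 2) ^ (-q)) atTop
      (𝓝 (∫ x : E3, (0:ℝ))) := by
    refine tendsto_integral_of_dominated_convergence (fun x => (PP N0 d x / 2) ^ (-q)) ?_
      (hI N0 le_rfl) ?_ ?_
    · intro n
      exact (hI _ (by simp)).aestronglyMeasurable
    · intro n
      refine ae_of_all _ fun x => ?_
      rw [Real.norm_of_nonneg (Real.rpow_nonneg (hpos _ (by simp) x).le _)]
      refine Real.rpow_le_rpow_of_nonpos (hpos _ le_rfl x) ?_ (by linarith)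
      unfold PP
      gcongr
      simp
    · refine ae_of_all _ fun x => ?_
      refine (tendsto_rpow_neg_atTop (by linarith : 0 < q)).comp ?_
      refine Tendsto.atTop_div_const (by norm_num) ?_
      unfold PP
      refine tendsto_atTop_add_const_right _ _ ?_
      exact tendsto_atTop_add_const_left _ _ tendsto_natCast_atTop_atTop
  simp only [integral_zero] at hlim
  have h1 : Tendsto (fun n : ℕ => a * ∫ x, (PP (N0 + n) d x / 2) ^ (-q)) atTop (𝓝 0) := by
    simpa using hlim.const_mul a
  have h2 : Tendsto (fun n : ℕ => a * (q * ∫ x, (PP (N0 + n) d x / 2) ^ (-q))) atTop (𝓝 0) := by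
    simpa using (hlim.const_mul q).const_mul a
  obtain ⟨n, hn1, hn2⟩ := ((h1.eventually (eventually_lt_nhds one_pos)).and
    (h2.eventually (eventually_lt_nhds (by norm_num : (0:ℝ) < 1/2)))).exists
  have hN : N0 ≤ N0 + n := by simp
  exact ⟨N0 + n, A _ hN, B _ hN, hI _ hN, hn1.le, hn2.le⟩

open BoundedContinuousFunction in
lemma fixed_point {P : E3 → ℝ} {q a : ℝ} (hPc : Continuous P) (hq : 3/2 < q) (ha : 0 < a)
    (h1 : ∀ x, 1 + ‖x‖ ≤ P x / 2) (hI : Integrable (fun x => (P x / 2) ^ (-q)))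
    (h2 : a * ∫ x, (P x / 2) ^ (-q) ≤ 1) (h3 : a * (q * ∫ x, (P x / 2) ^ (-q)) ≤ 1 / 2) :
    ∃ u : E3 → ℝ, Continuous u ∧ (∀ x, P x / 2 ≤ u x) ∧ (∀ x, |u x - P x| ≤ 1 + ‖x‖) ∧
      ∀ x, u x = P x + a * VV (fun y => u y ^ (-q)) x := by
  have hpos : ∀ x, 0 < P x / 2 := fun x => lt_of_lt_of_le (by positivity) (h1 x)
  let U : (E3 →ᵇ ℝ) → E3 → ℝ := fun w x => max (P x / 2) (P x + (1 + ‖x‖) * w x)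
  have hUc : ∀ w, Continuous (U w) := fun w => by
    have := w.continuous
    exact (hPc.div_const 2).max (hPc.add ((continuous_const.add continuous_norm).mul this))
  have hUl : ∀ w x, P x / 2 ≤ U w x := fun w x => le_max_left _ _
  have hUp : ∀ w x, 0 < U w x := fun w x => (hpos x).trans_le (hUl w x)
  have hFc : ∀ w, Continuous (fun x => U w x ^ (-q)) := fun w =>
    (hUc w).rpow_const fun x => Or.inl (hUp w x).ne'
  have hFle : ∀ w x, |U w x ^ (-q)| ≤ (P x / 2) ^ (-q) := fun w x => by
    rw [abs_of_nonneg (Real.rpow_nonneg (hUp w x).le _)]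
    exact Real.rpow_le_rpow_of_nonpos (hpos x) (hUl w x) (by linarith)
  have hFI : ∀ w, Integrable (fun x => U w x ^ (-q)) := fun w =>
    hI.mono' (hFc w).aestronglyMeasurable (ae_of_all _ (hFle w))
  have hVc : ∀ w, Continuous (VV (fun x => U w x ^ (-q))) := fun w =>
    continuous_iff_continuousAt.2 fun x => (VV_hasFDerivAt (hFI w) x).continuousAt
  have hdiv : ∀ (c v M : ℝ) (x : E3), 0 < c → |v| ≤ ‖x‖ * M → 0 ≤ M →
      |c * v / (1 + ‖x‖)| ≤ c * M := by
    intro c v M x hc hv hM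
    have hx : 0 < 1 + ‖x‖ := by positivity
    rw [abs_div, abs_mul, abs_of_pos hc, abs_of_pos hx, div_le_iff₀ hx]
    have : ‖x‖ * M ≤ M * (1 + ‖x‖) := by nlinarith [norm_nonneg x]
    calc c * |v| ≤ c * (M * (1 + ‖x‖)) := by gcongr; linarith
      _ = _ := by ring
  have hTb : ∀ w x, ‖a * VV (fun x => U w x ^ (-q)) x / (1 + ‖x‖)‖ ≤ 1 := by
    intro w x
    refine le_trans ?_ h2
    refine hdiv a _ _ x ha ?_ (integral_nonneg fun x => Real.rpow_nonneg (hpos x).le _)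
    refine (VV_le (hFI w) x).trans ?_
    exact mul_le_mul_of_nonneg_left (integral_mono (hFI w).abs hI (hFle w)) (norm_nonneg _)
  let T : (E3 →ᵇ ℝ) → (E3 →ᵇ ℝ) := fun w =>
    BoundedContinuousFunction.ofNormedAddCommGroup
      (fun x => a * VV (fun x => U w x ^ (-q)) x / (1 + ‖x‖))
      ((continuous_const.mul (hVc w)).div (by fun_prop) fun x => (onep x).ne') 1 (hTb w)
  have hTapp : ∀ w x, T w x = a * VV (fun x => U w x ^ (-q)) x / (1 + ‖x‖) := fun w x => rfl
  have hdF : ∀ w w' x, |U w x ^ (-q) - U w' x ^ (-q)| ≤ q * dist w w' * (P x / 2) ^ (-q) := by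
    intro w w' x
    refine (rpow_lip (by linarith) (hpos x) (hUl w x) (hUl w' x)).trans ?_
    have e1 : |U w x - U w' x| ≤ (P x / 2) * dist w w' := by
      have h4 : |U w x - U w' x| ≤ |(P x + (1 + ‖x‖) * w x) - (P x + (1 + ‖x‖) * w' x)| := by
        have := abs_max_sub_max_le_max (P x / 2) (P x + (1 + ‖x‖) * w x) (P x / 2)
          (P x + (1 + ‖x‖) * w' x)
        simpa using this
      refine h4.trans ?_
      have h5 : (P x + (1 + ‖x‖) * w x) - (P x + (1 + ‖x‖) * w' x) = (1 + ‖x‖) * (w x - w' x) := by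
        ring
      rw [h5, abs_mul, abs_of_pos (onep x)]
      have h6 : |w x - w' x| ≤ dist w w' := by
        rw [← Real.dist_eq]; exact BoundedContinuousFunction.dist_coe_le_dist x
      exact mul_le_mul (h1 x) h6 (abs_nonneg _) (hpos x).le
    have e2 : (P x / 2) ^ (-q) = (P x / 2) ^ (-q - 1) * (P x / 2) := by
      rw [← Real.rpow_add_one (hpos x).ne']; ring_nf
    have h7 : 0 ≤ (P x / 2) ^ (-q - 1) := Real.rpow_nonneg (hpos x).le _
    rw [e2]
    calc q * (P x / 2) ^ (-q - 1) * |U w x - U w' x|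
        ≤ q * (P x / 2) ^ (-q - 1) * ((P x / 2) * dist w w') := by gcongr
      _ = _ := by ring
  have hT : ContractingWith (1/2) T := by
    refine ⟨by norm_num, LipschitzWith.of_dist_le_mul fun w w' => ?_⟩
    have hdn : 0 ≤ dist w w' := dist_nonneg
    rw [BoundedContinuousFunction.dist_le (by positivity)]
    intro x
    rw [Real.dist_eq, hTapp, hTapp, ← sub_div, ← mul_sub, VV_sub (hFI w) (hFI w')]
    have hIn : 0 ≤ ∫ x, (P x / 2) ^ (-q) := integral_nonneg fun x => Real.rpow_nonneg (hpos x).le _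
    refine (hdiv a _ (q * dist w w' * ∫ x, (P x / 2) ^ (-q)) x ha ?_ (by positivity)).trans ?_
    · refine (VV_le ((hFI w).sub (hFI w')) x).trans ?_
      refine mul_le_mul_of_nonneg_left ?_ (norm_nonneg _)
      rw [← integral_const_mul]
      exact integral_mono ((hFI w).sub (hFI w')).abs (hI.const_mul _) (hdF w w')
    · have : a * (q * dist w w' * ∫ x, (P x / 2) ^ (-q)) =
        (a * (q * ∫ x, (P x / 2) ^ (-q))) * dist w w' := by ring
      rw [this]
      push_cast
      gcongr
  set w := ContractingWith.fixedPoint T hT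
  have hw : T w = w := hT.fixedPoint_isFixedPt
  have hwx : ∀ x, w x = a * VV (fun x => U w x ^ (-q)) x / (1 + ‖x‖) := fun x => by
    rw [← hTapp, hw]
  have hw1 : ∀ x, |w x| ≤ 1 := fun x => by rw [hwx]; exact hTb w x
  have hU : ∀ x, U w x = P x + (1 + ‖x‖) * w x := by
    intro x
    refine max_eq_right ?_
    have := (abs_le.1 (hw1 x)).1
    have := h1 x
    nlinarith [norm_nonneg x]
  refine ⟨U w, hUc w, hUl w, fun x => ?_, fun x => ?_⟩
  · rw [hU, add_sub_cancel_left, abs_mul, abs_of_pos (onep x)]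
    exact mul_le_of_le_one_right (onep x).le (hw1 x)
  · rw [hU, hwx x, mul_div_cancel₀ _ (onep x).ne']

end BiH

open MeasureTheory Filter Topology Real
namespace BiH

lemma nonradial {u : E3 → ℝ} {N κ₁ κ₂ : ℝ} (hκ : κ₁ < κ₂)
    (hu : ∀ x, |u x - PP N ![κ₁, κ₂, κ₂] x| ≤ 1 + ‖x‖) :
    ¬ ∃ p : E3, ∀ x y, ‖x - p‖ = ‖y - p‖ → u x = u y := by
  rintro ⟨p, hp⟩
  set A := 4 + 2 * ‖p‖ + 2 * |κ₁ * p 0 - κ₂ * p 1| with hA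
  have hA0 : 0 < A := by positivity
  set R := A / (κ₂ - κ₁) + 1 with hR
  have hδ : 0 < κ₂ - κ₁ := by linarith
  have hR1 : 1 ≤ R := by
    have : 0 < A / (κ₂ - κ₁) := by positivity
    linarith
  have hRA : A < (κ₂ - κ₁) * R := by
    rw [hR, mul_add, mul_div_cancel₀ _ hδ.ne']; linarith
  set x : E3 := p + EuclideanSpace.single 0 R with hx
  set y : E3 := p + EuclideanSpace.single 1 R with hy
  have hxy := hp x y (by simp [hx, hy])
  have nx : ‖x‖ ≤ ‖p‖ + R := by
    refine (norm_add_le _ _).trans ?_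
    simp [abs_of_nonneg (by linarith : 0 ≤ R)]
  have ny : ‖y‖ ≤ ‖p‖ + R := by
    refine (norm_add_le _ _).trans ?_
    simp [abs_of_nonneg (by linarith : 0 ≤ R)]
  have ex : PP N ![κ₁, κ₂, κ₂] y - PP N ![κ₁, κ₂, κ₂] x
      = (κ₂ - κ₁) * R ^ 2 - 2 * R * (κ₁ * p 0 - κ₂ * p 1) := by
    simp [PP, Fin.sum_univ_three, hx, hy]
    ring
  have h1 := abs_le.1 (hu x)
  have h2 := abs_le.1 (hu y)
  have h3 : R * (κ₁ * p 0 - κ₂ * p 1) ≤ R * |κ₁ * p 0 - κ₂ * p 1| :=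
    mul_le_mul_of_nonneg_left (le_abs_self _) (by linarith)
  have h4 : A * R < (κ₂ - κ₁) * R * R := mul_lt_mul_of_pos_right hRA (by linarith)
  have h5 : ‖p‖ ≤ ‖p‖ * R := le_mul_of_one_le_right (norm_nonneg _) hR1
  have h6 : A * R = 4 * R + 2 * (‖p‖ * R) + 2 * (R * |κ₁ * p 0 - κ₂ * p 1|) := by rw [hA]; ring
  nlinarith

lemma asymp {u : E3 → ℝ} {N : ℝ} {d : Fin 3 → ℝ}
    (hu : ∀ x, |u x - PP N d x| ≤ 1 + ‖x‖) {ε : ℝ} (hε : 0 < ε) :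
    ∀ᶠ x in cocompact E3, x ≠ 0 ∧
      |u x / ‖x‖ ^ 2 - (∑ i, d i * x i ^ 2) / ‖x‖ ^ 2| ≤ ε := by
  have h1 : Tendsto (fun t : ℝ => (|N| + 1) * t⁻¹ * t⁻¹ + t⁻¹) atTop (𝓝 0) := by
    have := tendsto_inv_atTop_zero (𝕜 := ℝ)
    simpa using ((this.const_mul (|N| + 1)).mul this).add this
  have h2 := (h1.comp (tendsto_norm_cocompact_atTop (E := E3))).eventually
    (eventually_lt_nhds hε)
  have h3 := (tendsto_norm_cocompact_atTop (E := E3)).eventually (eventually_gt_atTop 0)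
  filter_upwards [h2, h3] with x hx hx0
  refine ⟨norm_pos_iff.1 hx0, ?_⟩
  refine le_trans ?_ hx.le
  rw [← sub_div, abs_div, abs_of_pos (by positivity : 0 < ‖x‖ ^ 2), div_le_iff₀ (by positivity)]
  have e : ((|N| + 1) * ‖x‖⁻¹ * ‖x‖⁻¹ + ‖x‖⁻¹) * ‖x‖ ^ 2 = |N| + 1 + ‖x‖ := by
    field_simp
  simp only [Function.comp]
  rw [e]
  have h4 := hu x
  unfold PP at h4
  have : u x - ∑ i, d i * x i ^ 2 = (u x - (N + ∑ i, d i * x i ^ 2)) + N := by ring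
  rw [this]
  refine (abs_add_le _ _).trans ?_
  linarith

lemma tendsto_single (i : Fin 3) :
    Tendsto (fun R : ℝ => (EuclideanSpace.single i R : E3)) atTop (cocompact E3) := by
  rw [← Metric.cobounded_eq_cocompact, ← tendsto_norm_atTop_iff_cobounded]
  simpa using tendsto_abs_atTop_atTop (G := ℝ)

lemma freq {u : E3 → ℝ} {N : ℝ} {d : Fin 3 → ℝ}
    (hu : ∀ x, |u x - PP N d x| ≤ 1 + ‖x‖) {ε : ℝ} (hε : 0 < ε) (i : Fin 3) :
    ∃ᶠ x in cocompact E3, |u x / ‖x‖ ^ 2 - d i| ≤ ε := by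
  refine (tendsto_single i).frequently (Eventually.frequently ?_)
  filter_upwards [(tendsto_single i).eventually (asymp hu hε), eventually_gt_atTop 0] with R hR h0
  have e : (∑ j, d j * (EuclideanSpace.single i R : E3) j ^ 2) /
      ‖(EuclideanSpace.single i R : E3)‖ ^ 2 = d i := by
    rw [Finset.sum_eq_single i]
    · simp [h0.ne']
    · intro j _ hj; simp [hj]
    · simp
  rw [← e]
  exact hR.2

lemma limits {u : E3 → ℝ} {N κ₁ κ₂ : ℝ} (hκ : κ₁ < κ₂)
    (hu : ∀ x, |u x - PP N ![κ₁, κ₂, κ₂] x| ≤ 1 + ‖x‖) :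
    liminf (fun x => u x / ‖x‖ ^ 2) (cocompact E3) = κ₁ ∧
      limsup (fun x => u x / ‖x‖ ^ 2) (cocompact E3) = κ₂ := by
  have hev : ∀ ε > 0, ∀ᶠ x in cocompact E3, κ₁ - ε ≤ u x / ‖x‖ ^ 2 ∧ u x / ‖x‖ ^ 2 ≤ κ₂ + ε := by
    intro ε hε
    filter_upwards [asymp hu hε] with x hx
    have hx0 : 0 < ‖x‖ ^ 2 := by have := norm_pos_iff.2 hx.1; positivity
    have hs := sum_sq x
    have h1 : κ₁ ≤ (∑ i, (![κ₁, κ₂, κ₂] : Fin 3 → ℝ) i * x i ^ 2) / ‖x‖ ^ 2 := by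
      rw [le_div_iff₀ hx0, ← hs]
      simp [Fin.sum_univ_three]
      nlinarith [sq_nonneg (x 1), sq_nonneg (x 2)]
    have h2 : (∑ i, (![κ₁, κ₂, κ₂] : Fin 3 → ℝ) i * x i ^ 2) / ‖x‖ ^ 2 ≤ κ₂ := by
      rw [div_le_iff₀ hx0, ← hs]
      simp [Fin.sum_univ_three]
      nlinarith [sq_nonneg (x 0)]
    have := abs_le.1 hx.2
    constructor <;> linarith
  have bA : IsBoundedUnder (· ≤ ·) (cocompact E3) (fun x => u x / ‖x‖ ^ 2) :=
    ⟨κ₂ + 1, (hev 1 one_pos).mono fun x hx => hx.2⟩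
  have bB : IsBoundedUnder (· ≥ ·) (cocompact E3) (fun x => u x / ‖x‖ ^ 2) :=
    ⟨κ₁ - 1, (hev 1 one_pos).mono fun x hx => hx.1⟩
  constructor
  · apply le_antisymm
    · refine le_of_forall_pos_le_add fun ε hε => ?_
      refine liminf_le_of_frequently_le ?_ bB
      refine (freq hu hε 0).mono fun x hx => ?_
      have := (abs_le.1 hx).2
      simp at this
      linarith
    · refine le_of_forall_pos_le_add fun ε hε => ?_
      have := le_liminf_of_le (bA.isCoboundedUnder_ge) ((hev ε hε).mono fun x hx => hx.1)
      linarith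
  · apply le_antisymm
    · refine le_of_forall_pos_le_add fun ε hε => ?_
      exact limsup_le_of_le (bB.isCoboundedUnder_le) ((hev ε hε).mono fun x hx => hx.2)
    · refine le_of_forall_pos_le_add fun ε hε => ?_
      have : κ₂ - ε ≤ limsup (fun x => u x / ‖x‖ ^ 2) (cocompact E3) := by
        refine le_limsup_of_frequently_le ?_ bA
        refine (freq hu hε 1).mono fun x hx => ?_
        have := (abs_le.1 hx).1
        simp at this
        linarith
      linarith

end BiH

/-- **Theorem.** For `q > 3/2` and `0 < κ₁ < κ₂` there exists a positive `C⁴` solution of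
`Δ²u + u^{-q} = 0` on ℝ³, not radially symmetric about any point, with
`liminf_{|x|→∞} u(x)/|x|² = κ₁`, `limsup_{|x|→∞} u(x)/|x|² = κ₂`, and `∫ u^{-q} < ∞`. -/
theorem exists_nonradial_solution_quadratic_growth_finite_mass
    (q κ₁ κ₂ : ℝ) (hq : 3 / 2 < q) (hκ₁ : 0 < κ₁) (hκ : κ₁ < κ₂) :
    ∃ u : EuclideanSpace ℝ (Fin 3) → ℝ,
      ContDiff ℝ 4 u ∧ (∀ x, 0 < u x) ∧
      (∀ x, laplacian (laplacian u) x + (u x) ^ (-q) = 0) ∧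
      (¬ ∃ p : EuclideanSpace ℝ (Fin 3), ∀ x y, ‖x - p‖ = ‖y - p‖ → u x = u y) ∧
      liminf (fun x => u x / ‖x‖ ^ 2) (cocompact (EuclideanSpace ℝ (Fin 3))) = κ₁ ∧
      limsup (fun x => u x / ‖x‖ ^ 2) (cocompact (EuclideanSpace ℝ (Fin 3))) = κ₂ ∧
      Integrable (fun x => (u x) ^ (-q)) := by
  have ha : 0 < 1 / BiH.c0 := one_div_pos.2 BiH.c0_pos
  have hac : 1 / BiH.c0 * BiH.c0 = 1 := one_div_mul_cancel BiH.c0_pos.ne'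
  have hd : ∀ i, κ₁ ≤ (![κ₁, κ₂, κ₂] : Fin 3 → ℝ) i := by
    intro i; fin_cases i <;> simp [hκ.le]
  obtain ⟨N, h1, hb, hI, h2, h3⟩ := BiH.exists_N hκ₁ hd hq ha
  obtain ⟨u, huc, hul, huP, hu⟩ :=
    BiH.fixed_point (BiH.PP_cont N ![κ₁, κ₂, κ₂]) hq ha h1 hI h2 h3
  have hub : ∀ x, κ₁ / 4 * (1 + ‖x‖) ^ (2:ℝ) ≤ u x := fun x => (hb x).trans (hul x)
  have hb0 : 0 < κ₁ / 4 := by positivity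
  obtain ⟨p1, p2⟩ := BiH.pde hq hb0 hub huc hu hac
  obtain ⟨l1, l2⟩ := BiH.limits hκ huP
  refine ⟨u, p1, fun x => ?_, p2, BiH.nonradial hκ huP, l1, l2, ?_⟩
  · have := norm_nonneg x
    exact lt_of_lt_of_le (by linarith) ((h1 x).trans (hul x))
  · exact (BiH.reg hq hb0 hub huc hu 0).integrable (by linarith)
end

section
/- Let q > 7 and κ > 0. Then there exists a solution u to Δ²u + u^{−q} = 0 in ℝ³ with u > 0, such that u is not radially symmetric about any point, liminf_{|x|→∞} u(x)/|x| ∈ (0, ∞), and limsup_{|x|→∞} u(x)/|x|² = κ. -/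
open MeasureTheory Filter Topology Real

lemma exists_theta (a : ℝ) (ha : 0 < a) (b : ℝ) (hb : 0 < b) :
    ∃ th : ℝ → ℝ, (∀ s, HasDerivAt th (b / cosh (th s) ^ a) s) ∧ th 0 = 0 ∧
      (∀ s, th (-s) = - th s) ∧ StrictMono th := by
  have hc : Continuous (fun t : ℝ => cosh t ^ a / b) := by
    refine Continuous.div_const ?_ _
    exact continuous_cosh.rpow_const (fun x => Or.inl (cosh_pos x).ne')
  set S : ℝ → ℝ := fun x => ∫ t in (0:ℝ)..x, cosh t ^ a / b with hS
  have hd : ∀ x, HasDerivAt S (cosh x ^ a / b) x := fun x =>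
    intervalIntegral.integral_hasDerivAt_right (hc.intervalIntegrable _ _)
      (hc.stronglyMeasurableAtFilter _ _) hc.continuousAt
  have hpos : ∀ x : ℝ, 0 < cosh x ^ a / b := fun x => by
    have := cosh_pos x
    positivity
  have hmono : StrictMono S := strictMono_of_hasDerivAt_pos hd hpos
  have hcont : Continuous S := continuous_iff_continuousAt.2 fun x => (hd x).continuousAt
  have hodd : ∀ x, S (-x) = - S x := by
    intro x
    have := intervalIntegral.integral_comp_neg (a := 0) (b := x) (fun t : ℝ => cosh t ^ a / b)
    simp only [cosh_neg, neg_zero] at this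
    simp only [hS]
    rw [this, intervalIntegral.integral_symm]
  have hge : ∀ x, 0 ≤ x → x / b ≤ S x := by
    intro x hx
    have : ∫ t in (0:ℝ)..x, (1/b) ≤ ∫ t in (0:ℝ)..x, cosh t ^ a / b := by
      apply intervalIntegral.integral_mono_on hx (by simp) (hc.intervalIntegrable _ _)
      intro t _
      gcongr
      exact one_le_rpow (one_le_cosh t) ha.le
    simp only [hS]
    simpa [div_eq_mul_inv] using this
  have htop : Tendsto S atTop atTop := by
    refine tendsto_atTop_mono' _ ?_ (tendsto_id.atTop_div_const hb)
    filter_upwards [eventually_ge_atTop 0] with x hx using hge x hx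
  have hbot : Tendsto S atBot atBot := by
    have := (tendsto_neg_atTop_atBot.comp (htop.comp tendsto_neg_atBot_atTop))
    refine this.congr ?_
    intro x
    simp [hodd]
  have hsurj : Function.Surjective S := hcont.surjective htop hbot
  let e := hmono.orderIsoOfSurjective S hsurj
  have he : ∀ x, e x = S x := fun x => rfl
  have h0 : S 0 = 0 := by simp [hS]
  refine ⟨e.symm, ?_, ?_, ?_, e.symm.strictMono⟩
  · intro s
    have := HasDerivAt.of_local_left_inverse (f := S) (g := e.symm) (a := s)
      e.symm.continuous.continuousAt (hd (e.symm s)) (hpos _).ne'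
      (Eventually.of_forall fun y => by rw [← he]; simp)
    simpa using this
  · have : e.symm (S 0) = 0 := by rw [← he]; simp
    rwa [h0] at this
  · intro s
    apply e.injective
    rw [he (-_), hodd, ← he]; simp

lemma oneD (q : ℝ) (hq : 7 < q) : ∃ w w' : ℝ → ℝ, (∀ s, HasDerivAt w (w' s) s) ∧
    (∀ s, HasDerivAt w' (w s ^ (1 - q)) s) ∧ w 0 = 1 ∧ w' 0 = 0 ∧ (∀ s, 1 ≤ w s) ∧
    (∀ s, (w' s)^2 = (2 / (q-2)) * (1 - w s ^ (2 - q))) ∧ (∀ s, w (-s) = w s) ∧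
    (∀ s, 0 ≤ s → 0 ≤ w' s) ∧ (∀ s, w' s ≤ 1) ∧ 0 < w' 1 := by
  set m : ℝ := (q-2)/2 with hm
  have hm0 : 2 < m := by rw [hm]; linarith
  have hq' : q = 2*m+2 := by rw [hm]; ring
  have hmp : 0 < m := by linarith
  have hsm : 0 < √m := Real.sqrt_pos.2 hmp
  have hsm2 : √m * √m = m := Real.mul_self_sqrt hmp.le
  obtain ⟨th, hd, h0, hodd, hmono⟩ := exists_theta (1/m) (by positivity) (√m) hsm
  have hcp : ∀ s, 0 < cosh (th s) := fun s => cosh_pos _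
  refine ⟨fun s => cosh (th s) ^ (1/m), fun s => tanh (th s) / √m, ?_, ?_, ?_, ?_, ?_, ?_, ?_, ?_, ?_, ?_⟩
  · intro s
    have h1 := ((hd s).cosh).rpow_const (p := 1/m) (Or.inl (hcp s).ne')
    convert h1 using 1
    have : cosh (th s) ^ (1/m - 1) = cosh (th s) ^ (1/m) / cosh (th s) := rpow_sub_one (hcp s).ne' _
    simp only
    rw [this, tanh_eq_sinh_div_cosh]
    have h2 : 0 < cosh (th s) ^ (1/m) := rpow_pos_of_pos (hcp s) _
    have h3 := (hcp s)
    field_simp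
    rw [sq, hsm2]
  · intro s
    have h1 : HasDerivAt (fun s => sinh (th s) / cosh (th s) / √m) _ s :=
      (((hd s).sinh).div ((hd s).cosh) (hcp s).ne').div_const (√m)
    simp only [tanh_eq_sinh_div_cosh]
    convert h1 using 1
    have h2 : 0 < cosh (th s) ^ (1/m) := rpow_pos_of_pos (hcp s) _
    have h3 := (hcp s)
    rw [← rpow_mul (hcp s).le]
    have h4 : 1/m*(1-q) = -2 - 1/m := by rw [hq']; field_simp; ring
    rw [h4, rpow_sub (hcp s), rpow_neg (hcp s).le]
    have h5 := cosh_sq (th s)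
    norm_cast
    field_simp
    rw [h5]; ring
  · simp [h0]
  · simp [h0]
  · intro s
    exact one_le_rpow (one_le_cosh _) (by positivity)
  · intro s
    simp only
    rw [← rpow_mul (hcp s).le]
    have h4 : 1/m*(2-q) = -2 := by rw [hq']; field_simp; ring
    have h6 : 2/(q-2) = 1/m := by rw [hq']; ring_nf
    rw [h4, h6, rpow_neg (hcp s).le, div_pow, sq (√m), hsm2, tanh_eq_sinh_div_cosh]
    have h5 := cosh_sq (th s)
    have h3 := (hcp s)
    norm_cast
    field_simp
    rw [h5]; ring
  · intro s; simp [hodd]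
  · intro s hs
    have : 0 ≤ th s := by rw [← h0]; exact hmono.monotone hs
    simp only
    rw [tanh_eq_sinh_div_cosh]
    have := sinh_nonneg_iff.2 this
    have := hcp s
    positivity
  · intro s
    rw [div_le_one hsm]
    have h1 : tanh (th s) ≤ 1 := by
      rw [tanh_eq_sinh_div_cosh, div_le_one (hcp s)]
      exact (sinh_lt_cosh _).le
    have : 1 ≤ √m := by rw [Real.one_le_sqrt]; linarith
    linarith
  · have : 0 < th 1 := by rw [← h0]; exact hmono one_pos
    simp only [tanh_eq_sinh_div_cosh]
    have := sinh_pos_iff.2 this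
    have := hcp 1
    positivity


abbrev E3 := EuclideanSpace ℝ (Fin 3)

lemma int1 (A a : ℝ) (hA : 0 < A) (ha : 1 < a) :
    ∫⁻ r in Set.Ioi (0:ℝ), ENNReal.ofReal (r * (A + r^2) ^ (-a)) =
      ENNReal.ofReal (A ^ (1-a) / (2 * (a-1))) := by
  have hpos : ∀ r : ℝ, 0 < A + r^2 := fun r => by positivity
  have hd : ∀ r : ℝ, HasDerivAt (fun r => - (A + r^2) ^ (1-a) / (2 * (a-1)))
      (r * (A + r^2) ^ (-a)) r := by
    intro r
    have h1 : HasDerivAt (fun r : ℝ => A + r^2) (2*r) r := by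
      simpa using (hasDerivAt_pow 2 r).const_add A
    have h2 : HasDerivAt (fun r => - (A + r^2) ^ (1-a) / (2 * (a-1))) _ r := ((h1.rpow_const (p := 1-a) (Or.inl (hpos r).ne')).neg).div_const (2*(a-1))
    refine h2.congr_deriv ?_
    have : a - 1 ≠ 0 := by linarith
    have h3 : 1 - a - 1 = -a := by ring
    rw [h3]
    field_simp
    ring
  have hlim : Tendsto (fun r : ℝ => - (A + r^2) ^ (1-a) / (2 * (a-1))) atTop (𝓝 0) := by
    have h1 : Tendsto (fun r : ℝ => A + r^2) atTop atTop :=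
      tendsto_atTop_add_const_left _ _ (tendsto_pow_atTop (by norm_num))
    have h2 := (tendsto_rpow_neg_atTop (y := a-1) (by linarith)).comp h1
    have h3 := (h2.neg).div_const (2*(a-1))
    simpa using h3
  have hnn : ∀ r ∈ Set.Ioi (0:ℝ), 0 ≤ r * (A + r^2) ^ (-a) := by
    intro r hr
    have := hpos r
    have hr : 0 < r := hr
    positivity
  have hi := integrableOn_Ioi_deriv_of_nonneg' (a := 0) (fun r _ => hd r) hnn hlim
  have he := integral_Ioi_of_hasDerivAt_of_nonneg' (a := 0) (fun r _ => hd r) hnn hlim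
  rw [← ofReal_integral_eq_lintegral_ofReal hi
    ((ae_restrict_iff' measurableSet_Ioi).2 (Eventually.of_forall hnn)), he]
  congr 1
  simp
  ring

lemma int2 (A a : ℝ) (hA : 0 < A) (ha : 1 < a) :
    ∫⁻ p : ℝ × ℝ, ENNReal.ofReal ((A + (p.1^2 + p.2^2)) ^ (-a)) =
      ENNReal.ofReal (π / (a-1) * A ^ (1-a)) := by
  rw [← lintegral_comp_polarCoord_symm]
  have h1 : ∀ p ∈ polarCoord.target, ENNReal.ofReal p.1 •
      ENNReal.ofReal ((A + ((polarCoord.symm p).1^2 + (polarCoord.symm p).2^2)) ^ (-a)) =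
      ENNReal.ofReal (p.1 * (A + p.1^2) ^ (-a)) * 1 := by
    intro p hp
    have hp1 : 0 < p.1 := hp.1
    rw [smul_eq_mul, ← ENNReal.ofReal_mul hp1.le, mul_one]
    congr 3
    simp only [polarCoord_symm_apply]
    have := cos_sq_add_sin_sq p.2
    congr 1
    linear_combination (p.1^2) * this
  rw [setLIntegral_congr_fun polarCoord.open_target.measurableSet h1, polarCoord_target,
    Measure.volume_eq_prod, ← Measure.prod_restrict,
    lintegral_prod_mul (f := fun r : ℝ => ENNReal.ofReal (r * (A + r^2) ^ (-a)))
      (g := fun _ => 1) (by fun_prop) (by fun_prop), int1 A a hA ha]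
  simp only [lintegral_const, Measure.restrict_apply MeasurableSet.univ, Set.univ_inter,
    Real.volume_Ioo, one_mul]
  have hA' : 0 < A ^ (1-a) := rpow_pos_of_pos hA _
  have ha' : 0 < a - 1 := by linarith
  rw [← ENNReal.ofReal_mul (by positivity)]
  congr 1
  field_simp
  ring

lemma lint3 (F : ℝ → ℝ × ℝ → ENNReal) (hF : Measurable (Function.uncurry F)) :
    ∫⁻ y : E3, F (y 2) (y 0, y 1) = ∫⁻ t : ℝ, ∫⁻ p : ℝ × ℝ, F t p := by
  have h1 := (PiLp.volume_preserving_ofLp (Fin 3))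
  have h2 := volume_preserving_piFinSuccAbove (fun _ : Fin 3 => ℝ) 2
  have h3 := (MeasurePreserving.id (volume : Measure ℝ)).prod (volume_preserving_finTwoArrow ℝ)
  have h := h3.comp (h2.comp h1)
  have h4 := h.lintegral_comp hF
  rw [lintegral_prod _ hF.aemeasurable] at h4
  exact h4

lemma int3 (om Φ : ℝ → ℝ) (hom : Continuous om) (hom1 : ∀ t, 1 ≤ om t) (hΦ : Measurable Φ)
    (hΦ0 : ∀ t, 0 ≤ Φ t) (a : ℝ) (ha : 1 < a)
    (hi : Integrable (fun t => Φ t * om t ^ (1-a))) :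
    Integrable (fun y : E3 => Φ (y 2) * (om (y 2) + ((y 0)^2 + (y 1)^2)) ^ (-a)) ∧
    ∫ y : E3, Φ (y 2) * (om (y 2) + ((y 0)^2 + (y 1)^2)) ^ (-a) =
      π / (a-1) * ∫ t, Φ t * om t ^ (1-a) := by
  have hm : Measurable om := hom.measurable
  have hpos : ∀ (t : ℝ), 0 < om t := fun t => by linarith [hom1 t]
  have hpos' : ∀ y : E3, 0 < om (y 2) + ((y 0)^2 + (y 1)^2) := fun y => by
    have := hpos (y 2); positivity
  have hnn : ∀ y : E3, 0 ≤ Φ (y 2) * (om (y 2) + ((y 0)^2 + (y 1)^2)) ^ (-a) := fun y => 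
    mul_nonneg (hΦ0 _) (rpow_nonneg (hpos' y).le _)
  have hnn' : ∀ t : ℝ, 0 ≤ Φ t * om t ^ (1-a) := fun t =>
    mul_nonneg (hΦ0 _) (rpow_nonneg (hpos t).le _)
  have ha' : 0 < π / (a-1) := div_pos pi_pos (by linarith)
  have key : ∫⁻ y : E3, ENNReal.ofReal (Φ (y 2) * (om (y 2) + ((y 0)^2 + (y 1)^2)) ^ (-a)) =
      ENNReal.ofReal (π / (a-1) * ∫ t, Φ t * om t ^ (1-a)) := by
    have h1 := lint3 (fun t p => ENNReal.ofReal (Φ t * (om t + (p.1^2 + p.2^2)) ^ (-a)))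
      (by unfold Function.uncurry; fun_prop)
    simp only at h1
    rw [h1]
    have h2 : ∀ t, ∫⁻ p : ℝ × ℝ, ENNReal.ofReal (Φ t * (om t + (p.1^2 + p.2^2)) ^ (-a)) =
        ENNReal.ofReal (π / (a-1)) * ENNReal.ofReal (Φ t * om t ^ (1-a)) := by
      intro t
      simp_rw [ENNReal.ofReal_mul (hΦ0 t)]
      rw [lintegral_const_mul _ (by fun_prop), int2 _ _ (hpos t) ha, ENNReal.ofReal_mul ha'.le]
      ring
    simp_rw [h2]
    rw [lintegral_const_mul _ (by fun_prop), ENNReal.ofReal_mul ha'.le,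
      ofReal_integral_eq_lintegral_ofReal hi (Eventually.of_forall hnn')]
  have hms : AEStronglyMeasurable (fun y : E3 => Φ (y 2) * (om (y 2) + ((y 0)^2 + (y 1)^2)) ^ (-a)) volume := by
    apply Measurable.aestronglyMeasurable
    fun_prop
  refine ⟨⟨hms, ?_⟩, ?_⟩
  · rw [hasFiniteIntegral_iff_ofReal (Eventually.of_forall hnn), key]
    exact ENNReal.ofReal_lt_top
  · rw [integral_eq_lintegral_of_nonneg_ae (Eventually.of_forall hnn) hms, key,
      ENNReal.toReal_ofReal]
    exact mul_nonneg ha'.le (integral_nonneg hnn')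


lemma even_int (h : ℝ → ℝ) (σ : ℝ) (hσ : 0 ≤ σ) :
    ∫ t, max (σ - |t|) 0 * h |t| = 2 * ∫ t in (0:ℝ)..σ, (σ - t) * h t := by
  have h1 := integral_comp_abs (f := fun t => max (σ - t) 0 * h t)
  rw [h1]
  congr 1
  rw [intervalIntegral.integral_of_le hσ]
  have h2 : ∫ t in Set.Ioi (0:ℝ), max (σ - t) 0 * h t = ∫ t in Set.Ioc 0 σ, max (σ - t) 0 * h t := by
    refine setIntegral_eq_of_subset_of_forall_sdiff_eq_zero measurableSet_Ioi
      Set.Ioc_subset_Ioi_self ?_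
    intro t ht
    have h3 : σ < t := by
      by_contra hh
      exact ht.2 ⟨ht.1, not_lt.1 hh⟩
    rw [max_eq_right (by linarith)]; simp
  rw [h2]
  refine setIntegral_congr_fun measurableSet_Ioc ?_
  intro t ht
  simp only
  rw [max_eq_left (by linarith [ht.2])]

lemma log_ineq (Y : ℝ) (hY : 1 ≤ Y) : (14/5) * log Y ≤ 1 + Y - 2 / Y := by
  have hd : ∀ y ∈ interior (Set.Ici (1:ℝ)), HasDerivWithinAt (fun y => 1 + y - 2 / y - (14/5) * log y) 
      (1 + 2 / y^2 - (14/5) / y) (interior (Set.Ici 1)) y := by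
    intro y hy
    simp only [interior_Ici, Set.mem_Ioi] at hy
    have hy0 : y ≠ 0 := by linarith
    have h1 : HasDerivAt (fun y : ℝ => 1 + y - 2 / y - (14/5) * log y) _ y :=
      (((hasDerivAt_id y).const_add 1).sub ((hasDerivAt_const y (2:ℝ)).div (hasDerivAt_id y) hy0)).sub
        ((Real.hasDerivAt_log hy0).const_mul (14/5))
    refine (h1.congr_deriv ?_).hasDerivWithinAt
    simp only [id]
    field_simp
    ring
  have hm : MonotoneOn (fun y => 1 + y - 2 / y - (14/5) * log y) (Set.Ici (1:ℝ)) := by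
    apply monotoneOn_of_hasDerivWithinAt_nonneg (convex_Ici 1) _ hd
    · intro y hy
      simp only [interior_Ici, Set.mem_Ioi] at hy
      have : 1 + 2 / y^2 - (14/5) / y = ((y - 7/5)^2 + 1/25) / y^2 := by
        field_simp; ring
      rw [this]; positivity
    · intro y hy
      have hy0 : y ≠ 0 := by have : (1:ℝ) ≤ y := hy; linarith
      refine ContinuousAt.continuousWithinAt ?_
      fun_prop (disch := assumption)
  have := hm (Set.mem_Ici.2 le_rfl) (Set.mem_Ici.2 hY) hY
  simp at this
  linarith

lemma prof1 (q : ℝ) (hq : 7 < q) : ∃ w : ℝ → ℝ, Continuous w ∧ (∀ s, 1 ≤ w s) ∧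
    (∃ c > 0, ∀ s, c * (1 + |s|) ≤ w s) ∧ (∀ s, w s ≤ 1 + |s|) ∧
    (∀ s, (1/2) * ∫ t, max (|s| - |t|) 0 * w t ^ (1 - q) = w s - 1) ∧
    (∀ s, (q-1) * ((1/2) * ∫ t, max (|s| - |t|) 0 * ((w t - 1) * w t ^ (-q))) ≤ (6/7) * (w s - 1)) := by
  obtain ⟨w, w', hd, hd', h0, h0', h1, hsq, hev, hnn, hle, hpos1⟩ := oneD q hq
  have hpos : ∀ s, 0 < w s := fun s => by linarith [h1 s]
  have hc : Continuous w := continuous_iff_continuousAt.2 fun s => (hd s).continuousAt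
  have hc' : Continuous w' := continuous_iff_continuousAt.2 fun s => (hd' s).continuousAt
  have habs : ∀ s, w |s| = w s := by
    intro s
    rcases abs_choice s with h | h <;> rw [h]
    exact hev s
  have hmono' : Monotone w' := monotone_of_hasDerivAt_nonneg hd' (fun s => rpow_nonneg (hpos s).le _)
  have hcr : ∀ a : ℝ, Continuous (fun t => w t ^ a) := fun a =>
    hc.rpow_const (fun t => Or.inl (hpos t).ne')
  refine ⟨w, hc, h1, ?_, ?_, ?_, ?_⟩
  · refine ⟨min (1/2) (w' 1), lt_min (by norm_num) hpos1, ?_⟩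
    intro s
    rw [← habs s]
    generalize hx : |s| = x
    have hx0 : 0 ≤ x := hx ▸ abs_nonneg s
    set c := min (1/2) (w' 1)
    have hc1 : c ≤ 1/2 := min_le_left _ _
    have hc2 : c ≤ w' 1 := min_le_right _ _
    by_cases hx1 : x ≤ 1
    · nlinarith [h1 x]
    · push Not at hx1
      have hconv : MonotoneOn (fun t => w t - c * (1 + t)) (Set.Ici 1) := by
        apply monotoneOn_of_hasDerivWithinAt_nonneg (convex_Ici 1) (f' := fun t => w' t - c)
        · fun_prop
        · intro t ht
          have : HasDerivAt (fun t => w t - c * (1 + t)) (w' t - c * 1) t :=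
            (hd t).sub (((hasDerivAt_id t).const_add 1).const_mul c)
          simpa using this.hasDerivWithinAt
        · intro t ht
          simp only [interior_Ici, Set.mem_Ioi] at ht
          linarith [hmono' ht.le]
      have := hconv (Set.mem_Ici.2 le_rfl) (Set.mem_Ici.2 hx1.le) hx1.le
      simp only at this
      linarith [h1 1]
  · intro s
    rw [← habs s]
    have hx0 : 0 ≤ |s| := abs_nonneg s
    generalize |s| = x at hx0
    have hm : Monotone (fun t => t - w t) :=
      monotone_of_hasDerivAt_nonneg (fun t => (hasDerivAt_id t).sub (hd t))
        (fun t => by simpa using hle t)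
    have := hm hx0
    simp only [h0] at this
    linarith
  · intro s
    have h2 := even_int (fun t => w t ^ (1-q)) |s| (abs_nonneg s)
    simp only [habs] at h2
    rw [h2, ← habs s]
    have hx0 : 0 ≤ |s| := abs_nonneg s
    generalize |s| = x at hx0
    have h3 : ∫ t in (0:ℝ)..x, (x - t) * w t ^ (1-q) = 
        ((x - x) * w' x + w x) - ((x - 0) * w' 0 + w 0) := by
      refine intervalIntegral.integral_eq_sub_of_hasDerivAt 
        (f := fun t => (x - t) * w' t + w t) ?_ ?_
      · intro t _
        have : HasDerivAt (fun t => (x - t) * w' t + w t) _ t :=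
          (((hasDerivAt_id t).const_sub x).mul (hd' t)).add (hd t)
        refine this.congr_deriv ?_
        simp
      · have := hcr (1-q)
        apply Continuous.intervalIntegrable
        fun_prop
    rw [h3, h0, h0']; ring
  · intro s
    have h2 := even_int (fun t => (w t - 1) * w t ^ (-q)) |s| (abs_nonneg s)
    simp only [habs] at h2
    rw [h2, ← habs s]
    have hx0 : 0 ≤ |s| := abs_nonneg s
    generalize |s| = x at hx0
    set m : ℝ := (q-2)/2 with hm
    have hmp : 0 < m := by rw [hm]; linarith
    let H : ℝ → ℝ := fun t => (6/7) * (w' t * (1 - w t ^ (-m)))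
    let H' : ℝ → ℝ := fun t => (6/7) * (w t ^ (1-q) * (1 - w t ^ (-m)) + 
      w' t * (w' t * m * w t ^ (-m-1)))
    have hH : ∀ t, HasDerivAt H (H' t) t := by
      intro t
      have : HasDerivAt H _ t := ((hd' t).mul (((hd t).rpow_const (p := -m) (Or.inl (hpos t).ne')).const_sub 1)).const_mul (6/7)
      refine this.congr_deriv ?_
      simp only [H']
      ring
    have hHc : Continuous H' := by
      have := hcr (1-q); have := hcr (-m); have := hcr (-m-1)
      simp only [H']
      fun_prop
    have hkey : ∀ t, (q-1) * ((w t - 1) * w t ^ (-q)) ≤ H' t := by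
      intro t
      simp only [H']
      have e1 : w' t * (w' t * m * w t ^ (-m-1)) = (1 - w t ^ (2-q)) * w t ^ (-m-1) := by
        have : w' t * (w' t * m * w t ^ (-m-1)) = (w' t)^2 * m * w t ^ (-m-1) := by ring
        rw [this, hsq]
        have : 2 / (q-2) * m = 1 := by
          rw [hm]; have : q - 2 ≠ 0 := by linarith
          field_simp
        linear_combination (1 - w t ^ (2-q)) * w t ^ (-m-1) * this
      rw [e1]
      set Y := w t ^ m with hY
      have hYp : 0 < Y := rpow_pos_of_pos (hpos t) _
      have hY1 : 1 ≤ Y := one_le_rpow (h1 t) hmp.le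
      have hw := hpos t
      have e2 : w t ^ (-m) = 1 / Y := by rw [rpow_neg hw.le, one_div]
      have e3 : w t ^ (-m-1) = 1 / Y / w t := by rw [rpow_sub_one hw.ne', e2]
      have e4 : w t ^ (2-q) = 1 / Y / Y := by
        have : 2 - q = -m - m := by rw [hm]; ring
        rw [this, rpow_sub hw, e2]
      have e5 : w t ^ (1-q) = 1 / Y / Y / w t := by
        have : 1 - q = (2-q) - 1 := by ring
        rw [this, rpow_sub_one hw.ne', e4]
      have e6 : w t ^ (-q) = 1 / Y / Y / w t / w t := by
        have : - q = (1-q) - 1 := by ring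
        rw [this, rpow_sub_one hw.ne', e5]
      rw [e2, e3, e4, e5, e6]
      have l1 : log Y = m * log (w t) := log_rpow hw m
      have l2 := log_ineq Y hY1
      have l3 := one_sub_inv_le_log_of_pos hw
      have l4 : 0 ≤ log (w t) := log_nonneg (h1 t)
      have l5 : (q-1) * (1 - (w t)⁻¹) ≤ (6/7) * (1 + Y - 2 / Y) := by
        calc (q-1) * (1 - (w t)⁻¹) ≤ (q-1) * log (w t) := by
              apply mul_le_mul_of_nonneg_left l3; linarith
          _ ≤ (6/7) * ((14/5) * log Y) := by
              rw [l1, hm]; nlinarith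
          _ ≤ _ := by linarith
      have l6 : 0 < 1 / Y / Y / w t := by positivity
      have l7 := mul_le_mul_of_nonneg_right l5 l6.le
      have l8 : (q-1) * ((w t - 1) * (1 / Y / Y / w t / w t)) = (q-1) * (1 - (w t)⁻¹) * (1 / Y / Y / w t) := by
        field_simp
      rw [l8]
      refine l7.trans (le_of_eq ?_)
      field_simp
      ring
    have h3 : ∫ t in (0:ℝ)..x, ((x - t) * H' t - H t + (6/7) * w' t) = 
        ((x - x) * H x + (6/7) * w x) - ((x - 0) * H 0 + (6/7) * w 0) := by
      refine intervalIntegral.integral_eq_sub_of_hasDerivAt 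
        (f := fun t => (x - t) * H t + (6/7) * w t) ?_ ?_
      · intro t _
        have : HasDerivAt (fun t => (x - t) * H t + (6/7) * w t) _ t :=
          (((hasDerivAt_id t).const_sub x).mul (hH t)).add ((hd t).const_mul (6/7))
        refine this.congr_deriv ?_
        simp
        ring
      · have hHc0 : Continuous H := continuous_iff_continuousAt.2 fun s => (hH s).continuousAt
        apply Continuous.intervalIntegrable
        fun_prop
    have hHc0 : Continuous H := continuous_iff_continuousAt.2 fun s => (hH s).continuousAt
    have h4 : ∫ t in (0:ℝ)..x, (q-1) * ((x - t) * ((w t - 1) * w t ^ (-q))) ≤ 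
        ∫ t in (0:ℝ)..x, ((x - t) * H' t - H t + (6/7) * w' t) := by
      have := hcr (-q)
      apply intervalIntegral.integral_mono_on hx0
      · apply Continuous.intervalIntegrable
        fun_prop
      · apply Continuous.intervalIntegrable
        fun_prop
      · intro t ht
        have a1 : H t ≤ (6/7) * w' t := by
          simp only [H]
          have : 0 ≤ w t ^ (-m) := rpow_nonneg (hpos t).le _
          have := hnn t ht.1
          nlinarith
        have a2 := mul_le_mul_of_nonneg_left (hkey t) (sub_nonneg.2 ht.2)
        nlinarith
    rw [intervalIntegral.integral_const_mul, h3] at h4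
    have hH0 : H 0 = 0 := by simp [H, h0]
    rw [hH0, h0] at h4
    nlinarith


lemma profile (q : ℝ) (hq : 7 < q) (μ : ℝ) (hμ : 0 < μ) :
    ∃ ε > 0, ∃ om : ℝ → ℝ, Continuous om ∧ (∀ t, 1 ≤ om t) ∧
    (∃ c > 0, ∀ s, c * (1 + |s|) ≤ om s) ∧ (∀ s, om s ≤ 1 + |s|) ∧
    Integrable (fun y : E3 => (om (y 2) + ((y 0)^2 + (y 1)^2)) ^ (-(q-1))) ∧
    (ε * ∫ y : E3, (om (y 2) + ((y 0)^2 + (y 1)^2)) ^ (-(q-1)) ≤ μ) ∧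
    (∀ s : ℝ, Integrable (fun y : E3 => max (|s| - |y 2|) 0 * (om (y 2) + ((y 0)^2 + (y 1)^2)) ^ (-q)) ∧
      ε * ∫ y : E3, max (|s| - |y 2|) 0 * (om (y 2) + ((y 0)^2 + (y 1)^2)) ^ (-q) = om s - 1) ∧
    (∀ s : ℝ, Integrable (fun y : E3 => (max (|s| - |y 2|) 0 * (om (y 2) - 1)) * (om (y 2) + ((y 0)^2 + (y 1)^2)) ^ (-(q+1))) ∧
      q * (ε * ∫ y : E3, (max (|s| - |y 2|) 0 * (om (y 2) - 1)) * (om (y 2) + ((y 0)^2 + (y 1)^2)) ^ (-(q+1))) ≤ (6/7) * (om s - 1)) := by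
  obtain ⟨w, hc, h1, ⟨c, hc0, hcw⟩, hup, hW2, hW3⟩ := prof1 q hq
  have hpos : ∀ s, 0 < w s := fun s => by linarith [h1 s]
  have hcr : ∀ a : ℝ, Continuous (fun t => w t ^ a) := fun a =>
    hc.rpow_const (fun t => Or.inl (hpos t).ne')
  have hint : Integrable (fun t => w t ^ (2-q)) := by
    have h2 : Integrable (fun t : ℝ => c ^ (2-q) * (1 + ‖t‖) ^ (-(q-2))) := 
      (integrable_one_add_norm (by simp; linarith)).const_mul _
    refine h2.mono' (hcr _).aestronglyMeasurable (Eventually.of_forall fun t => ?_)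
    rw [norm_of_nonneg (rpow_nonneg (hpos t).le _)]
    have : -(q-2) = 2-q := by ring
    rw [this, ← mul_rpow hc0.le (by positivity)]
    exact rpow_le_rpow_of_nonpos (by positivity) (by simpa using hcw t) (by linarith)
  set I := ∫ t, w t ^ (2-q) with hI
  have hI0 : 0 ≤ I := integral_nonneg fun t => rpow_nonneg (hpos t).le _
  -- choose η
  obtain ⟨η, hη0, hη1, hημ⟩ : ∃ η : ℝ, 0 < η ∧ η ≤ 1 ∧ η * ((q-1)/(2*(q-2)) * I) ≤ μ := by
    set B := (q-1)/(2*(q-2)) * I with hB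
    have hB0 : 0 ≤ B := by
      have : 0 < q - 1 := by linarith
      have : 0 < q - 2 := by linarith
      positivity
    refine ⟨min 1 (μ/(B+1)), lt_min one_pos (by positivity), min_le_left _ _, ?_⟩
    calc min 1 (μ/(B+1)) * B ≤ (μ/(B+1)) * B := by gcongr; exact min_le_right _ _
      _ ≤ (μ/(B+1)) * (B+1) := by gcongr; linarith
      _ = μ := by field_simp
  set om : ℝ → ℝ := fun t => w (η * t) with hom
  have homc : Continuous om := by simp only [hom]; fun_prop
  have hom1 : ∀ t, 1 ≤ om t := fun t => h1 _
  have hompos : ∀ t, 0 < om t := fun t => hpos _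
  have homint : Integrable (fun t => om t ^ (2-q)) := hint.comp_mul_left' hη0.ne'
  have homcr : ∀ a : ℝ, Continuous (fun t => om t ^ a) := fun a =>
    homc.rpow_const (fun t => Or.inl (hompos t).ne')
  have hscale : ∀ (s : ℝ) (F : ℝ → ℝ), ∫ t, max (|η * s| - |t|) 0 * F t = 
      η^2 * ∫ t, max (|s| - |t|) 0 * F (η * t) := by
    intro s F
    have h2 := Measure.integral_comp_mul_left (fun t => max (|η * s| - |t|) 0 * F t) η
    rw [abs_of_pos (inv_pos.2 hη0)] at h2
    have h3 : ∀ t, max (|η * s| - |η * t|) 0 * F (η * t) = η * (max (|s| - |t|) 0 * F (η * t)) := by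
      intro t
      rw [abs_mul, abs_mul, abs_of_pos hη0, ← mul_sub]
      have : max (η * (|s| - |t|)) 0 = η * max (|s| - |t|) 0 := by
        rw [mul_max_of_nonneg _ _ hη0.le, mul_zero]
      rw [this]; ring
    simp only [h3] at h2
    rw [integral_const_mul, smul_eq_mul] at h2
    field_simp at h2
    linarith
  have hmaxle : ∀ s t : ℝ, max (|s| - |t|) 0 ≤ |s| := fun s t => 
    max_le (by linarith [abs_nonneg t]) (abs_nonneg s)
  have hmax0 : ∀ s t : ℝ, 0 ≤ max (|s| - |t|) 0 := fun s t => le_max_right _ _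
  have hrle : ∀ a b t : ℝ, a ≤ b → om t ^ a ≤ om t ^ b := fun a b t hab =>
    rpow_le_rpow_of_exponent_le (hom1 t) hab
  refine ⟨η^2 * (q-1) / (2*π), ?_, om, homc, hom1, ⟨c * η, by positivity, ?_⟩, ?_, ?_⟩
  · have : 0 < q - 1 := by linarith
    positivity
  · intro s
    refine le_trans ?_ (hcw (η * s))
    rw [abs_mul, abs_of_pos hη0, mul_assoc]
    gcongr
    nlinarith [abs_nonneg s]
  · intro s
    refine (hup _).trans ?_
    rw [abs_mul, abs_of_pos hη0]
    nlinarith [abs_nonneg s]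
  have A3 := int3 om (fun _ => 1) homc hom1 measurable_const (fun _ => zero_le_one) (q-1)
    (by linarith) (by convert homint using 2 with t; rw [one_mul]; congr 1; ring)
  simp only [one_mul] at A3
  refine ⟨A3.1, ?_, ?_, ?_⟩
  · rw [A3.2]
    have e1 : 1 - (q-1) = 2 - q := by ring
    have e2 := Measure.integral_comp_mul_left (fun t => w t ^ (2-q)) η
    rw [abs_of_pos (inv_pos.2 hη0), smul_eq_mul] at e2
    rw [e1]
    simp only [hom]
    rw [e2]
    refine le_trans (le_of_eq ?_) hημ
    rw [← hI]
    have : q - 1 - 1 ≠ 0 := by linarith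
    have : q - 2 ≠ 0 := by linarith
    have e3 : q - 1 - 1 = q - 2 := by ring
    rw [e3]
    field_simp
  · intro s
    have A := int3 om (fun t => max (|s| - |t|) 0) homc hom1 (by fun_prop) (hmax0 s) q
      (by linarith) (by
        refine (homint.const_mul |s|).mono' ?_ (Eventually.of_forall fun t => ?_)
        · have := homcr (1-q)
          apply Continuous.aestronglyMeasurable
          fun_prop
        · rw [norm_of_nonneg (mul_nonneg (hmax0 s t) (rpow_nonneg (hompos t).le _))]
          exact mul_le_mul (hmaxle s t) (hrle _ _ t (by linarith)) (rpow_nonneg (hompos t).le _) (abs_nonneg s))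
    refine ⟨A.1, ?_⟩
    simp only at A
    rw [A.2]
    have e := hW2 (η * s)
    rw [hscale s (fun t => w t ^ (1-q))] at e
    simp only [hom]
    rw [← e]
    have : q - 1 ≠ 0 := by linarith
    field_simp
  · intro s
    have A := int3 om (fun t => max (|s| - |t|) 0 * (om t - 1)) homc hom1 (by fun_prop) 
      (fun t => mul_nonneg (hmax0 s t) (by linarith [hom1 t])) (q+1)
      (by linarith) (by
        refine (homint.const_mul |s|).mono' ?_ (Eventually.of_forall fun t => ?_)
        · have := homcr (1-(q+1))
          apply Continuous.aestronglyMeasurable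
          fun_prop
        · rw [norm_of_nonneg (mul_nonneg (mul_nonneg (hmax0 s t) (by linarith [hom1 t])) (rpow_nonneg (hompos t).le _)), mul_assoc]
          apply mul_le_mul (hmaxle s t) _ (mul_nonneg (by linarith [hom1 t]) (rpow_nonneg (hompos t).le _)) (abs_nonneg s)
          calc (om t - 1) * om t ^ (1 - (q+1)) ≤ om t * om t ^ (1 - (q+1)) := by
                apply mul_le_mul_of_nonneg_right (by linarith) (rpow_nonneg (hompos t).le _)
            _ = om t ^ (1-q) := by
                rw [← rpow_one_add' (hompos t).le (by linarith)]
                congr 1; ring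
            _ ≤ _ := hrle _ _ t (by linarith))
    refine ⟨A.1, ?_⟩
    simp only at A
    rw [A.2]
    have e := hW3 (η * s)
    rw [hscale s (fun t => (w t - 1) * w t ^ (-q))] at e
    refine le_trans (le_of_eq ?_) e
    have e1 : 1 - (q+1) = -q := by ring
    have e2 : q + 1 - 1 = q := by ring
    simp only [hom]
    rw [e1, e2]
    simp only [mul_assoc]
    have : q ≠ 0 := by linarith
    field_simp


lemma norm_E3_sq (z : E3) : ‖z‖^2 = (z 0)^2 + (z 1)^2 + (z 2)^2 := by
  rw [EuclideanSpace.norm_sq_eq, Fin.sum_univ_three]; simp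

lemma abs_le_norm_E3 (z : E3) : |z 2| ≤ ‖z‖ := by
  refine abs_le_of_sq_le_sq ?_ (norm_nonneg z)
  rw [norm_E3_sq]; nlinarith [sq_nonneg (z 0), sq_nonneg (z 1)]

lemma norm_E3_le (z : E3) : ‖z‖ ≤ |z 2| + (|z 0| + |z 1|) := by
  apply le_of_sq_le_sq _ (by positivity)
  rw [norm_E3_sq]
  have := abs_nonneg (z 0); have := abs_nonneg (z 1); have := abs_nonneg (z 2)
  nlinarith [sq_abs (z 0), sq_abs (z 1), sq_abs (z 2), mul_nonneg (abs_nonneg (z 0)) (abs_nonneg (z 1)),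
    mul_nonneg (abs_nonneg (z 0)) (abs_nonneg (z 2)), mul_nonneg (abs_nonneg (z 2)) (abs_nonneg (z 1))]

noncomputable def kk (x y : E3) : ℝ := (‖x - y‖ + ‖x + y‖) / 2 - ‖y‖

lemma max_id (a b : ℝ) : max (|a| - |b|) 0 = (|a - b| + |a + b|) / 2 - |b| := by
  rcases le_total 0 a with ha | ha <;> rcases le_total 0 b with hb | hb <;>
  rcases le_total 0 (a-b) with h1 | h1 <;> rcases le_total 0 (a+b) with h2 | h2 <;>
  simp only [abs_of_nonneg, abs_of_nonpos, ha, hb, h1, h2] <;>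
  first
  | (rw [max_eq_left (by linarith)]; linarith)
  | (rw [max_eq_right (by linarith)]; linarith)

lemma kk_sub (x y : E3) : |kk x y - max (|x 2| - |y 2|) 0| ≤ (1 + (|x 0| + |x 1|)) * (1 + (|y 0| + |y 1|)) := by
  rw [max_id, kk]
  have a1 := abs_le_norm_E3 (x - y)
  have a2 := abs_le_norm_E3 (x + y)
  have a3 := abs_le_norm_E3 y
  have b1 := norm_E3_le (x - y)
  have b2 := norm_E3_le (x + y)
  have b3 := norm_E3_le y
  simp only [PiLp.sub_apply, PiLp.add_apply] at a1 a2 b1 b2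
  have c1 := abs_sub (x 0) (y 0); have c2 := abs_sub (x 1) (y 1)
  have c3 := abs_add_le (x 0) (y 0); have c4 := abs_add_le (x 1) (y 1)
  have d1 := abs_nonneg (x 0); have d2 := abs_nonneg (x 1)
  have d3 := abs_nonneg (y 0); have d4 := abs_nonneg (y 1)
  have : |x 0| + |x 1| + (|y 0| + |y 1|) ≤ (1 + (|x 0| + |x 1|)) * (1 + (|y 0| + |y 1|)) := by
    nlinarith [mul_nonneg (add_nonneg d1 d2) (add_nonneg d3 d4)]
  rw [abs_le]
  constructor <;> linarith

lemma kk_lip (x x' y : E3) : |kk x y - kk x' y| ≤ ‖x - x'‖ := by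
  have h1 := abs_norm_sub_norm_le (x - y) (x' - y)
  have h2 := abs_norm_sub_norm_le (x + y) (x' + y)
  have e1 : x - y - (x' - y) = x - x' := by abel
  have e2 : x + y - (x' + y) = x - x' := by abel
  rw [e1] at h1; rw [e2] at h2
  rw [abs_le] at *
  simp only [kk]
  constructor <;> linarith [h1.1, h1.2, h2.1, h2.2]

lemma kk_zero (y : E3) : kk 0 y = 0 := by simp [kk]

lemma kk_le (x y : E3) : |kk x y| ≤ ‖x‖ := by
  have := kk_lip x 0 y
  simpa [kk_zero] using this

lemma kk_neg (x y : E3) : kk (-x) y = kk x y := by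
  simp only [kk]
  have e1 : -x - y = -(x + y) := by abel
  have e2 : -x + y = -(x - y) := by abel
  rw [e1, e2, norm_neg, norm_neg]; ring

lemma rpow_lip (q m a b : ℝ) (hq : 0 < q) (hm : 0 < m) (ha : m ≤ a) (hb : m ≤ b) :
    |a ^ (-q) - b ^ (-q)| ≤ q * m ^ (-(q+1)) * |a - b| := by
  have := Convex.norm_image_sub_le_of_norm_hasDerivWithin_le (f := fun x : ℝ => x ^ (-q))
    (f' := fun x => (-q) * x ^ (-q-1)) (s := Set.Ici m) (C := q * m ^ (-(q+1))) (x := b) (y := a)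
    (fun x hx => by
      have hx : m ≤ x := hx
      have := Real.hasDerivAt_rpow_const (x := x) (p := -q) (Or.inl (by linarith))
      exact this.hasDerivWithinAt)
    (fun x hx => by
      have hx : m ≤ x := hx
      have hx0 : 0 < x := by linarith
      rw [norm_mul, norm_neg, norm_of_nonneg hq.le, norm_of_nonneg (rpow_nonneg hx0.le _)]
      have e : -(q+1) = -q-1 := by ring
      rw [e]
      gcongr ?_ * ?_
      exact rpow_le_rpow_of_nonpos hm hx (by linarith))
    (convex_Ici m) hb ha
  simpa using this

lemma choose_theta (q : ℝ) : ∃ θ : ℝ, 0 < θ ∧ θ < 1 ∧ (1-θ) ^ (-(q+1)) ≤ 27/26 := by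
  have h : Tendsto (fun θ : ℝ => (1-θ) ^ (-(q+1))) (𝓝[>] 0) (𝓝 1) := by
    have : ContinuousAt (fun θ : ℝ => (1-θ) ^ (-(q+1))) 0 := by
      apply ContinuousAt.rpow_const
      · fun_prop
      · left; norm_num
    have h2 := this.tendsto
    simp only [sub_zero, one_rpow] at h2
    exact h2.mono_left nhdsWithin_le_nhds
  have h1 := h.eventually (eventually_le_nhds (show (1:ℝ) < 27/26 by norm_num))
  have h2 : ∀ᶠ θ : ℝ in 𝓝[>] 0, θ < 1 := 
    nhdsWithin_le_nhds (eventually_lt_nhds (show (0:ℝ) < 1 by norm_num))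
  have h3 : ∀ᶠ θ : ℝ in 𝓝[>] 0, 0 < θ := eventually_mem_nhdsWithin
  obtain ⟨θ, a, b, c⟩ := (h1.and (h2.and h3)).exists
  exact ⟨θ, c, b, a⟩

open scoped BoundedContinuousFunction

set_option maxHeartbeats 2000000 in
lemma fixedpt (q : ℝ) (hq : 7 < q) : ∃ ε > 0, ∃ u : E3 → ℝ, Continuous u ∧
    (∃ c > 0, ∀ x, c * (1 + ‖x‖) ≤ u x) ∧
    (∃ C, ∀ x, |u x - ((x 0)^2 + (x 1)^2)| ≤ C * (1 + ‖x‖)) ∧ (∀ x, u (-x) = u x) ∧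
    ∀ x, u x = 1 + ((x 0)^2 + (x 1)^2) + ε * ∫ y, kk x y * (u y) ^ (-q) := by
  obtain ⟨θ, hθ0, hθ1, hB⟩ := choose_theta q
  set B := (1-θ) ^ (-(q+1)) with hBdef
  have hB0 : 0 < B := rpow_pos_of_pos (by linarith) _
  set δ : ℝ := 1 / (28 * q) with hδ
  have hq0 : 0 < q := by linarith
  have hδ0 : 0 < δ := by positivity
  have hδq : q * δ = 1/28 := by rw [hδ]; field_simp
  have hδ1 : δ ≤ 1/2 := by nlinarith
  obtain ⟨ε, hε, om, homc, hom1, ⟨c, hc0, hcom⟩, homup, hI0, hI, hA1, hA2⟩ := 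
    profile q hq (θ * δ / (112 * q)) (by positivity)
  set W : E3 → ℝ := fun y => om (y 2) + ((y 0)^2 + (y 1)^2) with hW
  set g : E3 → ℝ := fun y => δ * (1 + (|y 0| + |y 1|)) + (om (y 2) - 1) with hg
  have hWc : Continuous W := by simp only [hW]; fun_prop
  have hgc : Continuous g := by simp only [hg]; fun_prop
  have hW1 : ∀ y, 1 ≤ W y := fun y => by
    simp only [hW]; nlinarith [hom1 (y 2), sq_nonneg (y 0), sq_nonneg (y 1)]
  have hW0 : ∀ y, 0 < W y := fun y => by linarith [hW1 y]
  have hg0 : ∀ y, 0 < g y := fun y => by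
    have : 0 < δ * (1 + (|y 0| + |y 1|)) := by positivity
    simp only [hg]; linarith [hom1 (y 2)]
  have hrW : ∀ y : E3, 1 + (|y 0| + |y 1|) ≤ 2 * (1 + ((y 0)^2 + (y 1)^2)) := fun y => by
    nlinarith [sq_nonneg (|y 0| - 1), sq_nonneg (|y 1| - 1), sq_abs (y 0), sq_abs (y 1)]
  have hr0 : ∀ y : E3, 1 ≤ 1 + (|y 0| + |y 1|) := fun y => by
    linarith [abs_nonneg (y 0), abs_nonneg (y 1)]
  have hrW' : ∀ y : E3, 1 + (|y 0| + |y 1|) ≤ 2 * W y := fun y => by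
    simp only [hW]; linarith [hrW y, hom1 (y 2)]
  have hgW : ∀ y, g y ≤ W y := fun y => by
    simp only [hg, hW]; nlinarith [hrW y, hr0 y]
  have hWr : ∀ (a : ℝ) y, 0 < W y ^ a := fun a y => rpow_pos_of_pos (hW0 y) _
  have hWrc : ∀ a : ℝ, Continuous (fun y => W y ^ a) := fun a =>
    hWc.rpow_const (fun t => Or.inl (hW0 t).ne')
  have hWq : ∀ y, W y ^ (-(q-1)) = W y * W y ^ (-q) := fun y => by
    rw [← rpow_one_add' (hW0 y).le (by linarith)]; congr 1; ring
  have hWq1 : ∀ y, W y ^ (-q) = W y * W y ^ (-(q+1)) := fun y => by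
    rw [← rpow_one_add' (hW0 y).le (by linarith)]; congr 1; ring
  have hIq : Integrable (fun y => W y ^ (-q)) := by
    refine hI0.mono' (hWrc _).aestronglyMeasurable (Eventually.of_forall fun y => ?_)
    rw [norm_of_nonneg (hWr _ y).le]
    exact rpow_le_rpow_of_exponent_le (hW1 y) (by linarith)
  -- the nonlinear map
  set U : (E3 →ᵇ ℝ) → E3 → ℝ := fun h y => W y + g y * h y with hU
  have hUc : ∀ h, Continuous (U h) := fun h => by simp only [hU]; fun_prop
  have hUlow : ∀ h : E3 →ᵇ ℝ, ‖h‖ ≤ θ → ∀ y, (1-θ) * W y ≤ U h y := by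
    intro h hh y
    have h1 : |h y| ≤ θ := (h.norm_coe_le_norm y).trans hh
    have h2 := (abs_le.1 h1).1
    simp only [hU]
    nlinarith [hg0 y, hgW y]
  have hmW : ∀ y, 0 < (1-θ) * W y := fun y => mul_pos (by linarith) (hW0 y)
  have hUpos : ∀ h : E3 →ᵇ ℝ, ‖h‖ ≤ θ → ∀ y, 0 < U h y := fun h hh y => 
    (hmW y).trans_le (hUlow h hh y)
  have hfc : ∀ h : E3 →ᵇ ℝ, ‖h‖ ≤ θ → Continuous (fun y => U h y ^ (-q)) := fun h hh =>
    (hUc h).rpow_const (fun t => Or.inl (hUpos h hh t).ne')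
  have hfi : ∀ h : E3 →ᵇ ℝ, ‖h‖ ≤ θ → Integrable (fun y => U h y ^ (-q)) := by
    intro h hh
    refine (hIq.const_mul ((1-θ)^(-q))).mono' (hfc h hh).aestronglyMeasurable (Eventually.of_forall fun y => ?_)
    rw [norm_of_nonneg (rpow_nonneg (hUpos h hh y).le _), ← mul_rpow (by linarith) (hW0 y).le]
    exact rpow_le_rpow_of_nonpos (hmW y) (hUlow h hh y) (by linarith)
  have hkc : ∀ x, Continuous (fun y => kk x y) := fun x => by unfold kk; fun_prop
  have hkfi : ∀ h : E3 →ᵇ ℝ, ‖h‖ ≤ θ → ∀ x, Integrable (fun y => kk x y * U h y ^ (-q)) := by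
    intro h hh x
    exact (hfi h hh).bdd_mul (hkc x).aestronglyMeasurable (Eventually.of_forall fun y => kk_le x y)
  set T : (E3 →ᵇ ℝ) → E3 → ℝ := fun h x => ε * ∫ y, kk x y * U h y ^ (-q) with hT
  have hTlip : ∀ h : E3 →ᵇ ℝ, ‖h‖ ≤ θ → ∀ x x', |T h x - T h x'| ≤ (ε * ∫ y, U h y ^ (-q)) * ‖x - x'‖ := by
    intro h hh x x'
    simp only [hT]
    rw [← mul_sub, ← integral_sub (hkfi h hh x) (hkfi h hh x'), abs_mul, abs_of_pos hε, mul_assoc]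
    gcongr
    rw [← integral_mul_const]
    rw [← Real.norm_eq_abs]
    refine norm_integral_le_of_norm_le ((hfi h hh).mul_const _) (Eventually.of_forall fun y => ?_)
    have := rpow_nonneg (hUpos h hh y).le (-q)
    rw [← sub_mul, norm_mul, norm_of_nonneg this, mul_comm]
    gcongr
    exact kk_lip x x' y
  have hTc : ∀ h : E3 →ᵇ ℝ, ‖h‖ ≤ θ → Continuous (T h) := by
    intro h hh
    have : LipschitzWith (Real.toNNReal (ε * ∫ y, U h y ^ (-q))) (T h) := by
      apply LipschitzWith.of_dist_le_mul
      intro x x'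
      rw [Real.dist_eq, dist_eq_norm, Real.coe_toNNReal _ (mul_nonneg hε.le (integral_nonneg fun y => rpow_nonneg (hUpos h hh y).le _))]
      exact hTlip h hh x x'
    exact this.continuous
  -- L1
  have hL1 : ∀ h h' : E3 →ᵇ ℝ, ‖h‖ ≤ θ → ‖h'‖ ≤ θ → ∀ x, |T h x - T h' x| ≤ (27/28) * ‖h - h'‖ * g x := by
    intro h h' hh hh' x
    set D := ‖h - h'‖ with hD
    have hD0 : 0 ≤ D := norm_nonneg _
    obtain ⟨i1, e1⟩ := hA1 (x 2)
    obtain ⟨i2, e2⟩ := hA2 (x 2)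
    set k0 : E3 → ℝ := fun y => max (|x 2| - |y 2|) 0 with hk0
    have hk00 : ∀ y, 0 ≤ k0 y := fun y => le_max_right _ _
    set R := 1 + (|x 0| + |x 1|) with hR
    have hR0 : 0 < R := by positivity
    have hbd : ∀ y, ‖kk x y * U h y ^ (-q) - kk x y * U h' y ^ (-q)‖ ≤ 
        (q * B * D) * (k0 y * (om (y 2) - 1) * W y ^ (-(q+1)) + (2 * δ) * (k0 y * W y ^ (-q)) + 
          (2 * R) * W y ^ (-(q-1))) := by
      intro y
      rw [← mul_sub, norm_mul]
      have hf : ‖U h y ^ (-q) - U h' y ^ (-q)‖ ≤ q * (B * W y ^ (-(q+1))) * (g y * D) := by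
        have := rpow_lip q _ (U h y) (U h' y) hq0 (hmW y) (hUlow h hh y) (hUlow h' hh' y)
        refine this.trans ?_
        rw [mul_rpow (by linarith) (hW0 y).le, ← hBdef]
        have := hWr (-(q+1)) y
        gcongr
        have e : U h y - U h' y = g y * ((h - h') y) := by simp only [hU]; simp; ring
        rw [e, abs_mul, abs_of_pos (hg0 y)]
        have := hg0 y
        gcongr
        exact (h - h').norm_coe_le_norm y
      have hk : ‖kk x y‖ ≤ k0 y + R * (1 + (|y 0| + |y 1|)) := by
        have := kk_sub x y
        have h2 := abs_sub_abs_le_abs_sub (kk x y) (k0 y)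
        rw [abs_of_nonneg (hk00 y)] at h2
        rw [Real.norm_eq_abs]
        linarith
      have hw := hWr (-(q+1)) y
      have hgp := hg0 y
      have hwp := hW0 y
      calc ‖kk x y‖ * ‖U h y ^ (-q) - U h' y ^ (-q)‖ 
          ≤ (k0 y + R * (1 + (|y 0| + |y 1|))) * (q * (B * W y ^ (-(q+1))) * (g y * D)) := by
            have := hk00 y
            gcongr
        _ = (q * B * D) * (k0 y * g y * W y ^ (-(q+1)) + R * ((1 + (|y 0| + |y 1|)) * (g y * W y ^ (-(q+1))))) := by ring
        _ ≤ (q * B * D) * ((k0 y * (om (y 2) - 1) * W y ^ (-(q+1)) + (2 * δ) * (k0 y * W y ^ (-q))) + 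
          R * (2 * W y * (W y * W y ^ (-(q+1))))) := by
            gcongr
            · have e3 : k0 y * (om (y 2) - 1) * W y ^ (-(q+1)) + (2 * δ) * (k0 y * W y ^ (-q)) = 
                k0 y * (om (y 2) - 1 + δ * (2 * W y)) * W y ^ (-(q+1)) := by
                rw [hWq1 y]; ring
              rw [e3]
              have := hk00 y
              have := hrW' y
              have : g y ≤ om (y 2) - 1 + δ * (2 * W y) := by
                simp only [hg]
                have := mul_le_mul_of_nonneg_left this hδ0.le
                linarith
              gcongr
            · exact hrW' y
            · exact hgW y
        _ = _ := by
            rw [← hWq1, mul_assoc 2 (W y), ← hWq]; ring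
    have i1' : Integrable (fun y : E3 => k0 y * W y ^ (-q)) := i1
    have i2' : Integrable (fun y : E3 => k0 y * (om (y 2) - 1) * W y ^ (-(q+1))) := i2
    have i0' : Integrable (fun y : E3 => W y ^ (-(q-1))) := hI0
    have e1' : ε * ∫ y : E3, k0 y * W y ^ (-q) = om (x 2) - 1 := e1
    have e2' : q * (ε * ∫ y : E3, k0 y * (om (y 2) - 1) * W y ^ (-(q+1))) ≤ (6/7) * (om (x 2) - 1) := e2
    have e0' : ε * ∫ y : E3, W y ^ (-(q-1)) ≤ θ * δ / (112 * q) := hI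
    have i12 : Integrable (fun y : E3 => k0 y * (om (y 2) - 1) * W y ^ (-(q+1)) + 2*δ*(k0 y * W y ^ (-q))) :=
      i2'.add (i1'.const_mul (2*δ))
    have i123 : Integrable (fun y : E3 => (q * B * D) * (k0 y * (om (y 2) - 1) * W y ^ (-(q+1)) + 2*δ*(k0 y * W y ^ (-q)) + (2*R) * W y ^ (-(q-1)))) :=
      (i12.add (i0'.const_mul (2*R))).const_mul (q*B*D)
    have hint := norm_integral_le_of_norm_le i123 (Eventually.of_forall hbd)
    rw [integral_const_mul, integral_add i12 (i0'.const_mul (2*R)),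
      integral_add i2' (i1'.const_mul (2*δ)), integral_const_mul, integral_const_mul] at hint
    simp only [hT]
    rw [← mul_sub, ← integral_sub (hkfi h hh x) (hkfi h' hh' x), abs_mul, abs_of_pos hε]
    rw [Real.norm_eq_abs] at hint
    refine (mul_le_mul_of_nonneg_left hint hε.le).trans ?_
    set J2 := ∫ y : E3, k0 y * (om (y 2) - 1) * W y ^ (-(q+1))
    set J1 := ∫ y : E3, k0 y * W y ^ (-q)
    set J0 := ∫ y : E3, W y ^ (-(q-1))
    set v := om (x 2) - 1 with hv
    have hv0 : 0 ≤ v := by linarith [hom1 (x 2)]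
    calc ε * (q * B * D * (J2 + 2 * δ * J1 + 2 * R * J0)) 
        = B * D * (q * (ε * J2) + 2 * (q * δ) * (ε * J1) + 2 * R * (q * (ε * J0))) := by ring
      _ ≤ (27/26) * D * ((6/7) * v + 2 * (1/28) * v + 2 * R * (q * (θ * δ / (112 * q)))) := by
          rw [hδq, e1']
          have : 0 ≤ J0 := integral_nonneg fun y => (hWr _ y).le
          have : 0 ≤ J2 := integral_nonneg fun y => mul_nonneg (mul_nonneg (hk00 y) (by linarith [hom1 (y 2)])) (hWr _ y).le
          gcongr
      _ = (27/26) * D * ((26/28) * v + R * (θ * δ / 56)) := by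
          congr 1
          field_simp
          ring
      _ ≤ (27/28) * D * g x := by
          have : g x = δ * R + v := rfl
          rw [this]
          have h5 : R * (θ * δ / 56) ≤ (26/28) * (δ * R) := by
            have : 0 < δ * R := by positivity
            nlinarith
          calc (27/26) * D * ((26/28) * v + R * (θ * δ / 56)) ≤ (27/26) * D * ((26/28) * v + (26/28) * (δ * R)) := by gcongr
            _ = _ := by ring
  -- L2
  have hz : ‖(0 : E3 →ᵇ ℝ)‖ ≤ θ := by simpa using hθ0.le
  have hL2 : ∀ x, |T 0 x - (om (x 2) - 1)| ≤ (1/28) * θ * g x := by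
    intro x
    obtain ⟨i1, e1⟩ := hA1 (x 2)
    set k0 : E3 → ℝ := fun y => max (|x 2| - |y 2|) 0 with hk0
    have i1' : Integrable (fun y : E3 => k0 y * W y ^ (-q)) := i1
    have i0' : Integrable (fun y : E3 => W y ^ (-(q-1))) := hI0
    have e1' : ε * ∫ y : E3, k0 y * W y ^ (-q) = om (x 2) - 1 := e1
    have e0' : ε * ∫ y : E3, W y ^ (-(q-1)) ≤ θ * δ / (112 * q) := hI
    have hU0 : ∀ y, U 0 y = W y := fun y => by simp [hU]
    set R := 1 + (|x 0| + |x 1|) with hR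
    have hR0 : 0 < R := by positivity
    have hi0 := hkfi 0 hz x
    simp only [hU0] at hi0
    simp only [hT, hU0]
    rw [← e1', ← mul_sub, ← integral_sub hi0 i1', abs_mul, abs_of_pos hε]
    have hbd : ∀ y, ‖kk x y * W y ^ (-q) - k0 y * W y ^ (-q)‖ ≤ (2 * R) * W y ^ (-(q-1)) := by
      intro y
      have hw := hWr (-q) y
      rw [← sub_mul, norm_mul, norm_of_nonneg hw.le, hWq y]
      calc ‖kk x y - k0 y‖ * W y ^ (-q) ≤ (R * (2 * W y)) * W y ^ (-q) := by
            gcongr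
            refine (kk_sub x y).trans ?_
            gcongr
            exact hrW' y
        _ = _ := by ring
    have hint := norm_integral_le_of_norm_le (i0'.const_mul (2*R)) (Eventually.of_forall hbd)
    rw [integral_const_mul, Real.norm_eq_abs] at hint
    refine (mul_le_mul_of_nonneg_left hint hε.le).trans ?_
    set J0 := ∫ y : E3, W y ^ (-(q-1))
    calc ε * (2 * R * J0) = 2 * R * (ε * J0) := by ring
      _ ≤ 2 * R * (θ * δ / (112 * q)) := by gcongr
      _ ≤ (1/28) * θ * (δ * R) := by
          have : θ * δ / (112 * q) ≤ θ * δ / 56 := by gcongr; linarith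
          calc 2 * R * (θ * δ / (112 * q)) ≤ 2 * R * (θ * δ / 56) := by gcongr
            _ = _ := by ring
      _ ≤ (1/28) * θ * g x := by
          gcongr
          have : g x = δ * R + (om (x 2) - 1) := rfl
          linarith [hom1 (x 2)]
  have hL3 : ∀ h : E3 →ᵇ ℝ, ‖h‖ ≤ θ → ∀ x, |T h x - (om (x 2) - 1)| ≤ θ * g x := by
    intro h hh x
    have h1 := hL1 h 0 hh hz x
    have h2 := hL2 x
    rw [sub_zero] at h1
    have h3 := abs_sub_le (T h x) (T 0 x) (om (x 2) - 1)
    have h4 : (27/28) * ‖h‖ * g x ≤ (27/28) * θ * g x := by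
      have := hg0 x
      gcongr
    nlinarith
  -- the contraction
  let X := {h : E3 →ᵇ ℝ // ‖h‖ ≤ θ}
  have hXc : IsClosed {h : E3 →ᵇ ℝ | ‖h‖ ≤ θ} := isClosed_le continuous_norm continuous_const
  have : CompleteSpace X := hXc.completeSpace_coe
  have : Nonempty X := ⟨⟨0, hz⟩⟩
  have hNb : ∀ h : X, ∀ x, ‖(T h.1 x - (om (x 2) - 1)) / g x‖ ≤ θ := by
    intro h x
    rw [norm_div, norm_of_nonneg (hg0 x).le, div_le_iff₀ (hg0 x)]
    exact hL3 h.1 h.2 x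
  have hNc : ∀ h : X, Continuous (fun x => (T h.1 x - (om (x 2) - 1)) / g x) := by
    intro h
    have := hTc h.1 h.2
    exact Continuous.div (by fun_prop) hgc (fun x => (hg0 x).ne')
  let N : X → X := fun h => ⟨BoundedContinuousFunction.ofNormedAddCommGroup _ (hNc h) θ (hNb h),
    BoundedContinuousFunction.norm_ofNormedAddCommGroup_le _ hθ0.le (hNb h)⟩
  have hN : ContractingWith (27/28) N := by
    constructor
    · rw [← NNReal.coe_lt_coe]; norm_num
    · apply LipschitzWith.of_dist_le_mul
      intro h h'
      rw [Subtype.dist_eq, Subtype.dist_eq, BoundedContinuousFunction.dist_le (by positivity)]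
      intro x
      simp only [N, BoundedContinuousFunction.coe_ofNormedAddCommGroup]
      rw [Real.dist_eq, ← sub_div, abs_div, abs_of_pos (hg0 x), div_le_iff₀ (hg0 x)]
      have := hL1 h.1 h'.1 h.2 h'.2 x
      rw [sub_sub_sub_cancel_right, dist_eq_norm]
      simpa using this
  obtain ⟨⟨h, hh⟩, hfix⟩ : ∃ h : X, N h = h := ⟨_, hN.fixedPoint_isFixedPt⟩
  have hfix' : ∀ x, T h x = om (x 2) - 1 + g x * h x := by
    intro x
    have h1 := congrArg (fun k : X => k.1 x) hfix
    simp only [N, BoundedContinuousFunction.coe_ofNormedAddCommGroup] at h1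
    rw [div_eq_iff (hg0 x).ne'] at h1
    linarith
  have hUT : ∀ x, U h x = 1 + ((x 0)^2 + (x 1)^2) + T h x := by
    intro x
    rw [hfix' x]
    simp only [hU, hW]; ring
  have hT0 : T h 0 = 0 := by simp [hT, kk_zero]
  refine ⟨ε, hε, U h, hUc h, ⟨(1-θ) * (min c (1/2) / 2), ?_, ?_⟩, ⟨1 + ε * ∫ y, U h y ^ (-q), ?_⟩, ?_, hUT⟩
  · have : 0 < min c (1/2) := lt_min hc0 (by norm_num)
    have : 0 < 1 - θ := by linarith
    positivity
  · intro x
    refine le_trans ?_ (hUlow h hh x)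
    rw [mul_assoc]
    have : 0 < 1 - θ := by linarith
    gcongr
    have h1 : min c (1/2) ≤ c := min_le_left _ _
    have h2 : min c (1/2) ≤ 1/2 := min_le_right _ _
    have h3 := hcom (x 2)
    have h4 := norm_E3_le x
    have h5 := hrW' x
    have h6 : om (x 2) ≤ W x := by simp only [hW]; nlinarith [sq_nonneg (x 0), sq_nonneg (x 1)]
    have h7 : min c (1/2) * (1 + |x 2|) ≤ W x := by
      have : min c (1/2) * (1 + |x 2|) ≤ c * (1 + |x 2|) := by gcongr
      linarith
    have h8 : min c (1/2) * (1 + (|x 0| + |x 1|)) ≤ W x := by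
      have : min c (1/2) * (1 + (|x 0| + |x 1|)) ≤ (1/2) * (1 + (|x 0| + |x 1|)) := by gcongr
      linarith
    have h9 : 0 < min c (1/2) := lt_min hc0 (by norm_num)
    have := mul_le_mul_of_nonneg_left h4 h9.le
    nlinarith
  · intro x
    have h1 := hTlip h hh x 0
    rw [hT0, sub_zero, sub_zero] at h1
    have h2 : U h x - ((x 0)^2 + (x 1)^2) = 1 + T h x := by rw [hUT x]; ring
    rw [h2]
    have h3 := abs_add_le 1 (T h x)
    rw [abs_one] at h3
    have h4 : 0 ≤ ε * ∫ y, U h y ^ (-q) := mul_nonneg hε.le (integral_nonneg fun y => rpow_nonneg (hUpos h hh y).le _)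
    nlinarith [norm_nonneg x]
  · intro x
    rw [hUT, hUT]
    simp only [hT, kk_neg, PiLp.neg_apply, neg_sq]


noncomputable def pd (i : Fin 3) (f : E3 → ℝ) : E3 → ℝ := fun x => fderiv ℝ f x (EuclideanSpace.single i 1)

def Reg (a : ℝ) : ℕ → (E3 → ℝ) → Prop
  | 0, f => Continuous f ∧ ∃ C, 0 ≤ C ∧ ∀ x, |f x| ≤ C * (1 + ‖x‖) ^ a
  | n+1, f => Differentiable ℝ f ∧ (∃ C, 0 ≤ C ∧ ∀ x, |f x| ≤ C * (1 + ‖x‖) ^ a) ∧ ∀ i, Reg a n (pd i f)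

lemma one_le_nn (x : E3) : 1 ≤ 1 + ‖x‖ := by linarith [norm_nonneg x]
lemma nn_pos (x : E3) : 0 < 1 + ‖x‖ := by linarith [norm_nonneg x]

lemma Reg.bound {a : ℝ} {n : ℕ} {f : E3 → ℝ} (h : Reg a n f) : ∃ C, 0 ≤ C ∧ ∀ x, |f x| ≤ C * (1 + ‖x‖) ^ a := by
  cases n with
  | zero => exact h.2
  | succ n => exact h.2.1

lemma Reg.cont {a : ℝ} {n : ℕ} {f : E3 → ℝ} (h : Reg a n f) : Continuous f := by
  cases n with
  | zero => exact h.1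
  | succ n => exact h.1.continuous

lemma Reg.down {a : ℝ} {n : ℕ} : ∀ {f : E3 → ℝ}, Reg a (n+1) f → Reg a n f := by
  induction n with
  | zero => intro f h; exact ⟨h.cont, h.bound⟩
  | succ n ih => intro f h; exact ⟨h.1, h.2.1, fun i => ih (h.2.2 i)⟩

lemma Reg.down' {a : ℝ} {n m : ℕ} (hnm : m ≤ n) {f : E3 → ℝ} (h : Reg a n f) : Reg a m f := by
  induction n, hnm using Nat.le_induction with
  | base => exact h
  | succ n hmn ih => exact ih h.down

lemma bd_mono {a b : ℝ} (hab : a ≤ b) {f : E3 → ℝ} (h : ∃ C, 0 ≤ C ∧ ∀ x, |f x| ≤ C * (1 + ‖x‖) ^ a) :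
    ∃ C, 0 ≤ C ∧ ∀ x, |f x| ≤ C * (1 + ‖x‖) ^ b := by
  obtain ⟨C, hC, h⟩ := h
  refine ⟨C, hC, fun x => (h x).trans ?_⟩
  gcongr
  exact one_le_nn x

lemma Reg.mono {a b : ℝ} (hab : a ≤ b) {n : ℕ} : ∀ {f : E3 → ℝ}, Reg a n f → Reg b n f := by
  induction n with
  | zero => intro f h; exact ⟨h.1, bd_mono hab h.2⟩
  | succ n ih => intro f h; exact ⟨h.1, bd_mono hab h.2.1, fun i => ih (h.2.2 i)⟩

lemma bd_add {a : ℝ} {f g : E3 → ℝ} (h : ∃ C, 0 ≤ C ∧ ∀ x, |f x| ≤ C * (1 + ‖x‖) ^ a)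
    (h' : ∃ C, 0 ≤ C ∧ ∀ x, |g x| ≤ C * (1 + ‖x‖) ^ a) :
    ∃ C, 0 ≤ C ∧ ∀ x, |f x + g x| ≤ C * (1 + ‖x‖) ^ a := by
  obtain ⟨C, hC, h⟩ := h
  obtain ⟨C', hC', h'⟩ := h'
  refine ⟨C + C', by positivity, fun x => (abs_add_le _ _).trans ?_⟩
  rw [add_mul]; exact add_le_add (h x) (h' x)

lemma bd_mul {a b : ℝ} {f g : E3 → ℝ} (h : ∃ C, 0 ≤ C ∧ ∀ x, |f x| ≤ C * (1 + ‖x‖) ^ a)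
    (h' : ∃ C, 0 ≤ C ∧ ∀ x, |g x| ≤ C * (1 + ‖x‖) ^ b) :
    ∃ C, 0 ≤ C ∧ ∀ x, |f x * g x| ≤ C * (1 + ‖x‖) ^ (a + b) := by
  obtain ⟨C, hC, h⟩ := h
  obtain ⟨C', hC', h'⟩ := h'
  refine ⟨C * C', by positivity, fun x => ?_⟩
  rw [abs_mul, rpow_add (nn_pos x)]
  have := rpow_nonneg (nn_pos x).le a
  calc |f x| * |g x| ≤ (C * (1 + ‖x‖) ^ a) * (C' * (1 + ‖x‖) ^ b) := by
        gcongr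
        exacts [h x, h' x]
    _ = _ := by ring

lemma pd_add {f g : E3 → ℝ} (hf : Differentiable ℝ f) (hg : Differentiable ℝ g) (i : Fin 3) :
    pd i (fun x => f x + g x) = fun x => pd i f x + pd i g x := by
  funext x; simp only [pd]; rw [fderiv_fun_add (hf x) (hg x)]; rfl

lemma pd_mul {f g : E3 → ℝ} (hf : Differentiable ℝ f) (hg : Differentiable ℝ g) (i : Fin 3) :
    pd i (fun x => f x * g x) = fun x => pd i f x * g x + f x * pd i g x := by
  funext x; simp only [pd]; rw [fderiv_fun_mul (hf x) (hg x)]; simp; ring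

lemma pd_const_mul {f : E3 → ℝ} (hf : Differentiable ℝ f) (c : ℝ) (i : Fin 3) :
    pd i (fun x => c * f x) = fun x => c * pd i f x := by
  funext x; simp only [pd]; rw [fderiv_const_mul (hf x)]; simp

lemma pd_const (c : ℝ) (i : Fin 3) : pd i (fun _ => c) = fun _ => 0 := by
  funext x; simp [pd]

lemma hasFD_coord (j : Fin 3) (x : E3) : HasFDerivAt (fun x : E3 => x j) (EuclideanSpace.proj j : E3 →L[ℝ] ℝ) x :=
  (EuclideanSpace.proj j : E3 →L[ℝ] ℝ).hasFDerivAt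

lemma pd_coord (i j : Fin 3) : pd i (fun x => x j) = fun _ => if j = i then 1 else 0 := by
  funext x; simp only [pd]; rw [(hasFD_coord j x).fderiv]; simp [Pi.single_apply]

lemma diff_coord (j : Fin 3) : Differentiable ℝ (fun x : E3 => x j) := fun x => (hasFD_coord j x).differentiableAt

lemma pd_rpow {f : E3 → ℝ} (hf : Differentiable ℝ f) (h0 : ∀ x, 0 < f x) (s : ℝ) (i : Fin 3) :
    pd i (fun x => f x ^ s) = fun x => s * (f x ^ (s - 1) * pd i f x) := by
  funext x; simp only [pd]
  rw [((hf x).hasFDerivAt.rpow_const (Or.inl (h0 x).ne')).fderiv]; simp; ring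

lemma diff_rpow {f : E3 → ℝ} (hf : Differentiable ℝ f) (h0 : ∀ x, 0 < f x) (s : ℝ) :
    Differentiable ℝ (fun x => f x ^ s) := fun x =>
  ((hf x).hasFDerivAt.rpow_const (Or.inl (h0 x).ne')).differentiableAt

lemma Reg.add {a : ℝ} {n : ℕ} : ∀ {f g : E3 → ℝ}, Reg a n f → Reg a n g → Reg a n (fun x => f x + g x) := by
  induction n with
  | zero => intro f g h h'; exact ⟨h.1.add h'.1, bd_add h.2 h'.2⟩
  | succ n ih =>
    intro f g h h'
    refine ⟨h.1.add h'.1, bd_add h.2.1 h'.2.1, fun i => ?_⟩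
    rw [pd_add h.1 h'.1]
    exact ih (h.2.2 i) (h'.2.2 i)

lemma Reg.mul {a b : ℝ} {n : ℕ} : ∀ {f g : E3 → ℝ}, Reg a n f → Reg b n g → Reg (a+b) n (fun x => f x * g x) := by
  induction n with
  | zero => intro f g h h'; exact ⟨h.1.mul h'.1, bd_mul h.2 h'.2⟩
  | succ n ih =>
    intro f g h h'
    refine ⟨h.1.mul h'.1, bd_mul h.2.1 h'.2.1, fun i => ?_⟩
    rw [pd_mul h.1 h'.1]
    exact (ih (h.2.2 i) h'.down).add (ih h.down (h'.2.2 i))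

lemma Reg.const {n : ℕ} : ∀ (c : ℝ), Reg 0 n (fun _ => c) := by
  have hb : ∀ c : ℝ, ∃ C, 0 ≤ C ∧ ∀ x : E3, |c| ≤ C * (1 + ‖x‖) ^ (0:ℝ) := fun c => ⟨|c|, abs_nonneg c, fun x => by simp⟩
  induction n with
  | zero => intro c; exact ⟨continuous_const, hb c⟩
  | succ n ih =>
    intro c
    refine ⟨differentiable_const c, hb c, fun i => ?_⟩
    rw [pd_const]; exact ih 0

lemma Reg.const_mul {a : ℝ} {n : ℕ} {f : E3 → ℝ} (c : ℝ) (h : Reg a n f) : Reg a n (fun x => c * f x) := by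
  have := (Reg.const (n := n) c).mul h
  rwa [zero_add] at this

lemma abs_coord_le (x : E3) (j : Fin 3) : |x j| ≤ ‖x‖ := PiLp.norm_apply_le x j

lemma Reg.coord {n : ℕ} (j : Fin 3) : Reg 1 n (fun x => x j) := by
  have hb : ∃ C, 0 ≤ C ∧ ∀ x : E3, |x j| ≤ C * (1 + ‖x‖) ^ (1:ℝ) := ⟨1, zero_le_one, fun x => by
    rw [rpow_one]; linarith [abs_coord_le x j]⟩
  cases n with
  | zero => exact ⟨(diff_coord j).continuous, hb⟩
  | succ n =>
    refine ⟨diff_coord j, hb, fun i => ?_⟩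
    rw [pd_coord]; exact (Reg.const _).mono zero_le_one

lemma Reg.rpow {n : ℕ} {f : E3 → ℝ} (hfd : Differentiable ℝ f) {c : ℝ} (hc : 0 < c) (hf : ∀ x, c * (1 + ‖x‖) ≤ f x)
    (h : ∀ i, Reg 1 n (pd i f)) : ∀ s : ℝ, 0 ≤ s → Reg (-s) (n+1) (fun x => f x ^ (-s)) := by
  have h0 : ∀ x, 0 < f x := fun x => (mul_pos hc (nn_pos x)).trans_le (hf x)
  have hb : ∀ s : ℝ, 0 ≤ s → ∃ C, 0 ≤ C ∧ ∀ x : E3, |f x ^ (-s)| ≤ C * (1 + ‖x‖) ^ (-s) := by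
    intro s hs
    refine ⟨c ^ (-s), by positivity, fun x => ?_⟩
    rw [abs_of_nonneg (rpow_nonneg (h0 x).le _), ← mul_rpow hc.le (nn_pos x).le]
    exact rpow_le_rpow_of_nonpos (mul_pos hc (nn_pos x)) (hf x) (by linarith)
  have key : ∀ m : ℕ, m ≤ n + 1 → ∀ s : ℝ, 0 ≤ s → Reg (-s) m (fun x => f x ^ (-s)) := by
    intro m
    induction m with
    | zero => intro _ s hs; exact ⟨(diff_rpow hfd h0 _).continuous, hb s hs⟩
    | succ m ih =>
      intro hm s hs
      refine ⟨diff_rpow hfd h0 _, hb s hs, fun i => ?_⟩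
      rw [pd_rpow hfd h0]
      have h1 := ih (by omega) (s+1) (by linarith)
      have h2 := (h i).down' (show m ≤ n by omega)
      have h3 := (h1.mul h2).const_mul (-s)
      have e1 : -(s+1) + 1 = -s := by ring
      have e2 : -(s+1) = -s - 1 := by ring
      rw [e1] at h3
      rw [e2] at h3
      exact h3
  exact key (n+1) le_rfl

lemma fderiv_eq_pd {f : E3 → ℝ} (x y : E3) : fderiv ℝ f x y = ∑ i, y i * pd i f x := by
  have : y = ∑ i, y i • EuclideanSpace.single i (1:ℝ) := by
    ext j; simp [Pi.single_apply, Finset.sum_apply]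
  conv_lhs => rw [this]
  rw [map_sum]; simp [pd]

lemma Reg.contDiff {a : ℝ} {n : ℕ} : ∀ {f : E3 → ℝ}, Reg a n f → ContDiff ℝ n f := by
  induction n with
  | zero => intro f h; exact contDiff_zero.2 h.1
  | succ n ih =>
    intro f h
    push_cast
    rw [contDiff_succ_iff_fderiv_apply]
    refine ⟨h.1, by simp, fun y => ?_⟩
    simp only [fderiv_eq_pd]
    exact ContDiff.sum fun i _ => contDiff_const.mul (ih (h.2.2 i))

lemma norm_fderiv_le {f : E3 → ℝ} (x : E3) : ‖fderiv ℝ f x‖ ≤ ∑ i, |pd i f x| := by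
  refine ContinuousLinearMap.opNorm_le_bound _ (by positivity) fun y => ?_
  rw [fderiv_eq_pd, Finset.sum_mul]
  refine (norm_sum_le _ _).trans (Finset.sum_le_sum fun i _ => ?_)
  rw [norm_mul, mul_comm, Real.norm_eq_abs, Real.norm_eq_abs]
  gcongr
  exact abs_coord_le y i


noncomputable def Gc (Φ f : E3 → ℝ) : E3 → ℝ := fun x => ∫ z, Φ z * f (x - z)

lemma int_dec : Integrable (fun z : E3 => (1 + ‖z‖) ^ (-4:ℝ)) := by
  apply integrable_one_add_norm
  simp; norm_num

lemma shift_dec (x z : E3) : (1 + ‖x - z‖) ^ (-4:ℝ) ≤ (1 + ‖x‖) ^ (4:ℝ) * (1 + ‖z‖) ^ (-4:ℝ) := by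
  have h1 : ‖z‖ ≤ ‖x‖ + ‖x - z‖ := by
    have := norm_sub_le x (x - z); simpa using this
  have h2 : 1 + ‖z‖ ≤ (1 + ‖x‖) * (1 + ‖x - z‖) := by
    nlinarith [mul_nonneg (norm_nonneg x) (norm_nonneg (x - z))]
  have h3 := rpow_le_rpow (nn_pos z).le h2 (show (0:ℝ) ≤ 4 by norm_num)
  rw [mul_rpow (nn_pos x).le (nn_pos _).le] at h3
  rw [rpow_neg (nn_pos _).le, rpow_neg (nn_pos _).le, ← div_eq_mul_inv, le_div_iff₀ (rpow_pos_of_pos (nn_pos z) _), inv_mul_le_iff₀ (rpow_pos_of_pos (nn_pos _) _)]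
  linarith

lemma shift_dec' (x₀ x z : E3) (hx : x ∈ Metric.ball x₀ 1) :
    (1 + ‖x - z‖) ^ (-4:ℝ) ≤ (2 + ‖x₀‖) ^ (4:ℝ) * (1 + ‖z‖) ^ (-4:ℝ) := by
  refine (shift_dec x z).trans ?_
  have := (nn_pos z)
  have h : ‖x‖ ≤ 1 + ‖x₀‖ := by
    have h1 := norm_sub_norm_le x x₀
    rw [Metric.mem_ball, dist_eq_norm] at hx; linarith
  have h2 : 1 + ‖x‖ ≤ 2 + ‖x₀‖ := by linarith
  have := nn_pos x
  gcongr

lemma int_dec_shift (x : E3) : Integrable (fun z : E3 => (1 + ‖x - z‖) ^ (-4:ℝ)) :=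
  int_dec.comp_sub_left x

lemma conv_meas {Φ f : E3 → ℝ} (hΦ : Measurable Φ) (hf : Continuous f) (x : E3) :
    AEStronglyMeasurable (fun z => Φ z * f (x - z)) := by
  exact (hΦ.mul (hf.comp (continuous_const.sub continuous_id)).measurable).aestronglyMeasurable

lemma conv_bd {Φ f : E3 → ℝ} (hΦ1 : ∀ z, |Φ z| ≤ 1) {C : ℝ} 
    (hb : ∀ x, |f x| ≤ C * (1 + ‖x‖) ^ (-4:ℝ)) (x z : E3) : ‖Φ z * f (x - z)‖ ≤ C * (1 + ‖x - z‖) ^ (-4:ℝ) := by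
  rw [norm_mul]
  calc ‖Φ z‖ * ‖f (x - z)‖ ≤ 1 * (C * (1 + ‖x - z‖) ^ (-4:ℝ)) := by
        gcongr
        · exact hΦ1 z
        · exact hb _
    _ = _ := one_mul _

lemma conv_int {Φ f : E3 → ℝ} (hΦ : Measurable Φ) (hΦ1 : ∀ z, |Φ z| ≤ 1) (hf : Reg (-4) 0 f) (x : E3) :
    Integrable (fun z => Φ z * f (x - z)) := by
  obtain ⟨C, hC, hb⟩ := hf.bound
  exact ((int_dec_shift x).const_mul C).mono' (conv_meas hΦ hf.cont x) (Eventually.of_forall (conv_bd hΦ1 hb x))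

lemma conv_zero {Φ f : E3 → ℝ} (hΦ : Measurable Φ) (hΦ1 : ∀ z, |Φ z| ≤ 1) (hf : Reg (-4) 0 f) :
    Reg 0 0 (Gc Φ f) := by
  obtain ⟨C, hC, hb⟩ := hf.bound
  constructor
  · rw [continuous_iff_continuousAt]
    intro x₀
    refine continuousAt_of_dominated (bound := fun z => C * ((2 + ‖x₀‖) ^ (4:ℝ) * (1 + ‖z‖) ^ (-4:ℝ))) 
      (Eventually.of_forall fun x => conv_meas hΦ hf.cont x) ?_ ((int_dec.const_mul _).const_mul _) 
      (Eventually.of_forall fun z => ?_)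
    · filter_upwards [Metric.ball_mem_nhds x₀ one_pos] with x hx
      refine Eventually.of_forall fun z => (conv_bd hΦ1 hb x z).trans ?_
      gcongr
      exact shift_dec' x₀ x z hx
    · have := hf.cont
      exact Continuous.continuousAt (by fun_prop)
  · refine ⟨C * ∫ z : E3, (1 + ‖z‖) ^ (-4:ℝ), mul_nonneg hC (integral_nonneg fun z => rpow_nonneg (nn_pos z).le _), fun x => ?_⟩
    rw [rpow_zero, mul_one, ← Real.norm_eq_abs, ← integral_const_mul, 
      ← integral_sub_left_eq_self (fun z : E3 => C * (1 + ‖z‖) ^ (-4:ℝ)) volume x]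
    exact norm_integral_le_of_norm_le ((int_dec_shift x).const_mul C) (Eventually.of_forall (conv_bd hΦ1 hb x))

lemma conv_diff {Φ f : E3 → ℝ} (hΦ : Measurable Φ) (hΦ1 : ∀ z, |Φ z| ≤ 1) (hf : Reg (-4) 1 f) :
    Differentiable ℝ (Gc Φ f) ∧ ∀ i, pd i (Gc Φ f) = Gc Φ (pd i f) := by
  have hfd : ∃ D, 0 ≤ D ∧ ∀ x, ‖fderiv ℝ f x‖ ≤ D * (1 + ‖x‖) ^ (-4:ℝ) := by
    choose C hC hb using fun i => (hf.2.2 i).bound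
    refine ⟨∑ i, C i, Finset.sum_nonneg fun i _ => hC i, fun x => (norm_fderiv_le x).trans ?_⟩
    rw [Finset.sum_mul]
    exact Finset.sum_le_sum fun i _ => hb i x
  obtain ⟨D, hD, hDb⟩ := hfd
  have hcont : Continuous (fderiv ℝ f) := hf.contDiff.continuous_fderiv (by simp)
  have hm : ∀ x, AEStronglyMeasurable (fun z => Φ z • fderiv ℝ f (x - z)) := fun x =>
    hΦ.aestronglyMeasurable.smul (hcont.comp (continuous_const.sub continuous_id)).aestronglyMeasurable
  have hbd : ∀ x z, ‖Φ z • fderiv ℝ f (x - z)‖ ≤ D * (1 + ‖x - z‖) ^ (-4:ℝ) := by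
    intro x z
    rw [norm_smul]
    calc ‖Φ z‖ * ‖fderiv ℝ f (x - z)‖ ≤ 1 * (D * (1 + ‖x - z‖) ^ (-4:ℝ)) := by
          gcongr
          · exact hΦ1 z
          · exact hDb _
      _ = _ := one_mul _
  have hint : ∀ x, Integrable (fun z => Φ z • fderiv ℝ f (x - z)) := fun x =>
    ((int_dec_shift x).const_mul D).mono' (hm x) (Eventually.of_forall (hbd x))
  have main : ∀ x₀, HasFDerivAt (Gc Φ f) (∫ z, Φ z • fderiv ℝ f (x₀ - z)) x₀ := by
    intro x₀
    refine hasFDerivAt_integral_of_dominated_of_fderiv_le (F := fun x z => Φ z * f (x - z)) 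
      (F' := fun x z => Φ z • fderiv ℝ f (x - z))
      (bound := fun z => D * ((2 + ‖x₀‖) ^ (4:ℝ) * (1 + ‖z‖) ^ (-4:ℝ))) (Metric.ball_mem_nhds x₀ one_pos) 
      (Eventually.of_forall fun x => conv_meas hΦ hf.cont x) (conv_int hΦ hΦ1 hf.down x₀) (hm x₀) 
      (Eventually.of_forall fun z x hx => (hbd x z).trans ?_) ((int_dec.const_mul _).const_mul _)
      (Eventually.of_forall fun z x hx => ?_)
    · gcongr
      exact shift_dec' x₀ x z hx
    · have h1 := ((hf.1 (x - z)).hasFDerivAt.comp x ((hasFDerivAt_id x).sub_const z)).const_mul (Φ z)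
      simpa using h1
  refine ⟨fun x => (main x).differentiableAt, fun i => ?_⟩
  funext x
  simp only [pd]
  rw [(main x).fderiv, ContinuousLinearMap.integral_apply (hint x)]
  rfl

lemma conv_reg {Φ : E3 → ℝ} (hΦ : Measurable Φ) (hΦ1 : ∀ z, |Φ z| ≤ 1) {n : ℕ} : ∀ {f : E3 → ℝ}, Reg (-4) n f → Reg 0 n (Gc Φ f) := by
  induction n with
  | zero => intro f hf; exact conv_zero hΦ hΦ1 hf
  | succ n ih =>
    intro f hf
    obtain ⟨h1, h2⟩ := conv_diff hΦ hΦ1 (hf.down' (show 1 ≤ n + 1 by omega))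
    refine ⟨h1, (conv_zero hΦ hΦ1 (hf.down' (Nat.zero_le _))).2, fun i => ?_⟩
    rw [h2]; exact ih (hf.2.2 i)

noncomputable def Ph (i : Fin 3) : E3 → ℝ := fun z => z i / ‖z‖

lemma Ph_meas (i : Fin 3) : Measurable (Ph i) := by
  have : Measurable (fun z : E3 => z i) := (diff_coord i).continuous.measurable
  exact this.div measurable_norm

lemma Ph_le (i : Fin 3) (z : E3) : |Ph i z| ≤ 1 := by
  rw [Ph, abs_div, abs_norm]
  exact div_le_one_of_le₀ (abs_coord_le z i) (norm_nonneg z)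

-- the potential
lemma pot_diff {f : E3 → ℝ} (hf : Reg (-4) 0 f) : 
    Differentiable ℝ (fun x => ∫ y, (‖x - y‖ - ‖y‖) * f y) ∧ ∀ i, pd i (fun x => ∫ y, (‖x - y‖ - ‖y‖) * f y) = Gc (Ph i) f := by
  obtain ⟨C, hC, hb⟩ := hf.bound
  have hfi : Integrable f := (int_dec.const_mul C).mono' hf.cont.aestronglyMeasurable (Eventually.of_forall hb)
  have hN : ∀ x : E3, x ≠ 0 → HasFDerivAt (fun z : E3 => ‖z‖) (fderiv ℝ (fun z : E3 => ‖z‖) x) x := fun x hx =>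
    ((contDiffAt_norm ℝ hx (n := 1)).differentiableAt (by simp)).hasFDerivAt
  have hm : ∀ x : E3, AEStronglyMeasurable (fun y => f y • fderiv ℝ (fun z : E3 => ‖z‖) (x - y)) := fun x => by
    refine hf.cont.aestronglyMeasurable.smul ?_
    have : Measurable (fun y => fderiv ℝ (fun z : E3 => ‖z‖) (x - y)) := 
      (measurable_fderiv ℝ (fun z : E3 => ‖z‖)).comp (measurable_const.sub measurable_id)
    exact this.aestronglyMeasurable
  have key : ∀ x₀ : E3, Integrable (fun y => f y • fderiv ℝ (fun z : E3 => ‖z‖) (x₀ - y)) ∧ 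
      HasFDerivAt (fun x => ∫ y, (‖x - y‖ - ‖y‖) * f y) (∫ y, f y • fderiv ℝ (fun z : E3 => ‖z‖) (x₀ - y)) x₀ := by
    intro x₀
    have hc : ∀ x : E3, Continuous (fun y => (‖x - y‖ - ‖y‖) * f y) := fun x => by
      have := hf.cont
      fun_prop
    refine hasFDerivAt_integral_of_dominated_loc_of_lip (F := fun x y => (‖x - y‖ - ‖y‖) * f y) (bound := fun y => |f y|)
      (s := Set.univ) Filter.univ_mem
      (Eventually.of_forall fun x => (hc x).aestronglyMeasurable) ?_ (hm x₀) (Eventually.of_forall fun y => ?_) hfi.abs ?_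
    · refine hfi.bdd_mul (c := ‖x₀‖) ?_ (Eventually.of_forall fun y => ?_)
      · exact Continuous.aestronglyMeasurable (by fun_prop)
      · have := abs_norm_sub_norm_le (x₀ - y) (-y)
        rw [norm_neg] at this
        simpa using this
    · rw [lipschitzOnWith_univ]
      apply LipschitzWith.of_dist_le_mul
      intro x x'
      rw [Real.dist_eq, dist_eq_norm, ← sub_mul, abs_mul]
      have := abs_norm_sub_norm_le (x - y) (x' - y)
      simp only [Real.coe_nnabs, abs_abs, sub_sub_sub_cancel_right] at this ⊢
      rw [mul_comm]
      gcongr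
    · have : ∀ᵐ y : E3, y ≠ x₀ := by
        rw [ae_iff]; simp
      filter_upwards [this] with y hy
      have h1 := (((hN (x₀ - y) (sub_ne_zero.2 hy.symm)).comp x₀ ((hasFDerivAt_id x₀).sub_const y)).sub_const ‖y‖).mul_const (f y)
      simpa using h1
  refine ⟨fun x => (key x).2.differentiableAt, fun i => ?_⟩
  funext x
  simp only [pd]
  rw [(key x).2.fderiv, ContinuousLinearMap.integral_apply (key x).1, Gc,
    ← integral_sub_left_eq_self (fun z => Ph i z * f (x - z)) volume x]
  refine integral_congr_ae ?_
  have : ∀ᵐ y : E3, y ≠ x := by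
    rw [ae_iff]; simp
  filter_upwards [this] with y hy
  have hne : x - y ≠ 0 := sub_ne_zero.2 hy.symm
  have h3 := (hasStrictFDerivAt_norm_sq (x - y)).hasFDerivAt.sqrt (by simpa using hne)
  have e : (fun z : E3 => √(‖z‖^2)) = fun z => ‖z‖ := by funext z; simp
  rw [e] at h3
  rw [h3.fderiv, sqrt_sq (norm_nonneg _)]
  have hn : ‖x - y‖ ≠ 0 := norm_ne_zero_iff.2 hne
  have e2 : inner ℝ (x - y) (EuclideanSpace.single i (1:ℝ)) = x i - y i := by
    rw [EuclideanSpace.inner_single_right]; simp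
  have e3 : (f y • (1 / (2 * ‖x - y‖)) • 2 • (innerSL ℝ) (x - y)) (EuclideanSpace.single i (1:ℝ)) = 
      f y * ((1 / (2 * ‖x - y‖)) * (2 * inner ℝ (x - y) (EuclideanSpace.single i (1:ℝ)))) := by
    simp [two_mul, mul_add, inner_sub_left]
  have e4 : x - (x - y) = y := by abel
  rw [e3, e2, Ph, e4, PiLp.sub_apply]
  field_simp


lemma shift_dec_gen (s : ℝ) (hs : 0 ≤ s) (x z : E3) : (1 + ‖x - z‖) ^ (-s) ≤ (1 + ‖x‖) ^ s * (1 + ‖z‖) ^ (-s) := by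
  have h1 : ‖z‖ ≤ ‖x‖ + ‖x - z‖ := by
    have := norm_sub_le x (x - z); simpa using this
  have h2 : 1 + ‖z‖ ≤ (1 + ‖x‖) * (1 + ‖x - z‖) := by
    nlinarith [mul_nonneg (norm_nonneg x) (norm_nonneg (x - z))]
  have h3 := rpow_le_rpow (nn_pos z).le h2 hs
  rw [mul_rpow (nn_pos x).le (nn_pos _).le] at h3
  rw [rpow_neg (nn_pos _).le, rpow_neg (nn_pos _).le, ← div_eq_mul_inv, le_div_iff₀ (rpow_pos_of_pos (nn_pos z) _), inv_mul_le_iff₀ (rpow_pos_of_pos (nn_pos _) _)]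
  linarith

lemma int_reg {f : E3 → ℝ} (hf : Reg (-4) 0 f) : Integrable f := by
  obtain ⟨C, hC, hb⟩ := hf.bound
  exact (int_dec.const_mul C).mono' hf.cont.aestronglyMeasurable (Eventually.of_forall hb)

lemma pd_refl {h : E3 → ℝ} (hh : Differentiable ℝ h) (x : E3) (j : Fin 3) : 
    pd j (fun z => h (x - z)) = fun z => -(pd j h (x - z)) := by
  funext z
  simp only [pd]
  have h1 := (hh (x - z)).hasFDerivAt.comp z ((hasFDerivAt_id z).const_sub x)
  have h2 : fderiv ℝ (fun z => h (x - z)) z = _ := h1.fderiv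
  rw [h2]; simp

lemma reg_shift {s : ℝ} (hs : 0 ≤ s) {h : E3 → ℝ} (hh : Reg (-s) 0 h) (x : E3) : Reg (-s) 0 (fun z => h (x - z)) := by
  obtain ⟨C, hC, hb⟩ := hh.bound
  have := hh.cont
  refine ⟨by fun_prop, C * (1 + ‖x‖) ^ s, mul_nonneg hC (rpow_nonneg (nn_pos x).le _), fun z => (hb _).trans ?_⟩
  rw [mul_assoc]
  gcongr
  exact shift_dec_gen s hs x z

lemma int_pair {φ h : E3 → ℝ} (hφ : Reg 1 0 φ) (hh : Reg (-5) 0 h) (x : E3) : Integrable (fun z => φ z * h (x - z)) := by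
  have := hφ.mul (reg_shift (by norm_num) hh x)
  exact int_reg (this.mono (by norm_num))

lemma ibp {φ h : E3 → ℝ} (hφ : Reg 1 1 φ) (hh : Reg (-5) 1 h) (j : Fin 3) (x : E3) : 
    ∫ z, φ z * pd j h (x - z) = ∫ z, pd j φ z * h (x - z) := by
  have hr := pd_refl hh.1 x j
  have hr' : ∀ z, fderiv ℝ (fun z => h (x - z)) z (EuclideanSpace.single j 1) = -(pd j h (x - z)) := fun z => congrFun hr z
  have hd : Differentiable ℝ (fun z => h (x - z)) := by
    have := hh.1
    fun_prop
  have h1 := integral_mul_fderiv_eq_neg_fderiv_mul_of_integrable (μ := (volume : Measure E3)) (f := φ) 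
    (g := fun z => h (x - z)) (v := EuclideanSpace.single j 1) (int_pair (hφ.2.2 j) hh.down x) ?_
    (int_pair hφ.down hh.down x) (fun z _ => hφ.1 z) (fun z _ => hd z)
  · simp only [hr', mul_neg, integral_neg] at h1
    have h2 := neg_injective h1
    exact h2
  · simp only [hr', mul_neg]
    exact (int_pair hφ.down (hh.2.2 j) x).neg

noncomputable def Wd (δ : ℝ) : E3 → ℝ := fun z => (z 0 * z 0 + z 1 * z 1 + z 2 * z 2) + δ^2

lemma Wd_eq (δ : ℝ) (z : E3) : Wd δ z = ‖z‖^2 + δ^2 := by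
  rw [Wd, EuclideanSpace.norm_sq_eq, Fin.sum_univ_three]; simp; ring

lemma Wd_diff (δ : ℝ) : Differentiable ℝ (Wd δ) := by
  have h0 := diff_coord 0; have h1 := diff_coord 1; have h2 := diff_coord 2
  unfold Wd; exact (((h0.mul h0).add (h1.mul h1)).add (h2.mul h2)).add (differentiable_const _)

lemma Wd_pos {δ : ℝ} (hδ : 0 < δ) (z : E3) : 0 < Wd δ z := by rw [Wd_eq]; positivity

lemma pd_Wd (δ : ℝ) (j : Fin 3) : pd j (Wd δ) = fun z => 2 * z j := by
  have h0 := diff_coord 0; have h1 := diff_coord 1; have h2 := diff_coord 2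
  have k0 : Differentiable ℝ (fun x : E3 => x 0 * x 0) := h0.mul h0
  have k1 : Differentiable ℝ (fun x : E3 => x 1 * x 1) := h1.mul h1
  have k2 : Differentiable ℝ (fun x : E3 => x 2 * x 2) := h2.mul h2
  have k01 : Differentiable ℝ (fun x : E3 => x 0 * x 0 + x 1 * x 1) := k0.add k1
  have k012 : Differentiable ℝ (fun x : E3 => x 0 * x 0 + x 1 * x 1 + x 2 * x 2) := k01.add k2
  unfold Wd
  rw [pd_add k012 (differentiable_const _), pd_add k01 k2, pd_add k0 k1, pd_mul h0 h0, pd_mul h1 h1, pd_mul h2 h2,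
    pd_const, pd_coord, pd_coord, pd_coord]
  funext z
  fin_cases j <;> simp <;> ring

noncomputable def Pw (δ s : ℝ) : E3 → ℝ := fun z => Wd δ z ^ (-s)

lemma Pw_diff {δ : ℝ} (hδ : 0 < δ) (s : ℝ) : Differentiable ℝ (Pw δ s) := diff_rpow (Wd_diff δ) (Wd_pos hδ) _

lemma pd_Pw {δ : ℝ} (hδ : 0 < δ) (s : ℝ) (j : Fin 3) : pd j (Pw δ s) = fun z => (-2 * s) * (z j * Pw δ (s+1) z) := by
  unfold Pw
  rw [pd_rpow (Wd_diff δ) (Wd_pos hδ), pd_Wd]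
  funext z
  have : -(s+1) = -s - 1 := by ring
  rw [this]; ring

lemma Pw_succ {δ : ℝ} (hδ : 0 < δ) (s : ℝ) (z : E3) : Pw δ s z = (z 0 * z 0 + z 1 * z 1 + z 2 * z 2 + δ^2) * Pw δ (s+1) z := by
  have : Pw δ s z = Wd δ z * Pw δ (s+1) z := by
    unfold Pw
    nth_rewrite 2 [← rpow_one (Wd δ z)]
    rw [← rpow_add (Wd_pos hδ z)]; congr 1; ring
  rw [this, Wd]

lemma Pw_reg {δ : ℝ} (hδ : 0 < δ) (hδ1 : δ ≤ 1) {s : ℝ} (hs : 0 ≤ s) (n : ℕ) : Reg (-s) n (Pw δ s) := by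
  refine (Reg.rpow (n := n) (Wd_diff δ) (c := δ^2/2) (by positivity) ?_ ?_ s hs).down
  · intro x
    rw [Wd_eq]
    have : δ^2 ≤ 1 := by nlinarith
    have := sq_nonneg (‖x‖ - δ^2/4)
    nlinarith [sq_nonneg δ]
  · intro i
    rw [pd_Wd]; exact (Reg.coord i).const_mul 2

lemma pd_zP {δ : ℝ} (hδ : 0 < δ) (s : ℝ) (i j : Fin 3) : pd j (fun z => z i * Pw δ s z) = 
    fun z => (if i = j then 1 else 0) * Pw δ s z + (-2 * s) * (z i * z j * Pw δ (s+1) z) := by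
  rw [pd_mul (diff_coord i) (Pw_diff hδ s), pd_coord, pd_Pw hδ]
  funext z; ring

lemma pd_pd_zP {δ : ℝ} (hδ : 0 < δ) (s : ℝ) (i j : Fin 3) : pd j (pd j (fun z => z i * Pw δ s z)) = 
    fun z => (-2 * s) * (((if i = j then 1 else 0) * (2 * z j) + z i) * Pw δ (s+1) z + 
      (-2 * (s+1)) * (z i * z j * z j * Pw δ (s+1+1) z)) := by
  have hi := diff_coord i; have hj := diff_coord j
  have hP := Pw_diff hδ s; have hP1 := Pw_diff hδ (s+1)
  have k1 : Differentiable ℝ (fun z : E3 => z i * z j) := hi.mul hj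
  have k2 : Differentiable ℝ (fun z : E3 => z i * z j * Pw δ (s+1) z) := k1.mul hP1
  rw [pd_zP hδ, pd_add (hP.const_mul _) (k2.const_mul _), pd_const_mul hP, pd_const_mul k2,
    pd_mul k1 hP1, pd_mul hi hj, pd_coord, pd_coord, pd_Pw hδ, pd_Pw hδ]
  funext z
  by_cases hij : i = j
  · simp only [if_pos hij, if_true]; subst hij; ring
  · simp only [if_neg hij, if_true]; ring

lemma lap_zP {δ : ℝ} (hδ : 0 < δ) (i : Fin 3) (z : E3) : 
    ∑ j, pd j (pd j (fun z => z i * Pw δ (1/2) z)) z = (-2) * (z i * Pw δ (3/2) z) + (-3 * δ^2) * (z i * Pw δ (5/2) z) := by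
  have e1 : (1/2:ℝ) + 1 = 3/2 := by norm_num
  have e2 : (3/2:ℝ) + 1 = 5/2 := by norm_num
  simp only [pd_pd_zP hδ, Fin.sum_univ_three, e1, e2]
  have := Pw_succ hδ (3/2) z
  rw [e2] at this
  rw [this]
  fin_cases i <;> simp <;> ring

lemma div_lap {δ : ℝ} (hδ : 0 < δ) (z : E3) : 
    ∑ i, pd i (fun z => (-2) * (z i * Pw δ (3/2) z) + (-3 * δ^2) * (z i * Pw δ (5/2) z)) z = -15 * (δ^4 * Pw δ (7/2) z) := by
  have e2 : (3/2:ℝ) + 1 = 5/2 := by norm_num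
  have e3 : (5/2:ℝ) + 1 = 7/2 := by norm_num
  have hd : ∀ i s, Differentiable ℝ (fun z : E3 => z i * Pw δ s z) := fun i s => (diff_coord i).mul (Pw_diff hδ s)
  have : ∀ i, pd i (fun z => (-2) * (z i * Pw δ (3/2) z) + (-3 * δ^2) * (z i * Pw δ (5/2) z)) z = 
      (-2) * (Pw δ (3/2) z - 3 * (z i * z i * Pw δ (5/2) z)) + (-3*δ^2) * (Pw δ (5/2) z - 5 * (z i * z i * Pw δ (7/2) z)) := by
    intro i
    rw [pd_add ((hd i _).const_mul _) ((hd i _).const_mul _), pd_const_mul (hd i _), pd_const_mul (hd i _), pd_zP hδ, pd_zP hδ, e2, e3]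
    simp; ring
  simp only [this, Fin.sum_univ_three]
  have h1 := Pw_succ hδ (3/2) z
  have h2 := Pw_succ hδ (5/2) z
  rw [e2] at h1
  rw [e3] at h2
  rw [h1, h2]
  ring

lemma Phd_reg {δ : ℝ} (hδ : 0 < δ) (hδ1 : δ ≤ 1) {s : ℝ} (hs : 0 ≤ s) (i : Fin 3) (n : ℕ) : Reg 1 n (fun z => z i * Pw δ s z) := 
  ((Reg.coord i).mul (Pw_reg hδ hδ1 hs n)).mono (by linarith)

lemma ibp_total {δ : ℝ} (hδ : 0 < δ) (hδ1 : δ ≤ 1) {f : E3 → ℝ} (hf : Reg (-5) 3 f) (x : E3) : 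
    ∑ i, ∑ j, Gc (fun z => z i * Pw δ (1/2) z) (pd j (pd j (pd i f))) x = -15 * ∫ z, δ^4 * Pw δ (7/2) z * f (x - z) := by
  have h1 : ∀ i, ∑ j, Gc (fun z => z i * Pw δ (1/2) z) (pd j (pd j (pd i f))) x = 
      ∫ z, pd i (fun z => (-2) * (z i * Pw δ (3/2) z) + (-3 * δ^2) * (z i * Pw δ (5/2) z)) z * f (x - z) := by
    intro i
    have hφ := Phd_reg hδ hδ1 (s := 1/2) (by norm_num) i 2
    have h2 : ∀ j, Gc (fun z => z i * Pw δ (1/2) z) (pd j (pd j (pd i f))) x = 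
        ∫ z, pd j (pd j (fun z => z i * Pw δ (1/2) z)) z * pd i f (x - z) := by
      intro j
      rw [Gc, ibp hφ.down ((hf.2.2 i).2.2 j) j x, ibp (hφ.2.2 j) (hf.2.2 i).down j x]
    simp only [h2]
    rw [← integral_finsetSum _ (fun j _ => int_pair ((hφ.2.2 j).2.2 j) (hf.2.2 i).down.down x)]
    simp only [← Finset.sum_mul, lap_zP hδ]
    refine ibp ?_ hf.down.down i x
    exact ((Phd_reg hδ hδ1 (by norm_num) i 1).const_mul _).add ((Phd_reg hδ hδ1 (by norm_num) i 1).const_mul _)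
  simp only [h1]
  have hB : ∀ i, Reg 1 1 (fun z => (-2) * (z i * Pw δ (3/2) z) + (-3 * δ^2) * (z i * Pw δ (5/2) z)) := fun i =>
    ((Phd_reg hδ hδ1 (by norm_num) i 1).const_mul _).add ((Phd_reg hδ hδ1 (by norm_num) i 1).const_mul _)
  rw [← integral_finsetSum _ (fun i _ => int_pair ((hB i).2.2 i) hf.down.down.down x)]
  simp only [← Finset.sum_mul, div_lap hδ]
  rw [← integral_const_mul]
  congr 1
  funext z; ring

lemma rhs_scale {δ : ℝ} (hδ : 0 < δ) (f : E3 → ℝ) (x : E3) : 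
    ∫ z, δ^4 * Pw δ (7/2) z * f (x - z) = ∫ z : E3, (1 + ‖z‖^2) ^ (-7/2 : ℝ) * f (x - δ • z) := by
  have h := Measure.integral_comp_smul (volume : Measure E3) (fun z => δ^4 * Pw δ (7/2) z * f (x - z)) δ
  have h3 : Module.finrank ℝ E3 = 3 := by simp
  rw [h3, abs_of_pos (by positivity), smul_eq_mul] at h
  have h4 : ∫ z, δ^4 * Pw δ (7/2) z * f (x - z) = δ^3 * ∫ z, δ^4 * Pw δ (7/2) (δ • z) * f (x - δ • z) := by
    rw [h]; field_simp
  rw [h4, ← integral_const_mul]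
  congr 1
  funext z
  have h5 : Pw δ (7/2) (δ • z) = (δ^7)⁻¹ * (1 + ‖z‖^2) ^ (-7/2 : ℝ) := by
    have e : Wd δ (δ • z) = δ^2 * (1 + ‖z‖^2) := by
      rw [Wd_eq, norm_smul, norm_of_nonneg hδ.le]; ring
    rw [Pw, e, mul_rpow (by positivity) (by positivity)]
    have e2 : (δ^2) ^ (-(7/2:ℝ)) = (δ^7)⁻¹ := by
      rw [rpow_neg (by positivity), ← rpow_natCast, ← rpow_mul hδ.le, ← rpow_natCast]; norm_num
    rw [e2]; norm_num
  rw [h5]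
  field_simp

lemma bilap_conv : ∃ c0 : ℝ, 0 < c0 ∧ ∀ f : E3 → ℝ, Reg (-5) 3 f → ∀ x, 
    ∑ i, ∑ j, Gc (Ph i) (pd j (pd j (pd i f))) x = - (c0 * f x) := by
  have hI : Integrable (fun z : E3 => (1 + ‖z‖^2) ^ (-7/2 : ℝ)) := by
    refine integrable_rpow_neg_one_add_norm_sq (r := 7) ?_
    simp; norm_num
  have hp : ∀ z : E3, 0 < (1 + ‖z‖^2) ^ (-7/2 : ℝ) := fun z => by positivity
  have hIpos : 0 < ∫ z : E3, (1 + ‖z‖^2) ^ (-7/2 : ℝ) := by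
    rw [integral_pos_iff_support_of_nonneg (fun z => (hp z).le) hI]
    have : Function.support (fun z : E3 => (1 + ‖z‖^2) ^ (-7/2 : ℝ)) = Set.univ := by
      ext z; simp [(hp z).ne']
    rw [this]; simp
  refine ⟨15 * ∫ z : E3, (1 + ‖z‖^2) ^ (-7/2 : ℝ), by positivity, fun f hf x => ?_⟩
  set d : ℕ → ℝ := fun n => 1 / ((n:ℝ) + 1) with hd
  have hd0 : ∀ n, 0 < d n := fun n => by simp only [hd]; positivity
  have hd1 : ∀ n, d n ≤ 1 := fun n => by
    simp only [hd]; rw [div_le_one (by positivity)]; linarith [Nat.cast_nonneg (α := ℝ) n]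
  have hdt : Tendsto d atTop (𝓝 0) := tendsto_one_div_add_atTop_nhds_zero_nat
  have hL : Tendsto (fun n => ∑ i, ∑ j, Gc (fun z => z i * Pw (d n) (1/2) z) (pd j (pd j (pd i f))) x) atTop 
      (𝓝 (∑ i, ∑ j, Gc (Ph i) (pd j (pd j (pd i f))) x)) := by
    refine tendsto_finsetSum _ fun i _ => tendsto_finsetSum _ fun j _ => ?_
    have hh := (((hf.2.2 i).2.2 j).2.2 j).mono (show (-5:ℝ) ≤ -4 by norm_num)
    refine tendsto_integral_of_dominated_convergence (fun z => |pd j (pd j (pd i f)) (x - z)|) (fun n => ?_) ?_ (fun n => ?_) ?_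
    · refine conv_meas ?_ hh.cont x
      exact ((diff_coord i).mul (Pw_diff (hd0 n) _)).continuous.measurable
    · exact (int_reg (reg_shift (by norm_num) hh x)).abs
    · refine Eventually.of_forall fun z => ?_
      rw [norm_mul, Real.norm_eq_abs, Real.norm_eq_abs]
      refine mul_le_of_le_one_left (abs_nonneg _) ?_
      have hW := Wd_pos (hd0 n) z
      have e : Pw (d n) (1/2) z = (√(Wd (d n) z))⁻¹ := by
        rw [Pw, rpow_neg hW.le, sqrt_eq_rpow]
      show |z i * Pw (d n) (1/2) z| ≤ 1
      rw [e, abs_mul, abs_inv, abs_of_pos (sqrt_pos.2 hW), ← div_eq_mul_inv, div_le_one (sqrt_pos.2 hW)]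
      refine (abs_coord_le z i).trans ?_
      apply le_sqrt_of_sq_le
      rw [Wd_eq]; nlinarith [sq_nonneg (d n)]
    · refine Eventually.of_forall fun z => Tendsto.mul_const _ ?_
      by_cases hz : z = 0
      · subst hz; simp [Ph]
      · have hz' : 0 < ‖z‖ := norm_pos_iff.2 hz
        have h1 : Tendsto (fun n => Wd (d n) z) atTop (𝓝 (‖z‖^2)) := by
          simp only [Wd_eq]
          have := (hdt.pow 2).const_add (‖z‖^2)
          simpa using this
        have h2 := (h1.rpow_const (p := -(1/2)) (Or.inl (by positivity))).const_mul (z i)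
        have e : (‖z‖^2) ^ (-(1/2):ℝ) = ‖z‖⁻¹ := by
          rw [rpow_neg (by positivity), ← sqrt_eq_rpow, sqrt_sq hz'.le]
        rw [e] at h2
        exact h2
  have hR : Tendsto (fun n => -15 * ∫ z : E3, (1 + ‖z‖^2) ^ (-7/2 : ℝ) * f (x - d n • z)) atTop 
      (𝓝 (-15 * ∫ z : E3, (1 + ‖z‖^2) ^ (-7/2 : ℝ) * f x)) := by
    refine Tendsto.const_mul _ ?_
    obtain ⟨C, hC, hb⟩ := (hf.mono (show (-5:ℝ) ≤ 0 by norm_num)).bound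
    have hc := hf.cont
    refine tendsto_integral_of_dominated_convergence (fun z => (1 + ‖z‖^2) ^ (-7/2 : ℝ) * C) (fun n => ?_) (hI.mul_const C) (fun n => ?_) ?_
    · exact hI.aestronglyMeasurable.mul (Continuous.aestronglyMeasurable (by fun_prop))
    · refine Eventually.of_forall fun z => ?_
      rw [norm_mul, norm_of_nonneg (hp z).le]
      gcongr
      simpa using hb (x - d n • z)
    · refine Eventually.of_forall fun z => Tendsto.const_mul _ ?_
      have h1 : Tendsto (fun n => x - d n • z) atTop (𝓝 x) := by
        have := (hdt.smul_const z).const_sub x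
        simpa using this
      exact (hc.tendsto x).comp h1
  have heq : ∀ n, ∑ i, ∑ j, Gc (fun z => z i * Pw (d n) (1/2) z) (pd j (pd j (pd i f))) x = 
      -15 * ∫ z : E3, (1 + ‖z‖^2) ^ (-7/2 : ℝ) * f (x - d n • z) := fun n => by
    rw [ibp_total (hd0 n) (hd1 n) hf, rhs_scale (hd0 n)]
  simp only [heq] at hL
  rw [tendsto_nhds_unique hL hR, integral_mul_const]
  ring


lemma lap_eq {u : E3 → ℝ} (hu : ContDiff ℝ 2 u) : laplacian u = fun x => ∑ i, pd i (pd i u) x := by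
  funext x
  unfold laplacian
  refine Finset.sum_congr rfl fun i _ => ?_
  rw [iteratedFDeriv_two_apply]
  have h1 : DifferentiableAt ℝ (fderiv ℝ u) x := (hu.fderiv_right (m := 1) (by norm_num)).differentiable (by simp) x
  show _ = fderiv ℝ (fun y => fderiv ℝ u y (EuclideanSpace.single i 1)) x (EuclideanSpace.single i 1)
  rw [fderiv_clm_apply h1 (differentiableAt_const _)]
  simp

lemma pd_sum {F : Fin 3 → E3 → ℝ} (hF : ∀ i, Differentiable ℝ (F i)) (j : Fin 3) : 
    pd j (fun x => ∑ i, F i x) = fun x => ∑ i, pd j (F i) x := by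
  funext x; simp only [pd]
  rw [fderiv_fun_sum (fun i _ => hF i x)]; simp

lemma kk_int {f : E3 → ℝ} (hf : Reg (-4) 0 f) (he : ∀ x, f (-x) = f x) (x : E3) : 
    ∫ y, kk x y * f y = ∫ y, (‖x - y‖ - ‖y‖) * f y := by
  have hfi := int_reg hf
  have hc := hf.cont
  have hi : Integrable (fun y => (‖x - y‖ - ‖y‖) * f y) := by
    refine hfi.bdd_mul (c := ‖x‖) ?_ (Eventually.of_forall fun y => ?_)
    · exact Continuous.aestronglyMeasurable (by fun_prop)
    · have := abs_norm_sub_norm_le (x - y) (-y)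
      rw [norm_neg] at this
      simpa using this
  have h1 : ∫ y, (‖x - -y‖ - ‖-y‖) * f (-y) = ∫ y, (‖x - y‖ - ‖y‖) * f y := integral_neg_eq_self (fun y => (‖x - y‖ - ‖y‖) * f y) volume
  have hi2 : Integrable (fun y => (‖x - -y‖ - ‖-y‖) * f (-y)) := hi.comp_neg
  have h2 : ∀ y, kk x y * f y = (1/2) * ((‖x - y‖ - ‖y‖) * f y) + (1/2) * ((‖x - -y‖ - ‖-y‖) * f (-y)) := by
    intro y
    rw [he, norm_neg, sub_neg_eq_add, kk]; ring
  simp only [h2]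
  rw [integral_add (hi.const_mul _) (hi2.const_mul _), integral_const_mul, integral_const_mul, h1]
  ring

noncomputable def bq : E3 → ℝ := fun x => 1 + (x 0 * x 0 + x 1 * x 1)

lemma bq_diff : Differentiable ℝ bq := by
  have h0 := diff_coord 0; have h1 := diff_coord 1
  exact (differentiable_const _).add ((h0.mul h0).add (h1.mul h1))

lemma pd_bq (i : Fin 3) : pd i bq = fun x => (if i = 2 then 0 else 2) * x i := by
  have h0 := diff_coord 0; have h1 := diff_coord 1
  have k0 : Differentiable ℝ (fun x : E3 => x 0 * x 0) := h0.mul h0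
  have k1 : Differentiable ℝ (fun x : E3 => x 1 * x 1) := h1.mul h1
  have k01 : Differentiable ℝ (fun x : E3 => x 0 * x 0 + x 1 * x 1) := k0.add k1
  unfold bq
  rw [pd_add (differentiable_const _) k01, pd_add k0 k1, pd_mul h0 h0, pd_mul h1 h1,
    pd_const, pd_coord, pd_coord]
  funext z
  fin_cases i <;> simp <;> ring

lemma pde_of_fix {q ε c : ℝ} (hq : 7 < q) (hε : 0 < ε) {u : E3 → ℝ} (huc : Continuous u) (hc : 0 < c) 
    (hu : ∀ x, c * (1 + ‖x‖) ≤ u x) (he : ∀ x, u (-x) = u x) 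
    (hfix : ∀ x, u x = 1 + ((x 0)^2 + (x 1)^2) + ε * ∫ y, kk x y * (u y) ^ (-q)) : 
    ContDiff ℝ 4 u ∧ ∃ l > 0, ∀ x, laplacian (laplacian u) x = -(l * u x ^ (-q)) := by
  have h0 : ∀ x, 0 < u x := fun x => (mul_pos hc (nn_pos x)).trans_le (hu x)
  set f : E3 → ℝ := fun x => u x ^ (-q) with hf
  have hf0 : Reg (-q) 0 f := by
    refine ⟨huc.rpow_const fun x => Or.inl (h0 x).ne', c ^ (-q), by positivity, fun x => ?_⟩
    simp only [hf]
    rw [abs_of_nonneg (rpow_nonneg (h0 x).le _), ← mul_rpow hc.le (nn_pos x).le]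
    exact rpow_le_rpow_of_nonpos (mul_pos hc (nn_pos x)) (hu x) (by linarith)
  have h4 : -q ≤ -4 := by linarith
  have hfe : ∀ x, f (-x) = f x := fun x => by simp only [hf, he]
  obtain ⟨hVd, hVp⟩ := pot_diff (hf0.mono h4)
  set V : E3 → ℝ := fun x => ∫ y, (‖x - y‖ - ‖y‖) * f y with hV
  have hue : u = fun x => bq x + ε * V x := by
    funext x
    rw [hfix x, kk_int (hf0.mono h4) hfe x, bq]; ring
  have hud : Differentiable ℝ u := by
    rw [hue]; exact bq_diff.add (hVd.const_mul ε)
  have hpu : ∀ i, pd i u = fun x => (if i = 2 then 0 else 2) * x i + ε * Gc (Ph i) f x := by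
    intro i
    rw [hue, pd_add bq_diff (hVd.const_mul ε), pd_const_mul hVd, pd_bq, hVp]
  have hfn : ∀ n, Reg (-q) n f := by
    intro n
    induction n with
    | zero => exact hf0
    | succ n ih =>
      refine Reg.rpow hud hc hu (fun i => ?_) q (by linarith)
      rw [hpu i]
      exact ((Reg.coord i).const_mul _).add (((conv_reg (Ph_meas i) (Ph_le i) (ih.mono h4)).mono zero_le_one).const_mul ε)
  have hpur : ∀ n i, Reg 1 n (pd i u) := by
    intro n i
    rw [hpu i]
    exact ((Reg.coord i).const_mul _).add (((conv_reg (Ph_meas i) (Ph_le i) ((hfn n).mono h4)).mono zero_le_one).const_mul ε)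
  have hu4 : ContDiff ℝ 4 u := by
    have : ((3:ℕ) : WithTop ℕ∞) + 1 = 4 := by norm_num
    rw [← this, contDiff_succ_iff_fderiv_apply]
    refine ⟨hud, by simp, fun y => ?_⟩
    simp only [fderiv_eq_pd]
    exact ContDiff.sum fun i _ => contDiff_const.mul (hpur 3 i).contDiff
  refine ⟨hu4, ?_⟩
  obtain ⟨c0, hc0, hbil⟩ := bilap_conv
  refine ⟨ε * c0, by positivity, fun x => ?_⟩
  have hG : ∀ i n (g : E3 → ℝ), Reg (-4) n g → Reg 0 n (Gc (Ph i) g) := fun i n g hg => conv_reg (Ph_meas i) (Ph_le i) hg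
  have hGd : ∀ i (g : E3 → ℝ), Reg (-4) 1 g → Differentiable ℝ (Gc (Ph i) g) ∧ ∀ j, pd j (Gc (Ph i) g) = Gc (Ph i) (pd j g) := 
    fun i g hg => conv_diff (Ph_meas i) (Ph_le i) hg
  have f3 := (hfn 3).mono h4
  have hl1 : laplacian u = fun x => 4 + ε * ∑ i, Gc (Ph i) (pd i f) x := by
    rw [lap_eq (hu4.of_le (by norm_num))]
    funext x
    have : ∀ i, pd i (pd i u) x = (if i = 2 then 0 else 2) + ε * Gc (Ph i) (pd i f) x := by
      intro i
      obtain ⟨d1, d2⟩ := hGd i f f3.down.down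
      rw [hpu i, pd_add ((diff_coord i).const_mul _) (d1.const_mul _), pd_const_mul (diff_coord i), pd_const_mul d1, pd_coord, d2]
      simp
    simp only [this, Fin.sum_univ_three]
    simp
    ring
  have hS : ∀ F : Fin 3 → E3 → ℝ, (∀ i, Reg (-4) 1 (F i)) → 
      Differentiable ℝ (fun x => ∑ i, Gc (Ph i) (F i) x) ∧ ∀ j, pd j (fun x => ∑ i, Gc (Ph i) (F i) x) = fun x => ∑ i, Gc (Ph i) (pd j (F i)) x := by
    intro F hF
    refine ⟨Differentiable.fun_sum fun i _ => (hGd i _ (hF i)).1, fun j => ?_⟩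
    rw [pd_sum (fun i => (hGd i _ (hF i)).1)]
    funext x
    exact Finset.sum_congr rfl fun i _ => by rw [(hGd i _ (hF i)).2 j]
  have hl1c : ContDiff ℝ 2 (laplacian u) := by
    rw [hl1]
    refine contDiff_const.add (contDiff_const.mul (ContDiff.sum fun i _ => ?_))
    exact (hG i 2 _ (f3.2.2 i)).contDiff
  rw [lap_eq hl1c, hl1]
  obtain ⟨s1, s2⟩ := hS (fun i => pd i f) (fun i => (f3.2.2 i).down)
  have : ∀ j, pd j (pd j (fun x => 4 + ε * ∑ i, Gc (Ph i) (pd i f) x)) x = ε * ∑ i, Gc (Ph i) (pd j (pd j (pd i f))) x := by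
    intro j
    obtain ⟨t1, t2⟩ := hS (fun i => pd j (pd i f)) (fun i => (f3.2.2 i).2.2 j)
    rw [pd_add (differentiable_const _) (s1.const_mul ε), pd_const, pd_const_mul s1, s2]
    simp only [zero_add]
    rw [pd_const_mul t1, t2]
  simp only [this]
  rw [← Finset.mul_sum, Finset.sum_comm, hbil f ((hfn 3).mono (by linarith)) x]
  ring


lemma final_asym {κ c C : ℝ} (hκ : 0 < κ) (hc : 0 < c) {U : E3 → ℝ} (hl : ∀ x, c * (1 + ‖x‖) ≤ U x)
    (hb : ∀ x, |U x - κ * ((x 0)^2 + (x 1)^2)| ≤ C * (1 + ‖x‖)) :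
    (¬ ∃ p : E3, ∀ x y, ‖x - p‖ = ‖y - p‖ → U x = U y) ∧
      0 < liminf (fun x => U x / ‖x‖) (cocompact E3) ∧
      limsup (fun x => U x / ‖x‖ ^ 2) (cocompact E3) = κ := by
  have hC : 0 ≤ C := by
    have := (abs_nonneg _).trans (hb 0)
    simpa using this
  have hlarge : ∀ R : ℝ, ∀ᶠ x in cocompact E3, R ≤ ‖x‖ := fun R =>
    (tendsto_norm_cocompact_atTop (E := E3)).eventually_ge_atTop R
  have hseq : ∀ i : Fin 3, Tendsto (fun n : ℕ => EuclideanSpace.single i (n:ℝ)) atTop (cocompact E3) := by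
    intro i
    rw [← Metric.cobounded_eq_cocompact, ← tendsto_norm_atTop_iff_cobounded]
    have : (fun n : ℕ => ‖EuclideanSpace.single i (n:ℝ)‖) = fun n : ℕ => (n:ℝ) := by
      funext n; simp
    rw [this]; exact tendsto_natCast_atTop_atTop
  refine ⟨?_, ?_, ?_⟩
  · rintro ⟨p, hp⟩
    set D := 2 * C * (1 + ‖p‖) + 2 * C + 2 * κ * |p 0| with hD
    have hD0 : 0 ≤ D := by positivity
    set t := D / κ + 1 with ht
    have ht1 : 1 ≤ t := by have : 0 ≤ D / κ := by positivity
                           linarith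
    have hkt : κ * t = D + κ := by rw [ht]; field_simp
    have hn : ∀ i : Fin 3, ‖(EuclideanSpace.single i t : E3)‖ = t := fun i => by simp; linarith
    have h1 := hp (p + EuclideanSpace.single 0 t) (p + EuclideanSpace.single 2 t) (by
      rw [add_sub_cancel_left, add_sub_cancel_left, hn, hn])
    have h2 := (abs_le.1 (hb (p + EuclideanSpace.single 0 t))).1
    have h3 := (abs_le.1 (hb (p + EuclideanSpace.single 2 t))).2
    have h4 := norm_add_le p (EuclideanSpace.single 0 t)
    have h5 := norm_add_le p (EuclideanSpace.single 2 t)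
    rw [hn] at h4 h5
    have h6 := mul_le_mul_of_nonneg_left h4 hC
    have h7 := mul_le_mul_of_nonneg_left h5 hC
    simp at h2 h3
    have h8 : κ * (2 * p 0 * t + t^2) ≤ 2 * C * (1 + ‖p‖ + t) := by nlinarith
    have h9 : -(|p 0| * t) ≤ p 0 * t := by
      have := neg_abs_le (p 0)
      nlinarith
    have h10 : κ * t * t ≤ 2 * C * (1 + ‖p‖ + t) + 2 * κ * (|p 0| * t) := by nlinarith
    have h11 : 2 * C * (1 + ‖p‖) ≤ 2 * C * (1 + ‖p‖) * t := le_mul_of_one_le_right (by positivity) ht1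
    have h12 : κ * t * t ≤ D * t := by rw [hD]; nlinarith
    rw [hkt] at h12
    nlinarith
  · refine lt_of_lt_of_le hc (le_liminf_of_le ?_ ?_)
    · refine IsCoboundedUnder.of_frequently_le (a := 2 * C) ?_
      refine (hseq 2).frequently (Eventually.frequently ?_)
      filter_upwards [eventually_ge_atTop 1] with n hn
      have hn' : (1:ℝ) ≤ n := by exact_mod_cast hn
      have := (abs_le.1 (hb (EuclideanSpace.single 2 (n:ℝ)))).2
      simp at this ⊢
      rw [div_le_iff₀ (by linarith)]
      nlinarith
    · filter_upwards [hlarge 1] with x hx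
      rw [le_div_iff₀ (by linarith)]
      nlinarith [hl x]
  · have hle : ∀ ε > 0, ∀ᶠ x in cocompact E3, U x / ‖x‖^2 ≤ κ + ε := by
      intro ε hε
      filter_upwards [hlarge 1, hlarge (2 * C / ε)] with x hx hx2
      have h1 := (abs_le.1 (hb x)).2
      have h2 : (x 0)^2 + (x 1)^2 ≤ ‖x‖^2 := by
        rw [EuclideanSpace.norm_sq_eq, Fin.sum_univ_three]; simp; positivity
      rw [div_le_iff₀ (by positivity)]
      rw [div_le_iff₀ hε] at hx2
      have h3 := mul_le_mul_of_nonneg_left h2 hκ.le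
      have h4 : C * (1 + ‖x‖) ≤ 2 * C * ‖x‖ := by nlinarith
      have h5 : 2 * C * ‖x‖ ≤ ‖x‖ * ε * ‖x‖ := by gcongr
      nlinarith
    have hge : ∀ ε > 0, ∃ᶠ x in cocompact E3, κ - ε ≤ U x / ‖x‖^2 := by
      intro ε hε
      refine (hseq 0).frequently (Eventually.frequently ?_)
      filter_upwards [eventually_ge_atTop 1, (tendsto_natCast_atTop_atTop (R := ℝ)).eventually_ge_atTop (2 * C / ε)] with n hn hn2
      have hn' : (1:ℝ) ≤ n := by exact_mod_cast hn
      have := (abs_le.1 (hb (EuclideanSpace.single 0 (n:ℝ)))).1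
      rw [div_le_iff₀ hε] at hn2
      simp at this ⊢
      rw [← sub_le_iff_le_add, le_div_iff₀ (by positivity)]
      have h4 : C * (1 + (n:ℝ)) ≤ 2 * C * n := by nlinarith
      have h5 : 2 * C * (n:ℝ) ≤ n * ε * n := by gcongr
      nlinarith
    have hbdd : IsBoundedUnder (· ≤ ·) (cocompact E3) (fun x => U x / ‖x‖^2) := ⟨κ + 1, hle 1 one_pos⟩
    have hcob : IsCoboundedUnder (· ≤ ·) (cocompact E3) (fun x => U x / ‖x‖^2) := 
      IsCoboundedUnder.of_frequently_ge (hge 1 one_pos)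
    apply le_antisymm
    · exact le_of_forall_pos_le_add fun ε hε => limsup_le_of_le hcob (hle ε hε)
    · refine le_of_forall_pos_le_add fun ε hε => ?_
      have := le_limsup_of_frequently_le (hge ε hε) hbdd
      linarith


lemma pd_scale {g : E3 → ℝ} (hg : Differentiable ℝ g) (a B : ℝ) (i : Fin 3) :
    pd i (fun x => a * g (B • x)) = fun x => (a * B) * pd i g (B • x) := by
  funext x
  have h0 : HasFDerivAt (fun x : E3 => B • x) (B • ContinuousLinearMap.id ℝ E3) x :=
    (hasFDerivAt_id x).const_smul B
  have h1 := ((hg (B • x)).hasFDerivAt.comp x h0).const_mul a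
  have h2 := h1.fderiv
  show fderiv ℝ (fun x => a * g (B • x)) x (EuclideanSpace.single i 1) = _
  have h3 : fderiv ℝ (fun x => a * g (B • x)) x = _ := h2
  rw [h3]
  simp [pd]
  ring

lemma pd_cd {g : E3 → ℝ} {n m : ℕ} (hg : ContDiff ℝ n g) (h : m + 1 ≤ n) (i : Fin 3) :
    ContDiff ℝ m (pd i g) := by
  have : ContDiff ℝ m (fderiv ℝ g) := hg.fderiv_right (by exact_mod_cast h)
  exact this.clm_apply contDiff_const

lemma lap_scale {g : E3 → ℝ} (hg : ContDiff ℝ 2 g) (a B : ℝ) :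
    laplacian (fun x => a * g (B • x)) = fun x => (a * B^2) * laplacian g (B • x) := by
  have h1 : ContDiff ℝ 2 (fun x : E3 => a * g (B • x)) :=
    contDiff_const.mul (hg.comp (contDiff_const_smul B))
  rw [lap_eq h1, lap_eq hg]
  funext x
  simp only
  rw [Finset.mul_sum]
  refine Finset.sum_congr rfl fun i _ => ?_
  rw [pd_scale (hg.differentiable (by simp)),
    pd_scale ((pd_cd (n := 2) (m := 1) hg (by norm_num) i).differentiable (by simp))]
  ring

lemma lap_cd {g : E3 → ℝ} (hg : ContDiff ℝ 4 g) : ContDiff ℝ 2 (laplacian g) := by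
  rw [lap_eq (hg.of_le (by norm_num))]
  refine ContDiff.sum fun i _ => ?_
  exact pd_cd (n := 3) (m := 2) (pd_cd (n := 4) (m := 3) hg (by norm_num) i) (by norm_num) i

theorem main_aux (q κ : ℝ) (hq : 7 < q) (hκ : 0 < κ) :
    ∃ u : E3 → ℝ, ContDiff ℝ 4 u ∧ (∀ x, 0 < u x) ∧
      (∀ x, laplacian (laplacian u) x + (u x) ^ (-q) = 0) ∧
      ∃ c > 0, ∃ C, (∀ x, c*(1+‖x‖) ≤ u x) ∧
        ∀ x, |u x - κ*((x 0)^2+(x 1)^2)| ≤ C*(1+‖x‖) := by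
  obtain ⟨ε, hε, u, huc, ⟨c, hc, hu⟩, ⟨C, hC⟩, he, hfix⟩ := fixedpt q hq
  obtain ⟨hcd, l, hl, hpde⟩ := pde_of_fix hq hε huc hc hu he hfix
  set A : ℝ := (κ^2 * l) ^ (-1/(q-1)) with hA
  have hA0 : 0 < A := by positivity
  set B : ℝ := √(κ / A) with hB
  have hB0 : 0 < B := by positivity
  have hAB : A * B^2 = κ := by
    rw [hB, Real.sq_sqrt (by positivity)]; field_simp
  have hAq : A ^ (-q) * A = κ^2 * l := by
    have : A ^ (-q) * A = A ^ (-(q-1)) := by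
      conv_lhs => rw [← Real.rpow_one A, ← Real.rpow_mul hA0.le, ← Real.rpow_add hA0]
      congr 1; ring
    rw [this, hA, ← Real.rpow_mul (by positivity)]
    have h1 : -1/(q-1) * (-(q-1)) = 1 := by
      have : q - 1 ≠ 0 := by linarith
      field_simp
    rw [h1, Real.rpow_one]
  have hkey : A * B^2 * B^2 * l = A ^ (-q) := by
    have : (A * B^2 * B^2 * l) * A = A^(-q) * A := by rw [hAq, ← hAB]; ring
    exact mul_right_cancel₀ hA0.ne' this
  have hup : ∀ x, 0 < u x := fun x => lt_of_lt_of_le (by positivity) (hu x)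
  have hC0 : 0 ≤ C := by
    have := (abs_nonneg _).trans (hC 0)
    simpa using this
  refine ⟨fun x => A * u (B • x), ?_, fun x => mul_pos hA0 (hup _), ?_, A * c * min 1 B, by positivity, A * C * (1 + B), ?_, ?_⟩
  · exact contDiff_const.mul (hcd.comp (contDiff_const_smul B))
  · intro x
    rw [lap_scale (hcd.of_le (by norm_num)), lap_scale (lap_cd hcd)]
    simp only
    rw [hpde, Real.mul_rpow hA0.le (hup _).le, ← hkey]
    ring
  · intro x
    have h1 := hu (B • x)
    rw [norm_smul, Real.norm_of_nonneg hB0.le] at h1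
    have h2 : min 1 B * (1 + ‖x‖) ≤ 1 + B * ‖x‖ := by
      have := min_le_left 1 B
      have := mul_le_mul_of_nonneg_right (min_le_right 1 B) (norm_nonneg x)
      linarith
    calc A * c * min 1 B * (1 + ‖x‖) = A * (c * (min 1 B * (1 + ‖x‖))) := by ring
      _ ≤ A * (c * (1 + B * ‖x‖)) := by gcongr
      _ ≤ _ := mul_le_mul_of_nonneg_left h1 hA0.le
  · intro x
    have h1 := hC (B • x)
    rw [norm_smul, Real.norm_of_nonneg hB0.le] at h1
    simp only [PiLp.smul_apply, smul_eq_mul] at h1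
    have h3 : A * u (B • x) - κ*((x 0)^2+(x 1)^2) = A * (u (B • x) - ((B * x 0)^2 + (B * x 1)^2)) := by
      rw [← hAB]; ring
    rw [h3, abs_mul, abs_of_pos hA0]
    have h2 : 1 + B * ‖x‖ ≤ (1 + B) * (1 + ‖x‖) := by nlinarith [norm_nonneg x]
    calc _ ≤ A * (C * (1 + B * ‖x‖)) := by gcongr
      _ ≤ A * (C * ((1 + B) * (1 + ‖x‖))) := by gcongr
      _ = _ := by ring

/-- **Theorem.** For `q > 7` and `κ > 0` there exists a positive `C⁴` solution of
`Δ²u + u^{-q} = 0` on ℝ³, not radially symmetric about any point, with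
`liminf_{|x|→∞} u(x)/|x| ∈ (0,∞)` and `limsup_{|x|→∞} u(x)/|x|² = κ`.
(Note that for the real-valued `liminf`, positivity `0 < liminf` also rules out the degenerate
unbounded case, since in ℝ the `liminf` of a function tending to `+∞` equals the junk value `0`.) -/
theorem exists_nonradial_solution_mixed_growth
    (q κ : ℝ) (hq : 7 < q) (hκ : 0 < κ) :
    ∃ u : EuclideanSpace ℝ (Fin 3) → ℝ,
      ContDiff ℝ 4 u ∧ (∀ x, 0 < u x) ∧
      (∀ x, laplacian (laplacian u) x + (u x) ^ (-q) = 0) ∧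
      (¬ ∃ p : EuclideanSpace ℝ (Fin 3), ∀ x y, ‖x - p‖ = ‖y - p‖ → u x = u y) ∧
      0 < liminf (fun x => u x / ‖x‖) (cocompact (EuclideanSpace ℝ (Fin 3))) ∧
      limsup (fun x => u x / ‖x‖ ^ 2) (cocompact (EuclideanSpace ℝ (Fin 3))) = κ := by
  obtain ⟨u, h1, h2, h3, c, hc, C, h4, h5⟩ := main_aux q κ hq hκ
  exact ⟨u, h1, h2, h3, final_asym hκ hc h4 h5⟩
end
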